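/- arXiv:1512.09006 — 2 statements merged into one kernel-verified Lean document; each statement's English description precedes it below -/
import Mathlib

section
/- There exist absolute constants c > 0 and m₀ such that for all integers m ≥ m₀ and n with m^{1/2}/(log m)^{1/2} ≤ n ≤ m^5 (log m)^4, every set P of m points and every set L of n lines in ℝ² determine at least c · m^{2/9} n^{5/9} (log m)^{−2/9} distinct point-line distances, i.e., |{d(p,ℓ) : p ∈ P, ℓ ∈ L}| ≥ c · m^{2/9} n^{5/9} (log m)^{−2/9}. -/
noncomputable section

abbrev Pt2 := EuclideanSpace ℝ (Fin 2)

/-- A line in the plane: the set of points `a + t • v` for a nonzero direction `v`. -/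
def IsLine2 (l : Set Pt2) : Prop :=
  ∃ a v : Pt2, v ≠ 0 ∧ l = {x : Pt2 | ∃ t : ℝ, x = a + t • v}

/-!
Encode a line with normal direction `(1 - t ^ 2, 2 * t)` by a pair `(t, s)`. Then the lines at
signed distance `δ` from a fixed point form the graph of a quadratic in `t`, so that `δ` distances
turn the `m * n` pairs into incidences between `m * δ` quadratics and the `n` points `(t, s)`. Such
incidences are bounded by removing the lenses of the arrangement and applying the crossing lemma.
To bound the number of lenses, order the lens partners of each curve along it: two curves list in
opposite orders those common partners whose lens with the first curve comes before (or after) their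
lens with the second.

On its own this is too weak. Therefore the distances are sorted into few levels, and the points are
grouped so that in each group every point has, for most lines, the same level as a fixed center.
This costs only about `a ^ 2` groups for `a` levels, by Haussler's packing lemma, because the
half-planes in which a signed distance exceeds a threshold have Vapnik–Chervonenkis dimension at
most two. Within a group, each pair of a point and a line only involves the quadratics of one level,
and optimizing over `a` yields the bound.
-/

section

open Finset

section Rank

variable {α β γ : Type*} [LinearOrder γ]

/-- The rank of `x` in `S` with respect to `τ`: the number of `z ∈ S` with `τ z < τ x`.
The point `x` need not lie in `S`. -/
def rankIn (S : Finset α) (τ : α → γ) (x : α) : ℕ := #{z ∈ S | τ z < τ x}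

lemma rankIn_mono (S : Finset α) {τ : α → γ} {x y : α} (h : τ x ≤ τ y) :
    rankIn S τ x ≤ rankIn S τ y :=
  card_le_card <| monotone_filter_right _ fun _ _ hz => hz.trans_le h

lemma rankIn_le_card (S : Finset α) (τ : α → γ) (x : α) : rankIn S τ x ≤ #S :=
  card_filter_le _ _

lemma rankIn_lt_rankIn_iff {S : Finset α} {τ : α → γ} {x y : α} (hx : x ∈ S) :
    rankIn S τ x < rankIn S τ y ↔ τ x < τ y := by
  refine ⟨fun h => lt_of_not_ge fun hyx => (rankIn_mono S hyx).not_gt h, fun h => ?_⟩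
  refine card_lt_card <| (ssubset_iff_of_subset ?_).2 ⟨x, by simp [hx, h], by simp⟩
  exact monotone_filter_right _ fun _ _ hz => hz.trans h

lemma rankIn_injOn {S : Finset α} {τ : α → γ} (hτ : Set.InjOn τ S) :
    Set.InjOn (rankIn S τ) S := by
  intro x hx y hy hxy
  refine hτ hx hy (le_antisymm ?_ ?_)
  · exact not_lt.1 fun h => ((rankIn_lt_rankIn_iff hy).2 h).ne' hxy
  · exact not_lt.1 fun h => ((rankIn_lt_rankIn_iff hx).2 h).ne hxy

lemma card_rankIn_div_eq_le {S : Finset α} {τ : α → γ} (hτ : Set.InjOn τ S) {w : ℕ} (hw : 0 < w)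
    (j : ℕ) : #{x ∈ S | rankIn S τ x / w = j} ≤ w := by
  have hmaps : Set.MapsTo (rankIn S τ) ({x ∈ S | rankIn S τ x / w = j} : Finset α)
      (Ico (j * w) (j * w + w)) := by
    intro x hx
    have hx := (mem_filter.1 hx).2
    rw [Nat.div_eq_iff hw] at hx
    simp only [coe_Ico, Set.mem_Ico]
    omega
  simpa using card_le_card_of_injOn _ hmaps
    ((rankIn_injOn hτ).mono <| coe_subset.2 <| filter_subset _ _)

variable [DecidableEq β]

/-- Cuts every fibre of `f` on `S` into consecutive blocks of length `w` in the order of `τ`: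
the label of `x` is `f x` together with the index of its block. -/
def blockLabel (S : Finset α) (f : α → β) (τ : α → γ) (w : ℕ) (x : α) : β × ℕ :=
  (f x, rankIn {z ∈ S | f z = f x} τ x / w)

lemma card_blockLabel_eq_le {S : Finset α} {f : α → β} {τ : α → γ}
    (hτ : ∀ b, Set.InjOn τ ({z ∈ S | f z = b} : Finset α)) {w : ℕ} (hw : 0 < w) (g : β × ℕ) :
    #{x ∈ S | blockLabel S f τ w x = g} ≤ w := by
  refine (card_le_card fun x hx => ?_).trans (card_rankIn_div_eq_le (hτ g.1) hw g.2)
  obtain ⟨hxS, rfl⟩ := mem_filter.1 hx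
  exact mem_filter.2 ⟨mem_filter.2 ⟨hxS, rfl⟩, rfl⟩

lemma card_image_blockLabel_le (S : Finset α) (f : α → β) (τ : α → γ) (w : ℕ) :
    (#(S.image (blockLabel S f τ w)) : ℝ) ≤ #(S.image f) + (#S : ℝ) / w := by
  have hsub : S.image (blockLabel S f τ w) ⊆ (S.image f).biUnion
      fun b => {b} ×ˢ range (#{z ∈ S | f z = b} / w + 1) := by
    refine image_subset_iff.2 fun x hx => mem_biUnion.2 ⟨f x, mem_image_of_mem f hx, ?_⟩
    simp only [blockLabel, mem_product, mem_singleton, mem_range, true_and]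
    exact Nat.lt_succ_of_le (Nat.div_le_div_right (rankIn_le_card _ _ _))
  calc (#(S.image (blockLabel S f τ w)) : ℝ)
      ≤ ∑ b ∈ S.image f, ((#{z ∈ S | f z = b} / w : ℕ) + 1 : ℝ) := by
        exact_mod_cast (card_le_card hsub).trans
          (card_biUnion_le.trans (sum_le_sum fun b _ => by simp))
    _ ≤ ∑ b ∈ S.image f, ((#{z ∈ S | f z = b} : ℝ) / w + 1) := by
        gcongr
        exact Nat.cast_div_le
    _ = #(S.image f) + (#S : ℝ) / w := by
        rw [sum_add_distrib, ← sum_div, card_eq_sum_card_image f S]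
        push_cast
        simp [add_comm]

end Rank

/-! ### Lists with reversed orders -/

section FiberSums

variable {X C : Type*} [DecidableEq C]

lemma sum_sum_ite_eq_sum_sq_fiber (S : Finset X) (f : X → ℝ) (cell : X → C) :
    ∑ x ∈ S, ∑ y ∈ S, (if cell x = cell y then f x * f y else 0) =
      ∑ c ∈ S.image cell, (∑ x ∈ S with cell x = c, f x) ^ 2 := by
  rw [← sum_fiberwise_of_maps_to (fun x hx => mem_image_of_mem cell hx)]
  refine sum_congr rfl fun c _ => ?_
  rw [sq, sum_mul_sum]
  refine sum_congr rfl fun x hx => ?_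
  simp only [(mem_filter.1 hx).2, sum_filter, eq_comm (a := c)]

lemma card_sq_le_mul_sum_sum_ite {S D : Finset X} {f : X → ℝ} {cell : X → C} {k : ℕ}
    (hf : ∀ x, f x ^ 2 = 1) (hDS : D ⊆ S) (hk : #(D.image cell) ≤ k)
    (hconst : ∀ x ∈ D, ∀ y ∈ S, cell y = cell x → f y = f x) :
    (#D : ℝ) ^ 2 ≤ k * ∑ x ∈ S, ∑ y ∈ S, (if cell x = cell y then f x * f y else 0) := by
  have hfiber : ∀ c ∈ D.image cell,
      (#{x ∈ D | cell x = c} : ℝ) ^ 2 ≤ (∑ x ∈ S with cell x = c, f x) ^ 2 := by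
    intro c hc
    obtain ⟨x₀, hx₀, rfl⟩ := mem_image.1 hc
    have hsum : ∑ x ∈ S with cell x = cell x₀, f x = #{x ∈ S | cell x = cell x₀} * f x₀ := by
      rw [← nsmul_eq_mul, ← sum_const]
      exact sum_congr rfl fun y hy => hconst x₀ hx₀ y (mem_filter.1 hy).1 (mem_filter.1 hy).2
    rw [hsum, mul_pow, hf, mul_one]
    gcongr
  calc (#D : ℝ) ^ 2 = (∑ c ∈ D.image cell, (#{x ∈ D | cell x = c} : ℝ)) ^ 2 := by
        rw [card_eq_sum_card_image cell D, Nat.cast_sum]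
    _ ≤ #(D.image cell) * ∑ c ∈ D.image cell, (#{x ∈ D | cell x = c} : ℝ) ^ 2 :=
        sq_sum_le_card_mul_sum_sq
    _ ≤ k * ∑ c ∈ S.image cell, (∑ x ∈ S with cell x = c, f x) ^ 2 := by
        gcongr
        exact (sum_le_sum hfiber).trans <| sum_le_sum_of_subset_of_nonneg
          (image_subset_image hDS) fun _ _ _ => sq_nonneg _
    _ = _ := by rw [sum_sum_ite_eq_sum_sq_fiber]

end FiberSums

section DyadicCells

variable {X : Type*} {S : Finset X} {p q : X → ℕ} {c : X → Prop} {h K : ℕ} {x y : X}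

/-- The square of side `2 ^ h` in the dyadic grid that contains `(p x, q x)`. -/
def dyadicCell (p q : X → ℕ) (h : ℕ) (x : X) : ℕ × ℕ := (p x / 2 ^ h, q x / 2 ^ h)

/-- The level-`h` dyadic cell of `x` contains points of `S` of both colours. -/
def IsMixedCell (S : Finset X) (p q : X → ℕ) (c : X → Prop) (h : ℕ) (x : X) : Prop :=
  ∃ y ∈ S, ∃ z ∈ S, c y ∧ ¬ c z ∧
    dyadicCell p q h y = dyadicCell p q h x ∧ dyadicCell p q h z = dyadicCell p q h x

open Classical in
/-- The points of `S` whose level-`h` cell is monochromatic, but whose level-`(h + 1)` cell is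
mixed; the latter is not required at the top level `h = K`. -/
def criticalPoints (S : Finset X) (p q : X → ℕ) (c : X → Prop) (K h : ℕ) : Finset X :=
  {x ∈ S | ¬ IsMixedCell S p q c h x ∧ (h < K → IsMixedCell S p q c (h + 1) x)}

lemma criticalPoints_subset : criticalPoints S p q c K h ⊆ S := by
  classical exact filter_subset _ _

lemma not_isMixedCell_zero (hp : Set.InjOn p S) : ¬ IsMixedCell S p q c 0 x := by
  rintro ⟨y, hy, z, hz, hcy, hcz, hyx, hzx⟩
  simp only [dyadicCell, pow_zero, Nat.div_one, Prod.mk.injEq] at hyx hzx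
  exact hcz (hp hy hz (hyx.1.trans hzx.1.symm) ▸ hcy)

lemma exists_mem_criticalPoints (hp : Set.InjOn p S) (hx : x ∈ S) (K : ℕ) :
    ∃ h ∈ range (K + 1), x ∈ criticalPoints S p q c K h := by
  classical
  set h := Nat.findGreatest (fun h => ¬ IsMixedCell S p q c h x) K with hh
  have hunmixed : ¬ IsMixedCell S p q c h x :=
    Nat.findGreatest_spec (P := fun h => ¬ IsMixedCell S p q c h x) (Nat.zero_le K)
      (not_isMixedCell_zero hp)
  refine ⟨h, mem_range.2 (Nat.lt_succ_of_le (Nat.findGreatest_le K)),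
    mem_filter.2 ⟨hx, hunmixed, fun hlt => ?_⟩⟩
  exact not_not.1 (Nat.findGreatest_is_greatest (hh ▸ Nat.lt_succ_self h) hlt)

lemma card_le_sum_card_criticalPoints (hp : Set.InjOn p S) (K : ℕ) :
    #S ≤ ∑ h ∈ range (K + 1), #(criticalPoints S p q c K h) := by
  classical
  refine (card_le_card fun x hx => ?_).trans card_biUnion_le
  exact mem_biUnion.2 (exists_mem_criticalPoints hp hx K)

lemma dyadicCell_eq_of_isMixedCell
    (hsep : ∀ x ∈ S, ∀ y ∈ S, c x → ¬ c y → p x < p y ∧ q x < q y)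
    (hx : IsMixedCell S p q c h x) (hy : IsMixedCell S p q c h y) :
    dyadicCell p q h x = dyadicCell p q h y := by
  have hle : ∀ u ∈ S, ∀ v ∈ S, c u → ¬ c v →
      p u / 2 ^ h ≤ p v / 2 ^ h ∧ q u / 2 ^ h ≤ q v / 2 ^ h :=
    fun u hu v hv hcu hcv => ⟨Nat.div_le_div_right (hsep u hu v hv hcu hcv).1.le,
      Nat.div_le_div_right (hsep u hu v hv hcu hcv).2.le⟩
  obtain ⟨u, hu, v, hv, hcu, hcv, hux, hvx⟩ := hx
  obtain ⟨u', hu', v', hv', hcu', hcv', huy, hvy⟩ := hy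
  have huv' := hle u hu v' hv' hcu hcv'
  have hu'v := hle u' hu' v hv hcu' hcv
  simp only [dyadicCell, Prod.mk.injEq] at hux hvx huy hvy ⊢
  omega

lemma dyadicCell_succ_eq_of_mem_criticalPoints
    (hsep : ∀ x ∈ S, ∀ y ∈ S, c x → ¬ c y → p x < p y ∧ q x < q y)
    (hp : ∀ x ∈ S, p x < 2 ^ K) (hq : ∀ x ∈ S, q x < 2 ^ K) (hK : h ≤ K)
    (hx : x ∈ criticalPoints S p q c K h) (hy : y ∈ criticalPoints S p q c K h) :
    dyadicCell p q (h + 1) x = dyadicCell p q (h + 1) y := by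
  classical
  obtain ⟨hxS, -, hxm⟩ := mem_filter.1 hx
  obtain ⟨hyS, -, hym⟩ := mem_filter.1 hy
  rcases hK.lt_or_eq with hlt | rfl
  · exact dyadicCell_eq_of_isMixedCell hsep (hxm hlt) (hym hlt)
  · have hzero : ∀ z ∈ S, dyadicCell p q (h + 1) z = (0, 0) := fun z hz => by
      have hpow : 2 ^ h ≤ 2 ^ (h + 1) := Nat.pow_le_pow_right two_pos h.le_succ
      simp only [dyadicCell, Nat.div_eq_of_lt ((hp z hz).trans_le hpow),
        Nat.div_eq_of_lt ((hq z hz).trans_le hpow)]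
    rw [hzero x hxS, hzero y hyS]

lemma card_image_dyadicCell_criticalPoints_le
    (hsep : ∀ x ∈ S, ∀ y ∈ S, c x → ¬ c y → p x < p y ∧ q x < q y)
    (hp : ∀ x ∈ S, p x < 2 ^ K) (hq : ∀ x ∈ S, q x < 2 ^ K) (hK : h ≤ K) :
    #((criticalPoints S p q c K h).image (dyadicCell p q h)) ≤ 4 := by
  rcases (criticalPoints S p q c K h).eq_empty_or_nonempty with hempty | ⟨x₀, hx₀⟩
  · simp [hempty]
  obtain ⟨a, b, hcell⟩ : ∃ a b, dyadicCell p q (h + 1) x₀ = (a, b) := ⟨_, _, rfl⟩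
  have hsub : (criticalPoints S p q c K h).image (dyadicCell p q h) ⊆
      Ico (2 * a) (2 * a + 2) ×ˢ Ico (2 * b) (2 * b + 2) := by
    refine image_subset_iff.2 fun x hx => ?_
    have hxcell := (dyadicCell_succ_eq_of_mem_criticalPoints hsep hp hq hK hx hx₀).trans hcell
    simp only [dyadicCell, pow_succ, ← Nat.div_div_eq_div_mul, Prod.mk.injEq] at hxcell
    simp only [dyadicCell, mem_product, mem_Ico]
    omega
  simpa using card_le_card hsub

open Classical in
/-- The sign `1` or `-1` of a colour. -/
def colorSign (c : X → Prop) (x : X) : ℝ := if c x then 1 else -1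

/-- The correlation of the colours of pairs of points of `S` lying in a common cell. -/
def cellEnergy (S : Finset X) (p q : X → ℕ) (c : X → Prop) (h : ℕ) : ℝ :=
  ∑ x ∈ S, ∑ y ∈ S,
    if dyadicCell p q h x = dyadicCell p q h y then colorSign c x * colorSign c y else 0

lemma card_criticalPoints_sq_le
    (hsep : ∀ x ∈ S, ∀ y ∈ S, c x → ¬ c y → p x < p y ∧ q x < q y)
    (hp : ∀ x ∈ S, p x < 2 ^ K) (hq : ∀ x ∈ S, q x < 2 ^ K) (hK : h ≤ K) :
    (#(criticalPoints S p q c K h) : ℝ) ^ 2 ≤ 4 * cellEnergy S p q c h := by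
  classical
  refine card_sq_le_mul_sum_sum_ite (k := 4) (fun x => ?_) criticalPoints_subset
    (card_image_dyadicCell_criticalPoints_le hsep hp hq hK) fun x hx y hy hyx => ?_
  · by_cases hc : c x <;> simp [colorSign, hc]
  · obtain ⟨hxS, hunmixed, -⟩ := mem_filter.1 hx
    by_contra hne
    by_cases hcx : c x <;> by_cases hcy : c y
    · simp [colorSign, hcx, hcy] at hne
    · exact hunmixed ⟨x, hxS, y, hy, hcx, hcy, rfl, hyx⟩
    · exact hunmixed ⟨y, hy, x, hxS, hcy, hcx, hyx, rfl⟩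
    · simp [colorSign, hcx, hcy] at hne

end DyadicCells

section ReversingLists

variable {ι X : Type*} [DecidableEq X]

/-- A family of lists: the list with index `i` consists of the points of `E i`, the point `x`
standing at place `pos i x`. The points common to two lists are two-coloured by `σ i j`; points of
equal colour appear in opposite orders in the two lists, and in both of them the points coloured
`True` precede those coloured `False`. -/
structure ReversingLists (I : Finset ι) (E : ι → Finset X) (pos : ι → X → ℕ)
    (σ : ι → ι → X → Prop) : Prop where
  injOn : ∀ i ∈ I, Set.InjOn (pos i) (E i)
  reverse : ∀ i ∈ I, ∀ j ∈ I, i ≠ j → ∀ x ∈ E i ∩ E j, ∀ y ∈ E i ∩ E j, x ≠ y →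
    (σ i j x ↔ σ i j y) → (pos i x < pos i y ↔ pos j y < pos j x)
  agree : ∀ i ∈ I, ∀ j ∈ I, i ≠ j → ∀ x ∈ E i ∩ E j, ∀ y ∈ E i ∩ E j,
    σ i j x → ¬ σ i j y → pos i x < pos i y ∧ pos j x < pos j y

/-- The order in which `x` and `y` appear in the list `i`, encoded as `1` or `-1`; it is `0`
unless `x` and `y` are distinct points in a common block of length `2 ^ h` of that list. -/
def orderSign (E : ι → Finset X) (pos : ι → X → ℕ) (h : ℕ) (i : ι) (x y : X) : ℝ :=
  if x ∈ E i ∧ y ∈ E i ∧ x ≠ y ∧ pos i x / 2 ^ h = pos i y / 2 ^ h then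
    (if pos i x < pos i y then 1 else -1) else 0

variable {I : Finset ι} {E : ι → Finset X} {pos : ι → X → ℕ} {σ : ι → ι → X → Prop} {h K : ℕ}

lemma sum_sum_orderSign_sq_le {Y : Finset X} {i : ι} (hY : E i ⊆ Y) :
    ∑ x ∈ Y, ∑ y ∈ Y, orderSign E pos h i x y ^ 2 ≤ (#(E i) : ℝ) ^ 2 := by
  have hle : ∀ x y, orderSign E pos h i x y ^ 2 ≤
      (if x ∈ E i then 1 else 0) * (if y ∈ E i then 1 else 0) := by
    intro x y
    by_cases hx : x ∈ E i <;> by_cases hy : y ∈ E i <;> simp [orderSign, hx, hy]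
    split_ifs <;> norm_num
  calc ∑ x ∈ Y, ∑ y ∈ Y, orderSign E pos h i x y ^ 2
      ≤ ∑ x ∈ Y, ∑ y ∈ Y, ((if x ∈ E i then 1 else 0) * (if y ∈ E i then 1 else 0) : ℝ) :=
        sum_le_sum fun x _ => sum_le_sum fun y _ => hle x y
    _ = (#(E i) : ℝ) ^ 2 := by
        rw [← sum_mul_sum, sum_boole, filter_mem_eq_inter, inter_eq_right.2 hY, sq]

namespace ReversingLists

lemma orderSign_mul_orderSign (hL : ReversingLists I E pos σ) {i j : ι} (hi : i ∈ I) (hj : j ∈ I)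
    (hij : i ≠ j) {x y : X} (hx : x ∈ E i ∩ E j) (hy : y ∈ E i ∩ E j) :
    orderSign E pos h i x y * orderSign E pos h j x y = (if x = y then 1 else 0) -
      if dyadicCell (pos i) (pos j) h x = dyadicCell (pos i) (pos j) h y then
        colorSign (σ i j) x * colorSign (σ i j) y else 0 := by
  obtain ⟨hxi, hxj⟩ := mem_inter.1 hx
  obtain ⟨hyi, hyj⟩ := mem_inter.1 hy
  rcases eq_or_ne x y with rfl | hxy
  · by_cases hx : σ i j x <;> simp [orderSign, colorSign, hx]
  have hreverse := hL.reverse i hi j hj hij x hx y hy hxy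
  have hagree := hL.agree i hi j hj hij x hx y hy
  have hagree' := hL.agree i hi j hj hij y hy x hx
  have hne : pos j x ≠ pos j y := (hL.injOn j hj).ne hxj hyj hxy
  simp only [orderSign, colorSign, dyadicCell, hxi, hxj, hyi, hyj, hxy, ne_eq, not_false_eq_true,
    true_and, Prod.mk.injEq, if_false]
  grind

lemma sum_sum_orderSign_mul (hL : ReversingLists I E pos σ) {i j : ι} (hi : i ∈ I) (hj : j ∈ I)
    (hij : i ≠ j) {Y : Finset X} (hY : E i ⊆ Y) :
    ∑ x ∈ Y, ∑ y ∈ Y, orderSign E pos h i x y * orderSign E pos h j x y =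
      #(E i ∩ E j) - cellEnergy (E i ∩ E j) (pos i) (pos j) (σ i j) h := by
  have hsub : E i ∩ E j ⊆ Y := inter_subset_left.trans hY
  have hx_zero : ∀ x ∉ E i ∩ E j, ∀ y, orderSign E pos h i x y * orderSign E pos h j x y = 0 := by
    intro x hx y
    rcases not_and_or.1 (mem_inter.not.1 hx) with hx | hx <;> simp [orderSign, hx]
  have hy_zero : ∀ x, ∀ y ∉ E i ∩ E j, orderSign E pos h i x y * orderSign E pos h j x y = 0 := by
    intro x y hy
    rcases not_and_or.1 (mem_inter.not.1 hy) with hy | hy <;> simp [orderSign, hy]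
  rw [← sum_subset hsub fun x _ hx => sum_eq_zero fun y _ => hx_zero x hx y]
  simp_rw [← sum_subset hsub fun y _ hy => hy_zero _ y hy]
  rw [sum_congr rfl fun x hx => sum_congr rfl fun y hy =>
    hL.orderSign_mul_orderSign hi hj hij hx hy]
  simp_rw [sum_sub_distrib, sum_ite_eq]
  rw [sum_ite_mem, inter_self, sum_const, nsmul_one, cellEnergy]

/-- Expand `0 ≤ ∑ x, ∑ y, (∑ i, orderSign i x y) ^ 2`. -/
lemma sum_cellEnergy_le (hL : ReversingLists I E pos σ) (h : ℕ) :
    ∑ r ∈ I.offDiag, cellEnergy (E r.1 ∩ E r.2) (pos r.1) (pos r.2) (σ r.1 r.2) h ≤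
      ∑ i ∈ I, (#(E i) : ℝ) ^ 2 + ∑ r ∈ I.offDiag, (#(E r.1 ∩ E r.2) : ℝ) := by
  classical
  set Y := I.biUnion E
  have hEY : ∀ i ∈ I, E i ⊆ Y := fun i hi => subset_biUnion_of_mem E hi
  have hexpand : ∑ x ∈ Y, ∑ y ∈ Y, (∑ i ∈ I, orderSign E pos h i x y) ^ 2 =
      ∑ r ∈ I ×ˢ I, ∑ x ∈ Y, ∑ y ∈ Y, orderSign E pos h r.1 x y * orderSign E pos h r.2 x y := by
    simp_rw [sq, sum_mul_sum, ← sum_product' I I]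
    exact (sum_congr rfl fun _ _ => sum_comm).trans sum_comm
  have hsplit : ∑ r ∈ I ×ˢ I, ∑ x ∈ Y, ∑ y ∈ Y,
        orderSign E pos h r.1 x y * orderSign E pos h r.2 x y =
      ∑ i ∈ I, ∑ x ∈ Y, ∑ y ∈ Y, orderSign E pos h i x y ^ 2 +
        ∑ r ∈ I.offDiag, ((#(E r.1 ∩ E r.2) : ℝ) -
          cellEnergy (E r.1 ∩ E r.2) (pos r.1) (pos r.2) (σ r.1 r.2) h) := by
    rw [← diag_union_offDiag, sum_union (disjoint_diag_offDiag I), sum_diag]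
    simp_rw [← sq]
    congr 1
    refine sum_congr rfl fun r hr => ?_
    obtain ⟨hr₁, hr₂, hne⟩ := mem_offDiag.1 hr
    exact hL.sum_sum_orderSign_mul hr₁ hr₂ hne (hEY _ hr₁)
  have hnonneg : 0 ≤ ∑ x ∈ Y, ∑ y ∈ Y, (∑ i ∈ I, orderSign E pos h i x y) ^ 2 := by positivity
  have hdiag := sum_le_sum fun i hi => sum_sum_orderSign_sq_le (pos := pos) (h := h) (hEY i hi)
  rw [hexpand, hsplit, sum_sub_distrib] at hnonneg
  linarith

lemma sum_card_criticalPoints_sq_le (hL : ReversingLists I E pos σ)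
    (hpos : ∀ i ∈ I, ∀ x ∈ E i, pos i x < 2 ^ K) (hK : h ≤ K) :
    ∑ r ∈ I.offDiag,
        (#(criticalPoints (E r.1 ∩ E r.2) (pos r.1) (pos r.2) (σ r.1 r.2) K h) : ℝ) ^ 2 ≤
      4 * (∑ i ∈ I, (#(E i) : ℝ) ^ 2 + ∑ r ∈ I.offDiag, (#(E r.1 ∩ E r.2) : ℝ)) := by
  refine le_trans ?_ (mul_le_mul_of_nonneg_left (hL.sum_cellEnergy_le h) (by norm_num))
  rw [mul_sum]
  refine sum_le_sum fun r hr => ?_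
  obtain ⟨hr₁, hr₂, hne⟩ := mem_offDiag.1 hr
  exact card_criticalPoints_sq_le (hL.agree _ hr₁ _ hr₂ hne)
    (fun x hx => hpos _ hr₁ x (mem_inter.1 hx).1) (fun x hx => hpos _ hr₂ x (mem_inter.1 hx).2) hK

theorem sq_sum_card_inter_le (hL : ReversingLists I E pos σ)
    (hpos : ∀ i ∈ I, ∀ x ∈ E i, pos i x < 2 ^ K) :
    (∑ r ∈ I.offDiag, (#(E r.1 ∩ E r.2) : ℝ)) ^ 2 ≤ 4 * (K + 1) ^ 2 * (#I : ℝ) ^ 2 *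
      (∑ i ∈ I, (#(E i) : ℝ) ^ 2 + ∑ r ∈ I.offDiag, (#(E r.1 ∩ E r.2) : ℝ)) := by
  set T := ∑ r ∈ I.offDiag, (#(E r.1 ∩ E r.2) : ℝ)
  set N := ∑ i ∈ I, (#(E i) : ℝ) ^ 2
  let crit (h : ℕ) (r : ι × ι) : ℝ :=
    #(criticalPoints (E r.1 ∩ E r.2) (pos r.1) (pos r.2) (σ r.1 r.2) K h)
  have hT : 0 ≤ T := by positivity
  have hpairs : (#I.offDiag : ℝ) ≤ (#I : ℝ) ^ 2 := by
    rw [offDiag_card]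
    exact_mod_cast (Nat.sub_le _ _).trans_eq (sq _).symm
  have hlevel : ∀ h ∈ range (K + 1),
      (∑ r ∈ I.offDiag, crit h r) ^ 2 ≤ (#I : ℝ) ^ 2 * (4 * (N + T)) := fun h hh =>
    sq_sum_le_card_mul_sum_sq.trans <| mul_le_mul hpairs
      (hL.sum_card_criticalPoints_sq_le hpos (Nat.lt_succ_iff.1 (mem_range.1 hh)))
      (by positivity) (by positivity)
  have hcover : T ≤ ∑ h ∈ range (K + 1), ∑ r ∈ I.offDiag, crit h r := by
    rw [sum_comm]
    refine sum_le_sum fun r hr => ?_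
    have hinj : Set.InjOn (pos r.1) (E r.1 ∩ E r.2 : Finset X) :=
      (hL.injOn _ (mem_offDiag.1 hr).1).mono <| coe_subset.2 inter_subset_left
    simp only [crit]
    exact_mod_cast card_le_sum_card_criticalPoints hinj K
  calc T ^ 2 ≤ (∑ h ∈ range (K + 1), ∑ r ∈ I.offDiag, crit h r) ^ 2 :=
        pow_le_pow_left₀ hT hcover 2
    _ ≤ #(range (K + 1)) * ∑ h ∈ range (K + 1), (∑ r ∈ I.offDiag, crit h r) ^ 2 :=
        sq_sum_le_card_mul_sum_sq
    _ ≤ #(range (K + 1)) * ∑ h ∈ range (K + 1), (#I : ℝ) ^ 2 * (4 * (N + T)) := by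
        gcongr with h hh
        exact hlevel h hh
    _ = _ := by
        rw [sum_const, card_range, nsmul_eq_mul]
        push_cast
        ring

end ReversingLists

end ReversingLists

/-- A quadratic polynomial `c.1 * t ^ 2 + c.2.1 * t + c.2.2`, given by its coefficients; its
graph is a (possibly degenerate) vertical parabola. -/
abbrev Quad := ℝ × ℝ × ℝ

namespace Quad

/-- The value of the quadratic polynomial `c` at `t`. -/
def eval (c : Quad) (t : ℝ) : ℝ := c.1 * t ^ 2 + c.2.1 * t + c.2.2

lemma eval_sub (c d : Quad) (t : ℝ) : (c - d).eval t = c.eval t - d.eval t := by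
  simp only [eval, Prod.fst_sub, Prod.snd_sub]
  ring

lemma eval_neg (c : Quad) (t : ℝ) : (-c).eval t = -c.eval t := by
  simp only [eval, Prod.fst_neg, Prod.snd_neg]
  ring

variable {g h : Quad} {a b c d a' b' : ℝ}

lemma not_alternating (hab : a < b) (hbc : b < c) (hcd : c < d)
    (ha : 0 < g.eval a) (hb : g.eval b < 0) (hc : 0 < g.eval c) (hd : g.eval d < 0) : False := by
  have third_difference : g.eval a * ((c - b) * (d - b) * (d - c)) +
      -g.eval b * ((c - a) * (d - a) * (d - c)) + g.eval c * ((b - a) * (d - a) * (d - b)) +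
      -g.eval d * ((b - a) * (c - a) * (c - b)) = 0 := by
    simp only [eval]
    ring
  have hac := hab.trans hbc
  have hbd := hbc.trans hcd
  have had := hab.trans hbd
  have hb' := neg_pos.2 hb
  have hd' := neg_pos.2 hd
  refine third_difference.not_gt ?_
  positivity

lemma leading_neg (hab : a < b) (hbc : b < c)
    (ha : g.eval a < 0) (hb : 0 < g.eval b) (hc : g.eval c < 0) : g.1 < 0 := by
  have second_difference : -g.eval a * (c - b) + g.eval b * (c - a) + -g.eval c * (b - a) =
      -g.1 * ((b - a) * (c - a) * (c - b)) := by
    simp only [eval]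
    ring
  have hac := hab.trans hbc
  have ha' := neg_pos.2 ha
  have hc' := neg_pos.2 hc
  refine neg_pos.1 (pos_of_mul_pos_left (b := (b - a) * (c - a) * (c - b)) ?_ (by positivity))
  rw [← second_difference]
  positivity

/-- Sign pattern of two quadratics `g` and `h` at four points: the sign of `g` separates `a, a'`
from `b, b'`, while the sign of `h` separates `a, b` from `a', b'`. -/
structure CrossedSigns (g h : Quad) (a a' b b' : ℝ) : Prop where
  g_a : g.eval a < 0
  g_a' : g.eval a' < 0
  g_b : 0 < g.eval b
  g_b' : 0 < g.eval b'
  h_a : 0 < h.eval a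
  h_a' : h.eval a' < 0
  h_b : 0 < h.eval b
  h_b' : h.eval b' < 0

namespace CrossedSigns

lemma swap_right (H : CrossedSigns g h a a' b b') : CrossedSigns g (-h) a' a b' b := by
  obtain ⟨_, _, _, _, _, _, _, _⟩ := H
  constructor <;> simpa only [eval_neg, neg_pos, neg_lt_zero]

lemma swap_left (H : CrossedSigns g h a a' b b') : CrossedSigns (-g) h b b' a a' := by
  obtain ⟨_, _, _, _, _, _, _, _⟩ := H
  constructor <;> simpa only [eval_neg, neg_pos, neg_lt_zero]

lemma a_ne_a' (H : CrossedSigns g h a a' b b') : a ≠ a' := by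
  rintro rfl
  exact H.h_a.not_gt H.h_a'

lemma b_ne_b' (H : CrossedSigns g h a a' b b') : b ≠ b' := H.swap_left.a_ne_a'

lemma a_ne_b (H : CrossedSigns g h a a' b b') : a ≠ b := by
  rintro rfl
  exact H.g_a.not_gt H.g_b

lemma a'_ne_b' (H : CrossedSigns g h a a' b b') : a' ≠ b' := H.swap_right.a_ne_b

lemma a_ne_b' (H : CrossedSigns g h a a' b b') : a ≠ b' := by
  rintro rfl
  exact H.g_a.not_gt H.g_b'

lemma a'_ne_b (H : CrossedSigns g h a a' b b') : a' ≠ b := H.swap_right.a_ne_b'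

/-- If `a < b'` then `g` alternates along `b < a < b' < a'`, otherwise `h` alternates along
`b < b' < a < a'`. -/
lemma not_nested (H : CrossedSigns g h a a' b b') (hba : b < a) (hbb' : b < b') (haa' : a < a')
    (hba' : b' < a') : False := by
  rcases lt_or_gt_of_ne H.a_ne_b' with hab' | hab'
  · exact not_alternating hba hab' hba' H.g_b H.g_a H.g_b' H.g_a'
  · exact not_alternating hbb' hab' haa' H.h_b H.h_b' H.h_a H.h_a'

lemma lt_iff_lt_of_iff (H : CrossedSigns g h a a' b b') (hiff : b < a ↔ b' < a') :
    a < a' ↔ b' < b := by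
  rcases lt_or_gt_of_ne H.a_ne_b with hab | hba
  · have hab' := lt_of_le_of_ne (not_lt.1 (hiff.not.1 hab.not_gt)) H.a'_ne_b'
    refine ⟨fun haa' => lt_of_not_ge fun hbb' => ?_, fun hbb' => lt_of_not_ge fun haa' => ?_⟩
    · exact H.swap_left.not_nested hab haa' (lt_of_le_of_ne hbb' H.b_ne_b') hab'
    · exact H.swap_left.swap_right.not_nested hab' (lt_of_le_of_ne haa' H.a_ne_a'.symm) hbb' hab
  · have hba' := hiff.1 hba
    refine ⟨fun haa' => lt_of_not_ge fun hbb' => ?_, fun hbb' => lt_of_not_ge fun haa' => ?_⟩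
    · exact H.not_nested hba (lt_of_le_of_ne hbb' H.b_ne_b') haa' hba'
    · exact H.swap_right.not_nested hba' hbb' (lt_of_le_of_ne haa' H.a_ne_a'.symm) hba

lemma lt_and_lt_of_leading_nonneg (H : CrossedSigns g h a a' b b') (hba : b < a) (hab' : a' < b')
    (hg : 0 ≤ g.1) : a < a' ∧ b < b' := by
  have hba' : b < a' := lt_of_not_ge fun hle => hg.not_gt <|
    leading_neg (lt_of_le_of_ne hle H.a'_ne_b) hba H.g_a' H.g_b H.g_a
  have hab : a < b' := lt_of_not_ge fun hle => hg.not_gt <|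
    leading_neg hab' (lt_of_le_of_ne hle H.a_ne_b'.symm) H.g_a' H.g_b' H.g_a
  refine ⟨lt_of_not_ge fun hle => ?_, hba.trans hab⟩
  exact not_alternating hba' (lt_of_le_of_ne hle H.a_ne_a'.symm) hab H.h_b H.h_a' H.h_a H.h_b'

lemma lt_and_lt_of_leading_nonpos (H : CrossedSigns g h a a' b b') (hba : b < a) (hab' : a' < b')
    (hg : g.1 ≤ 0) : a' < a ∧ b' < b :=
  (H.swap_left.swap_right.lt_and_lt_of_leading_nonneg hab' hba (neg_nonneg.2 hg)).symm

end CrossedSigns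

end Quad

section ListFamilies

variable {ι X : Type*} [DecidableEq X]

lemma sum_card_sq_le_card_mul {I : Finset ι} {E : ι → Finset X} {G : Finset X}
    (hE : ∀ i ∈ I, E i ⊆ G) :
    (∑ i ∈ I, (#(E i) : ℝ)) ^ 2 ≤
      #G * (∑ i ∈ I, (#(E i) : ℝ) + ∑ r ∈ I.offDiag, (#(E r.1 ∩ E r.2) : ℝ)) := by
  classical
  have hcard : ∀ A ⊆ G, ∑ y ∈ G, (if y ∈ A then (1 : ℝ) else 0) = #A := fun A hA => by
    rw [sum_boole, filter_mem_eq_inter, inter_eq_right.2 hA]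
  have hfirst : ∑ i ∈ I, (#(E i) : ℝ) = ∑ y ∈ G, ∑ i ∈ I, (if y ∈ E i then (1 : ℝ) else 0) := by
    rw [sum_comm]
    exact sum_congr rfl fun i hi => (hcard _ (hE i hi)).symm
  have hsecond : ∑ y ∈ G, (∑ i ∈ I, (if y ∈ E i then (1 : ℝ) else 0)) ^ 2 =
      ∑ r ∈ I ×ˢ I, (#(E r.1 ∩ E r.2) : ℝ) := by
    simp_rw [sq, sum_mul_sum, ← sum_product' I I, ite_zero_mul_ite_zero, one_mul, ← mem_inter]
    rw [sum_comm]
    exact sum_congr rfl fun r hr =>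
      hcard _ (inter_subset_left.trans (hE _ (mem_product.1 hr).1))
  have hsplit : ∑ r ∈ I ×ˢ I, (#(E r.1 ∩ E r.2) : ℝ) =
      ∑ i ∈ I, (#(E i) : ℝ) + ∑ r ∈ I.offDiag, (#(E r.1 ∩ E r.2) : ℝ) := by
    rw [← diag_union_offDiag, sum_union (disjoint_diag_offDiag I), sum_diag]
    simp_rw [inter_self]
  rw [← hsplit, ← hsecond, hfirst]
  exact sq_sum_le_card_mul_sum_sq

end ListFamilies

lemma mod_lt_mod_iff_of_div_eq {a b w : ℕ} (h : a / w = b / w) :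
    a % w < b % w ↔ a < b := by
  have ha := Nat.div_add_mod a w
  have hb := Nat.div_add_mod b w
  rw [h] at ha
  omega

lemma exists_le_mul_two_pow {M e : ℕ} (hM : 0 < M) (hMe : M ≤ e) (heM : e ≤ M * M) :
    ∃ K : ℕ, e ≤ M * 2 ^ K ∧ M * 2 ^ K ≤ 2 * e ∧ K ≤ Nat.log 2 M + 1 := by
  have hdiv : e / M ≠ 0 := (Nat.div_pos hMe hM).ne'
  refine ⟨Nat.log 2 (e / M) + 1, ?_, ?_, ?_⟩
  · have hlt := Nat.lt_pow_succ_log_self one_lt_two (e / M)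
    rw [Nat.div_lt_iff_lt_mul hM] at hlt
    exact hlt.le.trans_eq (mul_comm _ _)
  · have hle := (Nat.le_div_iff_mul_le hM).1 (Nat.pow_log_le_self 2 hdiv)
    rw [pow_succ]
    linarith
  · gcongr
    exact Nat.div_le_of_le_mul heM

/-- A family of pairs `(u, x)` of quadratics from `G`, each forming a lens that is recorded by a
single parameter `τ (u, x)`: there `u` lies below `x`, every other partner of `u` lies below `u`,
and every other partner of `x` lies above `x`. -/
structure LensFamily (G : Finset Quad) (Λ : Finset (Quad × Quad)) (τ : Quad × Quad → ℝ) :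
    Prop where
  subset : Λ ⊆ G ×ˢ G
  lt : ∀ u x, (u, x) ∈ Λ → u.eval (τ (u, x)) < x.eval (τ (u, x))
  below : ∀ u x y, (u, x) ∈ Λ → (u, y) ∈ Λ → y ≠ x → y.eval (τ (u, x)) < u.eval (τ (u, x))
  above : ∀ u v x, (u, x) ∈ Λ → (v, x) ∈ Λ → v ≠ u → x.eval (τ (u, x)) < v.eval (τ (u, x))

open Classical in
/-- The partners of a quadratic in one block of its list: the second components of the pairs in
`Λ` with block label `i`. -/
def lensList (Λ : Finset (Quad × Quad)) (τ : Quad × Quad → ℝ) (w : ℕ) (i : Quad × ℕ) :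
    Finset Quad :=
  {e ∈ Λ | blockLabel Λ Prod.fst τ w e = i}.image Prod.snd

open Classical in
/-- The position of `x` inside its block in the list of partners of `i.1`. -/
def lensPos (Λ : Finset (Quad × Quad)) (τ : Quad × Quad → ℝ) (w : ℕ) (i : Quad × ℕ) (x : Quad) :
    ℕ :=
  rankIn {e ∈ Λ | e.1 = i.1} τ (i.1, x) % w

section LensLists

variable {Λ : Finset (Quad × Quad)} {τ : Quad × Quad → ℝ} {w : ℕ} {i : Quad × ℕ} {x y : Quad}

open Classical in
lemma mem_lensList :
    x ∈ lensList Λ τ w i ↔ (i.1, x) ∈ Λ ∧ blockLabel Λ Prod.fst τ w (i.1, x) = i := by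
  refine mem_image.trans ⟨?_, fun hx => ⟨(i.1, x), mem_filter.2 hx, rfl⟩⟩
  rintro ⟨e, he, rfl⟩
  obtain ⟨hmem, rfl⟩ := mem_filter.1 he
  exact ⟨hmem, rfl⟩

open Classical in
lemma card_lensList (i : Quad × ℕ) :
    #(lensList Λ τ w i) = #{e ∈ Λ | blockLabel Λ Prod.fst τ w e = i} := by
  refine card_image_of_injOn fun e he e' he' heq => Prod.ext ?_ heq
  exact congrArg (fun i => i.1) ((mem_filter.1 he).2.trans (mem_filter.1 he').2.symm)

lemma lensPos_lt_lensPos_iff (hx : x ∈ lensList Λ τ w i) (hy : y ∈ lensList Λ τ w i) :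
    lensPos Λ τ w i x < lensPos Λ τ w i y ↔ τ (i.1, x) < τ (i.1, y) := by
  classical
  obtain ⟨hxΛ, hxi⟩ := mem_lensList.1 hx
  obtain ⟨-, hyi⟩ := mem_lensList.1 hy
  rw [lensPos, lensPos, mod_lt_mod_iff_of_div_eq (congrArg Prod.snd (hxi.trans hyi.symm)),
    rankIn_lt_rankIn_iff (S := {e ∈ Λ | e.1 = i.1}) (mem_filter.2 ⟨hxΛ, rfl⟩)]

end LensLists

namespace LensFamily

variable {G : Finset Quad} {Λ : Finset (Quad × Quad)} {τ : Quad × Quad → ℝ} {w : ℕ}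

lemma injOn (hΛ : LensFamily G Λ τ) {u : Quad} :
    Set.InjOn (fun x => τ (u, x)) {x | (u, x) ∈ Λ} := by
  intro x hx y hy hxy
  by_contra hne
  have hbelow := hΛ.below u x y hx hy (Ne.symm hne)
  simp only at hxy
  rw [hxy] at hbelow
  exact hbelow.not_gt (hΛ.lt u y hy)

lemma injOn_fst_eq (hΛ : LensFamily G Λ τ) [DecidableEq Quad] (u : Quad) :
    Set.InjOn τ ({e ∈ Λ | e.1 = u} : Finset (Quad × Quad)) := by
  rintro ⟨v, x⟩ he ⟨v', y⟩ he' heq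
  obtain ⟨hmem, rfl⟩ := mem_filter.1 he
  obtain ⟨hmem', rfl⟩ := mem_filter.1 he'
  exact congrArg (Prod.mk _) (hΛ.injOn hmem hmem' heq)

lemma crossedSigns (hΛ : LensFamily G Λ τ) {u v x y : Quad} (huv : u ≠ v) (hxy : x ≠ y)
    (hux : (u, x) ∈ Λ) (huy : (u, y) ∈ Λ) (hvx : (v, x) ∈ Λ) (hvy : (v, y) ∈ Λ) :
    Quad.CrossedSigns (u - v) (x - y) (τ (u, x)) (τ (u, y)) (τ (v, x)) (τ (v, y)) := by
  have hux_lt := hΛ.lt u x hux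
  have huy_lt := hΛ.lt u y huy
  have hvx_lt := hΛ.lt v x hvx
  have hvy_lt := hΛ.lt v y hvy
  constructor <;> rw [Quad.eval_sub]
  · linarith [hΛ.above u v x hux hvx huv.symm]
  · linarith [hΛ.above u v y huy hvy huv.symm]
  · linarith [hΛ.above v u x hvx hux huv]
  · linarith [hΛ.above v u y hvy huy huv]
  · linarith [hΛ.below u x y hux huy hxy.symm]
  · linarith [hΛ.below u y x huy hux hxy]
  · linarith [hΛ.below v x y hvx hvy hxy.symm]
  · linarith [hΛ.below v y x hvy hvx hxy]

lemma reversingLists (hΛ : LensFamily G Λ τ) (w : ℕ) (I : Finset (Quad × ℕ)) :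
    ReversingLists I (lensList Λ τ w) (lensPos Λ τ w)
      (fun i j x => τ (j.1, x) < τ (i.1, x) ↔ 0 < (i.1 - j.1).1) := by
  classical
  have hne : ∀ {i j : Quad × ℕ} {x}, i ≠ j → x ∈ lensList Λ τ w i ∩ lensList Λ τ w j →
      i.1 ≠ j.1 := by
    intro i j x hij hx hfst
    obtain ⟨hxi, hxj⟩ := mem_inter.1 hx
    exact hij <| (mem_lensList.1 hxi).2.symm.trans (hfst ▸ (mem_lensList.1 hxj).2)
  have hcrossed : ∀ {i j : Quad × ℕ} {x y}, i ≠ j → x ≠ y →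
      x ∈ lensList Λ τ w i ∩ lensList Λ τ w j → y ∈ lensList Λ τ w i ∩ lensList Λ τ w j →
      Quad.CrossedSigns (i.1 - j.1) (x - y)
        (τ (i.1, x)) (τ (i.1, y)) (τ (j.1, x)) (τ (j.1, y)) := by
    intro i j x y hij hxy hx hy
    have hx' := mem_inter.1 hx
    have hy' := mem_inter.1 hy
    exact hΛ.crossedSigns (hne hij hx) hxy (mem_lensList.1 hx'.1).1 (mem_lensList.1 hy'.1).1
      (mem_lensList.1 hx'.2).1 (mem_lensList.1 hy'.2).1
  refine ⟨fun i _ x hx y hy hpos => ?_, fun i _ j _ hij x hx y hy hxy hiff => ?_,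
    fun i _ j _ hij x hx y hy hcx hcy => ?_⟩
  · refine hΛ.injOn (mem_lensList.1 hx).1 (mem_lensList.1 hy).1 (le_antisymm ?_ ?_)
    · exact not_lt.1 fun h => ((lensPos_lt_lensPos_iff hy hx).2 h).ne' hpos
    · exact not_lt.1 fun h => ((lensPos_lt_lensPos_iff hx hy).2 h).ne hpos
  all_goals
    have hx' := mem_inter.1 hx
    have hy' := mem_inter.1 hy
    rw [lensPos_lt_lensPos_iff hx'.1 hy'.1]
  · rw [lensPos_lt_lensPos_iff hy'.2 hx'.2]
    exact (hcrossed hij hxy hx hy).lt_iff_lt_of_iff (by tauto)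
  · rw [lensPos_lt_lensPos_iff hx'.2 hy'.2]
    have hxy : x ≠ y := by
      rintro rfl
      exact hcy hcx
    have H := hcrossed hij hxy hx hy
    rcases lt_or_ge 0 (i.1 - j.1).1 with hg | hg
    · refine H.lt_and_lt_of_leading_nonneg (by tauto) (lt_of_le_of_ne ?_ H.a'_ne_b') hg.le
      exact not_lt.1 fun h => hcy (iff_of_true h hg)
    · have hg' := hg.not_gt
      refine H.swap_right.lt_and_lt_of_leading_nonpos (by tauto) (lt_of_le_of_ne ?_ H.a_ne_b) hg
      exact not_lt.1 fun h => hg' (hcx.1 h)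

open Classical in
lemma sum_card_lensList :
    ∑ i ∈ Λ.image (blockLabel Λ Prod.fst τ w), #(lensList Λ τ w i) = #Λ := by
  rw [card_eq_sum_card_image (blockLabel Λ Prod.fst τ w) Λ]
  exact sum_congr rfl fun i _ => card_lensList i

open Classical in
lemma sum_card_lensList_sq_le (hΛ : LensFamily G Λ τ) (hw : 0 < w) :
    ∑ i ∈ Λ.image (blockLabel Λ Prod.fst τ w), (#(lensList Λ τ w i) : ℝ) ^ 2 ≤ #Λ * w := by
  have hle : ∀ i, #(lensList Λ τ w i) ≤ w := fun i =>
    (card_lensList i).trans_le (card_blockLabel_eq_le hΛ.injOn_fst_eq hw i)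
  rw [← sum_card_lensList (τ := τ) (w := w), Nat.cast_sum, sum_mul]
  gcongr with i
  rw [sq]
  gcongr
  exact hle i

open Classical in
lemma card_image_blockLabel_le_two_mul (hΛ : LensFamily G Λ τ) (hw : 0 < w) (h : #Λ ≤ #G * w) :
    (#(Λ.image (blockLabel Λ Prod.fst τ w)) : ℝ) ≤ 2 * #G := by
  have hfst : #(Λ.image Prod.fst) ≤ #G := card_le_card <|
    image_subset_iff.2 fun e he => (mem_product.1 (hΛ.subset he)).1
  have hdiv : (#Λ : ℝ) / w ≤ #G := (div_le_iff₀ (by positivity)).2 (mod_cast h)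
  calc (#(Λ.image (blockLabel Λ Prod.fst τ w)) : ℝ)
      ≤ #(Λ.image Prod.fst) + (#Λ : ℝ) / w := card_image_blockLabel_le _ _ _ _
    _ ≤ #G + #G := by gcongr
    _ = 2 * #G := (two_mul _).symm

end LensFamily

/-- `M` curves, `e` lenses, `I` blocks of length `2 ^ K`, `T` coincidences between blocks. -/
lemma sq_le_of_block_bounds {M e I T L : ℝ} {K : ℕ} (hT : 0 ≤ T) (hM : 1 ≤ M) (hI : 0 ≤ I)
    (hMe : 2 * M ≤ e) (hKe : M * 2 ^ K ≤ 2 * e) (hKL : K ≤ L + 1) (hIM : I ≤ 2 * M)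
    (hpairs : e ^ 2 ≤ M * (e + T))
    (hlists : T ^ 2 ≤ 4 * (K + 1) ^ 2 * I ^ 2 * (e * 2 ^ K + T)) :
    e ^ 2 ≤ 160 * (L + 2) ^ 2 * M ^ 3 := by
  have he : 0 ≤ e := by linarith
  have hKL' : (K : ℝ) + 1 ≤ L + 2 := by linarith
  have heT : e ^ 2 ≤ 2 * M * T := by nlinarith
  have hblock : e * 2 ^ K ≤ 4 * T := by
    refine le_of_mul_le_mul_left (a := M) ?_ (by linarith)
    calc M * (e * 2 ^ K) = e * (M * 2 ^ K) := by ring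
      _ ≤ e * (2 * e) := by gcongr
      _ ≤ M * (4 * T) := by linarith
  have hTM : T ≤ 80 * (K + 1) ^ 2 * M ^ 2 := by
    rcases hT.eq_or_lt with rfl | hTpos
    · positivity
    refine le_of_mul_le_mul_left (a := T) ?_ hTpos
    calc T * T = T ^ 2 := (sq T).symm
      _ ≤ 4 * (K + 1) ^ 2 * I ^ 2 * (e * 2 ^ K + T) := hlists
      _ ≤ 4 * (K + 1) ^ 2 * (2 * M) ^ 2 * (4 * T + T) := by gcongr
      _ = T * (80 * (K + 1) ^ 2 * M ^ 2) := by ring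
  calc e ^ 2 ≤ 2 * M * T := heT
    _ ≤ 2 * M * (80 * (L + 2) ^ 2 * M ^ 2) := by
        gcongr
        exact hTM.trans (by gcongr)
    _ = 160 * (L + 2) ^ 2 * M ^ 3 := by ring

/-- Cut the list of partners of each curve into `O(#G)` blocks of length about `#Λ / #G`; these
blocks form a family of reversing lists. -/
theorem LensFamily.card_sq_le {G : Finset Quad} {Λ : Finset (Quad × Quad)} {τ : Quad × Quad → ℝ}
    (hΛ : LensFamily G Λ τ) (hlarge : 2 * #G ≤ #Λ) :
    (#Λ : ℝ) ^ 2 ≤ 160 * (Nat.log 2 #G + 2) ^ 2 * (#G : ℝ) ^ 3 := by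
  classical
  rcases G.eq_empty_or_nonempty with rfl | hG
  · simp [subset_empty.1 (by simpa using hΛ.subset)]
  have hM : 0 < #G := hG.card_pos
  have hsq : #Λ ≤ #G * #G := (card_le_card hΛ.subset).trans_eq (card_product _ _)
  obtain ⟨K, hΛK, hKΛ, hKlog⟩ := exists_le_mul_two_pow hM (by omega) hsq
  have hw : 0 < 2 ^ K := by positivity
  set I := Λ.image (blockLabel Λ Prod.fst τ (2 ^ K))
  set E := lensList Λ τ (2 ^ K)
  set T := ∑ r ∈ I.offDiag, (#(E r.1 ∩ E r.2) : ℝ)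
  have hsum : ∑ i ∈ I, (#(E i) : ℝ) = #Λ := mod_cast sum_card_lensList
  have hsumsq : ∑ i ∈ I, (#(E i) : ℝ) ^ 2 ≤ #Λ * 2 ^ K := mod_cast hΛ.sum_card_lensList_sq_le hw
  have hlists : T ^ 2 ≤ 4 * (K + 1) ^ 2 * (#I : ℝ) ^ 2 * (#Λ * 2 ^ K + T) :=
    ((hΛ.reversingLists (2 ^ K) I).sq_sum_card_inter_le
      fun i _ x _ => Nat.mod_lt _ hw).trans (by gcongr)
  have hpairs : (#Λ : ℝ) ^ 2 ≤ #G * (#Λ + T) := by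
    rw [← hsum]
    refine sum_card_sq_le_card_mul fun i _ x hx => ?_
    exact (mem_product.1 (hΛ.subset (mem_lensList.1 hx).1)).2
  have hT : 0 ≤ T := sum_nonneg fun _ _ => Nat.cast_nonneg _
  exact sq_le_of_block_bounds hT (mod_cast hM) (Nat.cast_nonneg _) (mod_cast hlarge)
    (mod_cast hKΛ) (mod_cast hKlog) (hΛ.card_image_blockLabel_le_two_mul hw hΛK) hpairs hlists

/-! ### Plane drawings with arcs of quadratics -/

lemma Quad.continuous_eval (c : Quad) : Continuous c.eval := by
  unfold eval
  fun_prop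

/-- The part of the graph of the quadratic `curve` over the interval `[lo, hi]`. -/
@[ext]
structure Arc where
  curve : Quad
  lo : ℝ
  hi : ℝ

namespace Arc

/-- The height of (the curve supporting) the arc `e` over `t`. -/
abbrev eval (e : Arc) (t : ℝ) : ℝ := e.curve.eval t

/-- The left end point of an arc. -/
def leftPt (e : Arc) : ℝ × ℝ := (e.lo, e.eval e.lo)

/-- The right end point of an arc. -/
def rightPt (e : Arc) : ℝ × ℝ := (e.hi, e.eval e.hi)

/-- The arc `e` is strictly below the arc `f` at some abscissa where both are defined. -/
def Below (e f : Arc) : Prop :=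
  ∃ x ∈ Set.Icc e.lo e.hi ∩ Set.Icc f.lo f.hi, e.eval x < f.eval x

/-- Two distinct arcs meet in a common relatively interior point. -/
def Crosses (e f : Arc) : Prop :=
  e ≠ f ∧ ∃ x ∈ Set.Ioo e.lo e.hi ∩ Set.Ioo f.lo f.hi, e.eval x = f.eval x

end Arc

/-- `E` is the edge set of a simple graph on the vertex set `V`, drawn with arcs of quadratics that
pass through no vertex in their relative interior; crossings are allowed. -/
structure IsDrawing (V : Finset (ℝ × ℝ)) (E : Finset Arc) : Prop where
  lo_lt_hi : ∀ e ∈ E, e.lo < e.hi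
  leftPt_mem : ∀ e ∈ E, e.leftPt ∈ V
  rightPt_mem : ∀ e ∈ E, e.rightPt ∈ V
  vertex_ne : ∀ e ∈ E, ∀ v ∈ V, v.1 ∈ Set.Ioo e.lo e.hi → v.2 ≠ e.eval v.1
  simple : ∀ e ∈ E, ∀ f ∈ E, e.leftPt = f.leftPt → e.rightPt = f.rightPt → e = f

/-- A drawing without crossings. -/
structure IsPlaneDrawing (V : Finset (ℝ × ℝ)) (E : Finset Arc) : Prop extends IsDrawing V E where
  not_crosses : ∀ e ∈ E, ∀ f ∈ E, ¬e.Crosses f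

namespace IsPlaneDrawing

variable {V : Finset (ℝ × ℝ)} {E : Finset Arc} {e f : Arc} {x : ℝ}

lemma eval_le_of_below (h : IsPlaneDrawing V E) (he : e ∈ E) (hf : f ∈ E) (hef : e.Below f)
    (hx : x ∈ Set.Icc e.lo e.hi ∩ Set.Icc f.lo f.hi) : e.eval x ≤ f.eval x := by
  obtain ⟨w, hw, hlt⟩ := hef
  by_contra! hgt
  have hcont : Continuous fun t => e.eval t - f.eval t :=
    e.curve.continuous_eval.sub f.curve.continuous_eval
  have hne : e ≠ f := by
    rintro rfl
    exact hlt.false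
  refine h.not_crosses e he f hf ⟨hne, ?_⟩
  rcases lt_trichotomy w x with hwx | rfl | hxw
  · obtain ⟨t, ht, h0⟩ := intermediate_value_Ioo hwx.le hcont.continuousOn
      ⟨sub_neg.2 hlt, sub_pos.2 hgt⟩
    exact ⟨t, ⟨⟨hw.1.1.trans_lt ht.1, ht.2.trans_le hx.1.2⟩,
      ⟨hw.2.1.trans_lt ht.1, ht.2.trans_le hx.2.2⟩⟩, sub_eq_zero.1 h0⟩
  · exact (hlt.asymm hgt).elim
  · obtain ⟨t, ht, h0⟩ := intermediate_value_Ioo' hxw.le hcont.continuousOn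
      ⟨sub_neg.2 hlt, sub_pos.2 hgt⟩
    exact ⟨t, ⟨⟨hx.1.1.trans_lt ht.1, ht.2.trans_le hw.1.2⟩,
      ⟨hx.2.1.trans_lt ht.1, ht.2.trans_le hw.2.2⟩⟩, sub_eq_zero.1 h0⟩

lemma not_below_of_below (h : IsPlaneDrawing V E) (he : e ∈ E) (hf : f ∈ E) (hef : e.Below f) :
    ¬f.Below e := fun ⟨_, hx, hlt⟩ =>
  (h.eval_le_of_below he hf hef hx.symm).not_gt hlt

lemma eq_or_below_or_below (h : IsPlaneDrawing V E) (he : e ∈ E) (hf : f ∈ E)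
    (hx : x ∈ Set.Ioo e.lo e.hi ∩ Set.Ioo f.lo f.hi) : e = f ∨ e.Below f ∨ f.Below e := by
  have hx' := Set.inter_subset_inter Set.Ioo_subset_Icc_self Set.Ioo_subset_Icc_self hx
  rcases lt_trichotomy (e.eval x) (f.eval x) with hlt | heq | hgt
  · exact Or.inr (Or.inl ⟨x, hx', hlt⟩)
  · exact Or.inl (not_imp_comm.1 (fun hne => ⟨hne, x, hx, heq⟩) (h.not_crosses e he f hf))
  · exact Or.inr (Or.inr ⟨x, hx'.symm, hgt⟩)

lemma below_iff_of_mem_interior (h : IsPlaneDrawing V E) (he : e ∈ E) (hf : f ∈ E)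
    (hx : x ∈ Set.Ioo e.lo e.hi ∩ Set.Ioo f.lo f.hi) : e.Below f ↔ e.eval x < f.eval x := by
  have hx' := Set.inter_subset_inter Set.Ioo_subset_Icc_self Set.Ioo_subset_Icc_self hx
  refine ⟨fun hef => (h.eval_le_of_below he hf hef hx').lt_of_ne fun heq => ?_,
    fun hlt => ⟨x, hx', hlt⟩⟩
  refine h.not_crosses e he f hf ⟨?_, x, hx, heq⟩
  rintro rfl
  exact h.not_below_of_below he he hef hef

end IsPlaneDrawing

/-- Among the arcs of `E` that end in the same right end point as `e`, the arc `f` is the one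
immediately above `e`. -/
structure IsNextAbove (E : Finset Arc) (e f : Arc) : Prop where
  mem : f ∈ E
  rightPt_eq : f.rightPt = e.rightPt
  below : e.Below f
  not_between : ∀ g ∈ E, g.rightPt = e.rightPt → e.Below g → ¬g.Below f

/-- The vertex `v` lies in the wedge between the arcs `e` and `f`, which is to be applied when `e`
and `f` have the same right end point; the apex of the wedge is excluded. -/
structure InWedge (e f : Arc) (v : ℝ × ℝ) : Prop where
  lo_le : e.lo ≤ v.1
  lo_le' : f.lo ≤ v.1
  lt_hi : v.1 < e.hi
  le : e.eval v.1 ≤ v.2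
  le' : v.2 ≤ f.eval v.1

/-- `v` is a rightmost vertex in the wedge between the arcs `e` and `f`. -/
structure IsLastInWedge (V : Finset (ℝ × ℝ)) (e f : Arc) (v : ℝ × ℝ) : Prop
    extends InWedge e f v where
  mem : v ∈ V
  fst_le : ∀ u ∈ V, InWedge e f u → u.1 ≤ v.1

/-- The label of an arc in a plane drawing: a vertex and one of three types. Labels determine the
arc, so a plane drawing has at most three times as many arcs as vertices. -/
inductive IsLabel (V : Finset (ℝ × ℝ)) (E : Finset Arc) (e : Arc) : (ℝ × ℝ) × Fin 3 → Prop
  | top (htop : ∀ g ∈ E, g.rightPt = e.rightPt → ¬e.Below g) : IsLabel V E e (e.rightPt, 0)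
  | above {f : Arc} {v : ℝ × ℝ} (hnext : IsNextAbove E e f) (hlast : IsLastInWedge V e f v)
      (hv : e.eval v.1 < v.2) : IsLabel V E e (v, 1)
  | on {f : Arc} {v : ℝ × ℝ} (hnext : IsNextAbove E e f) (hlast : IsLastInWedge V e f v)
      (hv : v.2 = e.eval v.1) (hv' : v.2 < f.eval v.1) : IsLabel V E e (v, 2)

namespace IsPlaneDrawing

variable {V : Finset (ℝ × ℝ)} {E : Finset Arc} {e f e' f' : Arc} {v : ℝ × ℝ}

lemma exists_mem_interior (h : IsPlaneDrawing V E) (t : ℝ) :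
    ∃ x, ∀ e ∈ E, e.hi = t → x ∈ Set.Ioo e.lo e.hi := by
  have hnear : ∀ᶠ x in nhdsWithin t (Set.Iio t), ∀ e ∈ E, e.hi = t → x ∈ Set.Ioo e.lo e.hi := by
    rw [Filter.eventually_all_finset]
    intro e he
    rw [Filter.eventually_imp_distrib_left]
    rintro rfl
    exact Ioo_mem_nhdsLT (h.lo_lt_hi e he)
  exact hnear.exists

lemma eq_of_label_top (h : IsPlaneDrawing V E) (he : e ∈ E) (hf : f ∈ E)
    (hr : e.rightPt = f.rightPt) (htop : ∀ g ∈ E, g.rightPt = e.rightPt → ¬e.Below g)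
    (htop' : ∀ g ∈ E, g.rightPt = f.rightPt → ¬f.Below g) : e = f := by
  obtain ⟨x, hx⟩ := h.exists_mem_interior e.hi
  have hhi : f.hi = e.hi := congrArg Prod.fst hr.symm
  rcases h.eq_or_below_or_below he hf ⟨hx e he rfl, hx f hf hhi⟩ with heq | hef | hfe
  · exact heq
  · exact (htop f hf hr.symm hef).elim
  · exact (htop' e he hr hfe).elim

lemma eval_le_of_isNextAbove (h : IsPlaneDrawing V E) (he : e ∈ E) (hf : f ∈ E)
    (hnext : IsNextAbove E e e') (hlast : IsLastInWedge V e e' v) (hef : e.Below f)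
    (hlo : f.lo ≤ v.1) (hhi : v.1 < f.hi) : e'.eval v.1 ≤ f.eval v.1 := by
  by_contra! hlt
  have he'hi : e'.hi = e.hi := congrArg Prod.fst hnext.rightPt_eq
  have he'r : e'.eval e'.hi = e.eval e.hi := congrArg Prod.snd hnext.rightPt_eq
  have hvhi : v.1 < e'.hi := hlast.lt_hi.trans_eq he'hi.symm
  have hfe' : f.Below e' := ⟨v.1, ⟨⟨hlo, hhi.le⟩, hlast.lo_le', hvhi.le⟩, hlt⟩
  have squeeze : ∀ x, v.1 ≤ x → x ≤ e.hi → x ≤ f.hi → e.eval x ≤ f.eval x ∧ f.eval x ≤ e'.eval x :=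
    fun x hvx hxe hxf =>
      ⟨h.eval_le_of_below he hf hef ⟨⟨hlast.lo_le.trans hvx, hxe⟩, hlo.trans hvx, hxf⟩,
        h.eval_le_of_below hf hnext.mem hfe'
          ⟨⟨hlo.trans hvx, hxf⟩, hlast.lo_le'.trans hvx, hxe.trans_eq he'hi.symm⟩⟩
  rcases lt_trichotomy f.hi e.hi with hfe | heq | hef'
  · obtain ⟨hl, hu⟩ := squeeze f.hi hhi.le hfe.le le_rfl
    have hwedge : InWedge e e' f.rightPt :=
      ⟨hlast.lo_le.trans hhi.le, hlast.lo_le'.trans hhi.le, hfe, hl, hu⟩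
    exact (hlast.fst_le f.rightPt (h.rightPt_mem f hf) hwedge).not_gt hhi
  · obtain ⟨hl, hu⟩ := squeeze f.hi hhi.le heq.le le_rfl
    rw [heq, ← he'hi, he'r, he'hi] at hu
    rw [heq] at hl
    have hr : f.rightPt = e.rightPt := Prod.ext heq (by rw [Arc.rightPt, heq]; exact hu.antisymm hl)
    exact hnext.not_between f hf hr hef hfe'
  · obtain ⟨hl, hu⟩ := squeeze e.hi hlast.lt_hi.le le_rfl hef'.le
    rw [← he'hi, he'r, he'hi] at hu
    exact h.vertex_ne f hf e.rightPt (h.rightPt_mem e he) ⟨hlo.trans_lt hlast.lt_hi, hef'⟩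
      (hl.antisymm hu)

lemma eq_of_isLastInWedge (h : IsPlaneDrawing V E) (he : e ∈ E) (hf : f ∈ E)
    (hnext : IsNextAbove E e e') (hlast : IsLastInWedge V e e' v)
    (hnext' : IsNextAbove E f f') (hlast' : IsLastInWedge V f f' v)
    (hv : f.eval v.1 < e'.eval v.1) (hv' : e.eval v.1 < f'.eval v.1) : e = f := by
  obtain ⟨x, hvx, hx⟩ := exists_between (lt_min hlast.lt_hi hlast'.lt_hi)
  obtain ⟨hxe, hxf⟩ := lt_min_iff.1 hx
  rcases h.eq_or_below_or_below he hf
    ⟨⟨hlast.lo_le.trans_lt hvx, hxe⟩, hlast'.lo_le.trans_lt hvx, hxf⟩ with heq | hef | hfe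
  · exact heq
  · exact ((h.eval_le_of_isNextAbove he hf hnext hlast hef hlast'.lo_le hlast'.lt_hi).not_gt
      hv).elim
  · exact ((h.eval_le_of_isNextAbove hf he hnext' hlast' hfe hlast.lo_le hlast.lt_hi).not_gt
      hv').elim

lemma eq_of_isLabel (h : IsPlaneDrawing V E) (he : e ∈ E) (hf : f ∈ E) {a b : (ℝ × ℝ) × Fin 3}
    (ha : IsLabel V E e a) (hb : IsLabel V E f b) (hab : a = b) : e = f := by
  cases ha <;> cases hb <;> simp only [Prod.mk.injEq, and_true] at hab
  case top.top htop htop' => exact h.eq_of_label_top he hf hab htop htop'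
  case above.above hnext hlast hv _ _ hnext' hlast' hv' =>
    subst hab
    exact h.eq_of_isLastInWedge he hf hnext hlast hnext' hlast'
      (hv'.trans_le hlast.le') (hv.trans_le hlast'.le')
  case on.on hnext hlast hv hvlt _ _ hnext' hlast' hv' hvlt' =>
    subst hab
    exact h.eq_of_isLastInWedge he hf hnext hlast hnext' hlast'
      (hv'.symm.trans_lt hvlt) (hv.symm.trans_lt hvlt')
  all_goals simp at hab

open Classical in
lemma exists_isNextAbove (h : IsPlaneDrawing V E)
    (hnot : ¬∀ g ∈ E, g.rightPt = e.rightPt → ¬e.Below g) : ∃ f, IsNextAbove E e f := by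
  push Not at hnot
  obtain ⟨g, hg, hgr, heg⟩ := hnot
  obtain ⟨x, hx⟩ := h.exists_mem_interior e.hi
  have hmem : ∀ g ∈ E, g.rightPt = e.rightPt → x ∈ Set.Ioo g.lo g.hi := fun g hg hr =>
    hx g hg (congrArg Prod.fst hr)
  obtain ⟨f, hf, hmin⟩ := exists_min_image {g ∈ E | g.rightPt = e.rightPt ∧ e.Below g}
    (fun g => g.eval x) ⟨g, mem_filter.2 ⟨hg, hgr, heg⟩⟩
  obtain ⟨hf, hfr, hef⟩ := mem_filter.1 hf
  refine ⟨f, hf, hfr, hef, fun g hg hgr heg hgf => ?_⟩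
  have hlt := (h.below_iff_of_mem_interior hg hf ⟨hmem g hg hgr, hmem f hf hfr⟩).1 hgf
  exact (hmin g (mem_filter.2 ⟨hg, hgr, heg⟩)).not_gt hlt

open Classical in
lemma exists_isLastInWedge (h : IsPlaneDrawing V E) (he : e ∈ E) (hnext : IsNextAbove E e f) :
    ∃ v, IsLastInWedge V e f v := by
  have hhi : f.hi = e.hi := congrArg Prod.fst hnext.rightPt_eq
  have hlt := h.lo_lt_hi e he
  have hlt' := (h.lo_lt_hi f hnext.mem).trans_eq hhi
  have hwedge : ∃ v ∈ V, InWedge e f v := by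
    rcases le_total f.lo e.lo with hlo | hlo
    · exact ⟨e.leftPt, h.leftPt_mem e he, le_rfl, hlo, hlt, le_rfl,
        h.eval_le_of_below he hnext.mem hnext.below ⟨⟨le_rfl, hlt.le⟩, hlo, hhi ▸ hlt.le⟩⟩
    · exact ⟨f.leftPt, h.leftPt_mem f hnext.mem, hlo, le_rfl, hlt',
        h.eval_le_of_below he hnext.mem hnext.below ⟨⟨hlo, hlt'.le⟩, le_rfl, hhi ▸ hlt'.le⟩,
        le_rfl⟩
  obtain ⟨v, hv, hmax⟩ := exists_max_image {v ∈ V | InWedge e f v} Prod.fst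
    (hwedge.imp fun v hv => mem_filter.2 hv)
  obtain ⟨hv, hwv⟩ := mem_filter.1 hv
  exact ⟨v, hwv, hv, fun u hu hwu => hmax u (mem_filter.2 ⟨hu, hwu⟩)⟩

lemma exists_isLabel (h : IsPlaneDrawing V E) (he : e ∈ E) :
    ∃ a ∈ V ×ˢ (univ : Finset (Fin 3)), IsLabel V E e a := by
  by_cases htop : ∀ g ∈ E, g.rightPt = e.rightPt → ¬e.Below g
  · exact ⟨_, mem_product.2 ⟨h.rightPt_mem e he, mem_univ _⟩, .top htop⟩
  obtain ⟨f, hnext⟩ := h.exists_isNextAbove htop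
  obtain ⟨v, hlast⟩ := h.exists_isLastInWedge he hnext
  have hmem : ∀ i, (v, i) ∈ V ×ˢ (univ : Finset (Fin 3)) := fun i =>
    mem_product.2 ⟨hlast.mem, mem_univ i⟩
  rcases hlast.le.lt_or_eq with hlt | heq
  · exact ⟨_, hmem 1, .above hnext hlast hlt⟩
  refine ⟨_, hmem 2, .on hnext hlast heq.symm (hlast.le'.lt_of_ne fun heq' => ?_)⟩
  have hhi : f.hi = e.hi := congrArg Prod.fst hnext.rightPt_eq
  have hlo : e.lo = v.1 := hlast.lo_le.eq_of_not_lt fun hlo =>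
    h.vertex_ne e he v hlast.mem ⟨hlo, hlast.lt_hi⟩ heq.symm
  have hlo' : f.lo = v.1 := hlast.lo_le'.eq_of_not_lt fun hlo =>
    h.vertex_ne f hnext.mem v hlast.mem ⟨hlo, hlast.lt_hi.trans_eq hhi.symm⟩ heq'
  have hl : e.leftPt = f.leftPt := by
    rw [Arc.leftPt, Arc.leftPt, hlo, hlo', heq, ← heq']
  have hef := h.simple e he f hnext.mem hl hnext.rightPt_eq.symm
  exact h.not_below_of_below he he (hef ▸ hnext.below) (hef ▸ hnext.below)

lemma card_le (h : IsPlaneDrawing V E) : #E ≤ 3 * #V := by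
  choose! label hmem hlabel using fun e (he : e ∈ E) => h.exists_isLabel he
  calc #E ≤ #(V ×ˢ (univ : Finset (Fin 3))) := card_le_card_of_injOn label hmem
        fun e he f hf hef => h.eq_of_isLabel he hf (hlabel e he) (hlabel f hf) hef
    _ = 3 * #V := by rw [card_product, card_univ, Fintype.card_fin, mul_comm]

end IsPlaneDrawing

/-! ### The crossing inequality -/

/-- The probability that a random subset of `V`, containing each element independently with
probability `p`, equals `S`. -/
def sampleWeight {α : Type*} (p : ℝ) (V S : Finset α) : ℝ := p ^ #S * (1 - p) ^ (#V - #S)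

section Sampling

variable {α β : Type*} {V T : Finset α} {p : ℝ}

lemma sampleWeight_nonneg {S : Finset α} (h0 : 0 ≤ p) (h1 : p ≤ 1) : 0 ≤ sampleWeight p V S :=
  mul_nonneg (pow_nonneg h0 _) (pow_nonneg (sub_nonneg.2 h1) _)

variable [DecidableEq α]

lemma sum_sampleWeight_superset (hT : T ⊆ V) :
    ∑ S ∈ V.powerset with T ⊆ S, sampleWeight p V S = p ^ #T := by
  have expand := prod_add (fun _ => p) (fun i => if i ∈ T then 0 else 1 - p) V
  have marginal : ∏ i ∈ V, (p + if i ∈ T then 0 else 1 - p) = p ^ #T := by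
    rw [← prod_const, ← prod_subset hT fun i _ hi => by simp [hi]]
    exact prod_congr rfl fun i hi => by simp [hi]
  rw [← marginal, expand, sum_filter]
  refine sum_congr rfl fun S hS => ?_
  rw [mem_powerset] at hS
  rw [prod_const, sampleWeight]
  split_ifs with hTS
  · rw [prod_congr rfl fun i hi => if_neg fun hiT => (mem_sdiff.1 hi).2 (hTS hiT), prod_const,
      card_sdiff_of_subset hS]
  · obtain ⟨i, hiT, hiS⟩ := not_subset.1 hTS
    exact Eq.symm (mul_eq_zero_of_right _
      (prod_eq_zero (mem_sdiff.2 ⟨hT hiT, hiS⟩) (if_pos hiT)))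

lemma sum_sampleWeight_mul_card {X : Finset β} {supp : β → Finset α} {k : ℕ}
    (hsub : ∀ x ∈ X, supp x ⊆ V) (hcard : ∀ x ∈ X, #(supp x) = k) :
    ∑ S ∈ V.powerset, sampleWeight p V S * #{x ∈ X | supp x ⊆ S} = #X * p ^ k := by
  simp_rw [card_filter, Nat.cast_sum, Nat.cast_ite, Nat.cast_one, Nat.cast_zero, mul_sum, mul_ite,
    mul_one, mul_zero]
  rw [sum_comm, ← nsmul_eq_mul, ← sum_const]
  refine sum_congr rfl fun x hx => ?_
  rw [← sum_filter, sum_sampleWeight_superset (hsub x hx), hcard x hx]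

end Sampling

open Classical in
/-- The set of end points of an arc. -/
def Arc.ends (e : Arc) : Finset (ℝ × ℝ) := {e.leftPt, e.rightPt}

open Classical in
/-- The ordered pairs of crossing arcs of `E`. -/
def crossingPairs (E : Finset Arc) : Finset (Arc × Arc) := {p ∈ E ×ˢ E | p.1.Crosses p.2}

namespace IsDrawing

variable {V S : Finset (ℝ × ℝ)} {E : Finset Arc} {p : ℝ}

lemma ends_subset (h : IsDrawing V E) {e : Arc} (he : e ∈ E) : e.ends ⊆ V :=
  insert_subset (h.leftPt_mem e he) (singleton_subset_iff.2 (h.rightPt_mem e he))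

lemma card_ends (h : IsDrawing V E) {e : Arc} (he : e ∈ E) : #e.ends = 2 :=
  card_pair fun heq => (h.lo_lt_hi e he).ne (congrArg Prod.fst heq)

open Classical in
lemma card_inside_le (h : IsDrawing V E) (hS : S ⊆ V) :
    #{e ∈ E | e.ends ⊆ S} ≤ 3 * #S + #{p ∈ crossingPairs E | p.1.ends ∪ p.2.ends ⊆ S} := by
  set E' := {e ∈ E | e.ends ⊆ S}
  set X := {p ∈ crossingPairs E | p.1.ends ∪ p.2.ends ⊆ S}
  have mem_of_mem : ∀ e ∈ E' \ X.image Prod.fst, e ∈ E ∧ e.ends ⊆ S := fun e he =>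
    mem_filter.1 (mem_sdiff.1 he).1
  have hplane : IsPlaneDrawing S (E' \ X.image Prod.fst) :=
    { lo_lt_hi := fun e he => h.lo_lt_hi e (mem_of_mem e he).1
      leftPt_mem := fun e he => (mem_of_mem e he).2 (mem_insert_self _ _)
      rightPt_mem := fun e he => (mem_of_mem e he).2 (mem_insert_of_mem (mem_singleton_self _))
      vertex_ne := fun e he v hv => h.vertex_ne e (mem_of_mem e he).1 v (hS hv)
      simple := fun e he f hf => h.simple e (mem_of_mem e he).1 f (mem_of_mem f hf).1
      not_crosses := fun e he f hf hcross => by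
        obtain ⟨heE, heS⟩ := mem_of_mem e he
        obtain ⟨hfE, hfS⟩ := mem_of_mem f hf
        have hmem : (e, f) ∈ X := mem_filter.2
          ⟨mem_filter.2 ⟨mem_product.2 ⟨heE, hfE⟩, hcross⟩, union_subset heS hfS⟩
        exact (mem_sdiff.1 he).2 (mem_image_of_mem Prod.fst hmem) }
  have hcard := hplane.card_le
  have hremoved := le_card_sdiff (X.image Prod.fst) E'
  have himage : #(X.image Prod.fst) ≤ #X := card_image_le
  lia

/-- The sampling proof of the crossing lemma: keep each vertex with probability `p`. -/
lemma card_mul_sq_le (h : IsDrawing V E)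
    (hdisj : ∀ e ∈ E, ∀ f ∈ E, e.Crosses f → Disjoint e.ends f.ends) (h0 : 0 ≤ p) (h1 : p ≤ 1) :
    #E * p ^ 2 ≤ 3 * (#V * p) + #(crossingPairs E) * p ^ 4 := by
  classical
  have hcross : ∀ x ∈ crossingPairs E, (x.1 ∈ E ∧ x.2 ∈ E) ∧ x.1.Crosses x.2 := fun x hx =>
    (mem_filter.1 hx).imp_left mem_product.1
  have edges : ∑ S ∈ V.powerset, sampleWeight p V S * #{e ∈ E | e.ends ⊆ S} = #E * p ^ 2 :=
    sum_sampleWeight_mul_card (fun e he => h.ends_subset he) fun e he => h.card_ends he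
  have vertices : ∑ S ∈ V.powerset, sampleWeight p V S * #S = #V * p := by
    rw [← pow_one p, ← sum_sampleWeight_mul_card (X := V) (supp := fun v => {v})
      (fun v hv => singleton_subset_iff.2 hv) fun v _ => card_singleton v, pow_one]
    refine sum_congr rfl fun S hS => ?_
    simp_rw [singleton_subset_iff, filter_mem_eq_inter, inter_eq_right.2 (mem_powerset.1 hS)]
  have crossings : ∑ S ∈ V.powerset,
      sampleWeight p V S * #{x ∈ crossingPairs E | x.1.ends ∪ x.2.ends ⊆ S} =
        #(crossingPairs E) * p ^ 4 := by
    refine sum_sampleWeight_mul_card (fun x hx => ?_) fun x hx => ?_ <;>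
      obtain ⟨⟨hmem, hmem'⟩, hx⟩ := hcross x hx
    · exact union_subset (h.ends_subset hmem) (h.ends_subset hmem')
    · rw [card_union_of_disjoint (hdisj _ hmem _ hmem' hx), h.card_ends hmem, h.card_ends hmem']
  rw [← edges, ← vertices, ← crossings, mul_sum, ← sum_add_distrib]
  refine sum_le_sum fun S hS => ?_
  have hinside : (#{e ∈ E | e.ends ⊆ S} : ℝ) ≤
      3 * #S + #{x ∈ crossingPairs E | x.1.ends ∪ x.2.ends ⊆ S} := by
    exact_mod_cast h.card_inside_le (mem_powerset.1 hS)
  calc _ ≤ _ := mul_le_mul_of_nonneg_left hinside (sampleWeight_nonneg h0 h1)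
    _ = _ := by ring

end IsDrawing

/-! ### Incidences between points and quadratics -/

namespace Quad

variable {c d : Quad} {a b s : ℝ}

lemma eval_sub_eval_of_eval_eq (hab : a ≠ b) (ha : c.eval a = d.eval a) (hb : c.eval b = d.eval b)
    (t : ℝ) : c.eval t - d.eval t = (c.1 - d.1) * ((t - a) * (t - b)) := by
  refine sub_eq_zero.1 <| (mul_eq_zero.1 (?_ : (b - a) * _ = 0)).resolve_left <|
    sub_ne_zero.2 hab.symm
  simp only [eval] at ha hb ⊢
  linear_combination (b - t) * ha + (t - a) * hb

lemma leading_ne_of_ne (hcd : c ≠ d) (hab : a ≠ b) (ha : c.eval a = d.eval a)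
    (hb : c.eval b = d.eval b) : c.1 ≠ d.1 := by
  intro h
  have heq : ∀ t, c.eval t = d.eval t := fun t => by
    rw [← sub_eq_zero, eval_sub_eval_of_eval_eq hab ha hb, h, sub_self, zero_mul]
  have h0 := heq 0
  have h1 := heq 1
  simp only [eval, h] at h0 h1
  exact hcd (Prod.ext h (Prod.ext (by linarith) (by linarith)))

lemma eq_of_eval_eq_three (hab : a ≠ b) (has : a ≠ s) (hbs : b ≠ s) (ha : c.eval a = d.eval a)
    (hb : c.eval b = d.eval b) (hs : c.eval s = d.eval s) : c = d := by
  by_contra hcd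
  have h := eval_sub_eval_of_eval_eq hab ha hb s
  rw [hs, sub_self] at h
  exact mul_ne_zero (sub_ne_zero.2 (leading_ne_of_ne hcd hab ha hb))
    (mul_ne_zero (sub_ne_zero.2 has.symm) (sub_ne_zero.2 hbs.symm)) h.symm

end Quad

section Matching

variable {α : Type*}

/-- `M` is a set of pairs in the relation `R` on `E` in which no element is repeated as a first
component or as a second component. -/
structure IsMatching (R : α → α → Prop) (E : Finset α) (M : Finset (α × α)) : Prop where
  fst_mem : ∀ p ∈ M, p.1 ∈ E
  snd_mem : ∀ p ∈ M, p.2 ∈ E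
  rel : ∀ p ∈ M, R p.1 p.2
  injOn_fst : Set.InjOn Prod.fst (M : Set (α × α))
  injOn_snd : Set.InjOn Prod.snd (M : Set (α × α))

lemma exists_isMatching_card_le (R : α → α → Prop) (hR : ∀ a, ¬R a a) (E : Finset α) :
    ∃ M F, IsMatching R E M ∧ F ⊆ E ∧ (∀ a ∈ F, ∀ b ∈ F, ¬R a b) ∧ #E ≤ #F + 2 * #M := by
  classical
  induction E using Finset.strongInduction with
  | H E ih =>
    by_cases hfree : ∀ a ∈ E, ∀ b ∈ E, ¬R a b
    · exact ⟨∅, E, ⟨by simp, by simp, by simp, by simp, by simp⟩, subset_rfl, hfree, by simp⟩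
    push Not at hfree
    obtain ⟨a, ha, b, hb, hab⟩ := hfree
    have hba : b ≠ a := by
      rintro rfl
      exact hR b hab
    have hsub : (E.erase a).erase b ⊆ E := (erase_subset _ _).trans (erase_subset _ _)
    have hcard : #((E.erase a).erase b) + 2 = #E := by
      rw [← card_erase_add_one ha, ← card_erase_add_one (mem_erase.2 ⟨hba, hb⟩)]
    obtain ⟨M, F, hM, hF, hfree, hle⟩ := ih ((E.erase a).erase b)
      ((erase_subset _ _).trans_ssubset (erase_ssubset ha))
    have hfst : ∀ p ∈ M, p.1 ≠ a := fun p hp => ne_of_mem_erase (mem_of_mem_erase (hM.fst_mem p hp))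
    have hsnd : ∀ p ∈ M, p.2 ≠ b := fun p hp => ne_of_mem_erase (hM.snd_mem p hp)
    have hnot : (a, b) ∉ M := fun h => hfst _ h rfl
    refine ⟨insert (a, b) M, F, ⟨?_, ?_, ?_, ?_, ?_⟩, hF.trans hsub, hfree, ?_⟩
    · exact forall_mem_insert .. |>.2 ⟨ha, fun p hp => hsub (hM.fst_mem p hp)⟩
    · exact forall_mem_insert .. |>.2 ⟨hb, fun p hp => hsub (hM.snd_mem p hp)⟩
    · exact forall_mem_insert .. |>.2 ⟨hab, hM.rel⟩
    · rw [coe_insert, Set.injOn_insert (mem_coe.not.2 hnot)]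
      exact ⟨hM.injOn_fst, fun ⟨p, hp, h⟩ => hfst p hp h⟩
    · rw [coe_insert, Set.injOn_insert (mem_coe.not.2 hnot)]
      exact ⟨hM.injOn_snd, fun ⟨p, hp, h⟩ => hsnd p hp h⟩
    · rw [card_insert_of_notMem hnot]
      lia

end Matching

/-- The curves supporting the arcs of a pair. -/
def curvePair (i : Arc × Arc) : Quad × Quad := (i.1.curve, i.2.curve)

/-- An arc of a curve of `G` between two consecutive points of `V` on that curve. -/
structure IsEdge (G : Finset Quad) (V : Finset (ℝ × ℝ)) (e : Arc) : Prop where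
  curve_mem : e.curve ∈ G
  lo_lt_hi : e.lo < e.hi
  leftPt_mem : e.leftPt ∈ V
  rightPt_mem : e.rightPt ∈ V
  vertex_ne : ∀ v ∈ V, v.1 ∈ Set.Ioo e.lo e.hi → v.2 ≠ e.eval v.1

namespace IsEdge

variable {G : Finset Quad} {V : Finset (ℝ × ℝ)} {e f : Arc} {x : ℝ}

lemma eq_of_mem_interior (he : IsEdge G V e) (hf : IsEdge G V f) (hc : e.curve = f.curve)
    (hx : x ∈ Set.Ioo e.lo e.hi ∩ Set.Ioo f.lo f.hi) : e = f := by
  obtain ⟨⟨hex, hxe⟩, hfx, hxf⟩ := hx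
  refine Arc.ext hc ?_ ?_
  · rcases lt_trichotomy e.lo f.lo with h | h | h
    · exact (he.vertex_ne _ hf.leftPt_mem ⟨h, hfx.trans hxe⟩ (by rw [Arc.eval, hc]; rfl)).elim
    · exact h
    · exact (hf.vertex_ne _ he.leftPt_mem ⟨h, hex.trans hxf⟩ (by rw [Arc.eval, ← hc]; rfl)).elim
  · rcases lt_trichotomy e.hi f.hi with h | h | h
    · exact (hf.vertex_ne _ he.rightPt_mem ⟨hfx.trans hxe, h⟩ (by rw [Arc.eval, ← hc]; rfl)).elim
    · exact h
    · exact (he.vertex_ne _ hf.rightPt_mem ⟨hex.trans hxf, h⟩ (by rw [Arc.eval, hc]; rfl)).elim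

lemma notMem_Icc_of_mem_interior (he : IsEdge G V e) (hf : IsEdge G V f)
    (hc : e.curve = f.curve) (hne : e ≠ f) (hx : x ∈ Set.Ioo e.lo e.hi) :
    x ∉ Set.Icc f.lo f.hi := by
  intro hxf
  rw [← closure_Ioo hf.lo_lt_hi.ne, mem_closure_iff] at hxf
  obtain ⟨y, hy⟩ := hxf _ isOpen_Ioo hx
  exact hne (he.eq_of_mem_interior hf hc hy)

end IsEdge

section Edges

variable {G : Finset Quad} {V : Finset (ℝ × ℝ)} {E : Finset Arc} {p : ℝ}

open Classical in
/-- The arcs of the curves of `G` between consecutive points of `V`. -/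
def edges (G : Finset Quad) (V : Finset (ℝ × ℝ)) : Finset Arc :=
  {e ∈ (G ×ˢ V ×ˢ V).image fun i => (⟨i.1, i.2.1.1, i.2.2.1⟩ : Arc) | IsEdge G V e}

open Classical in
lemma mem_edges {e : Arc} : e ∈ edges G V ↔ IsEdge G V e := by
  refine ⟨fun h => (mem_filter.1 h).2, fun h => mem_filter.2 ⟨mem_image.2
    ⟨(e.curve, e.leftPt, e.rightPt), mem_product.2 ⟨h.curve_mem, ?_⟩, rfl⟩, h⟩⟩
  exact mem_product.2 ⟨h.leftPt_mem, h.rightPt_mem⟩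

open Classical in
/-- The pairs of a curve of `G` and a point of `V` on it. -/
def incidences (G : Finset Quad) (V : Finset (ℝ × ℝ)) : Finset (Quad × (ℝ × ℝ)) :=
  {i ∈ G ×ˢ V | i.2.2 = i.1.eval i.2.1}

lemma mem_incidences {c : Quad} {v : ℝ × ℝ} :
    (c, v) ∈ incidences G V ↔ (c ∈ G ∧ v ∈ V) ∧ v.2 = c.eval v.1 := by
  rw [incidences, mem_filter, mem_product]

/-- On each curve, every point but the last one is the left end point of an edge. -/
lemma card_incidences_le_card_edges : #(incidences G V) ≤ #G + #(edges G V) := by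
  classical
  set hasNext : Quad × (ℝ × ℝ) → Prop := fun i => ∃ w ∈ V, w.2 = i.1.eval w.1 ∧ i.2.1 < w.1
  have card_next : #{i ∈ incidences G V | hasNext i} ≤ #(edges G V) := by
    refine (card_le_card fun i hi => ?_).trans
      (card_image_le (f := fun e : Arc => (e.curve, e.leftPt)))
    obtain ⟨hi, w, hw, hwc, hlt⟩ := mem_filter.1 hi
    obtain ⟨⟨hc, hv⟩, hvc⟩ := mem_incidences.1 hi
    obtain ⟨u, hu, hmin⟩ := exists_min_image {w ∈ V | w.2 = i.1.eval w.1 ∧ i.2.1 < w.1} Prod.fst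
      ⟨w, mem_filter.2 ⟨hw, hwc, hlt⟩⟩
    obtain ⟨hu, huc, hlt⟩ := mem_filter.1 hu
    have hleft : (i.2.1, i.1.eval i.2.1) = i.2 := Prod.ext rfl hvc.symm
    have hright : (u.1, i.1.eval u.1) = u := Prod.ext rfl huc.symm
    refine mem_image.2 ⟨⟨i.1, i.2.1, u.1⟩, mem_edges.2 ⟨hc, hlt, ?_, ?_, ?_⟩, Prod.ext rfl hleft⟩
    · exact hleft.symm ▸ hv
    · exact hright.symm ▸ hu
    · exact fun v hv hvu hvc => (hmin v (mem_filter.2 ⟨hv, hvc, hvu.1⟩)).not_gt hvu.2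
  have card_last : #{i ∈ incidences G V | ¬hasNext i} ≤ #G := by
    refine card_le_card_of_injOn Prod.fst (fun i hi => ?_) ?_
    · exact (mem_incidences.1 (mem_filter.1 (mem_coe.1 hi)).1).1.1
    rintro ⟨c, v⟩ hv ⟨_, v'⟩ hv' rfl
    obtain ⟨hv, hlast⟩ := mem_filter.1 (mem_coe.1 hv)
    obtain ⟨hv', hlast'⟩ := mem_filter.1 (mem_coe.1 hv')
    obtain ⟨⟨-, hvV⟩, hvc⟩ := mem_incidences.1 hv
    obtain ⟨⟨-, hvV'⟩, hvc'⟩ := mem_incidences.1 hv'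
    have hfst : v.1 = v'.1 := le_antisymm (not_lt.1 fun hlt => hlast' ⟨v, hvV, hvc, hlt⟩)
      (not_lt.1 fun hlt => hlast ⟨v', hvV', hvc', hlt⟩)
    exact Prod.ext rfl (Prod.ext hfst (by rw [hvc, hvc', hfst]))
  rw [← card_filter_add_card_filter_not (s := incidences G V) hasNext]
  lia

/-- Two crossing edges are determined by their curves and the abscissa of the crossing. -/
lemma card_crossingPairs_le (hE : ∀ e ∈ E, IsEdge G V e) : #(crossingPairs E) ≤ 2 * #G ^ 2 := by
  classical
  have hcross : ∀ i ∈ crossingPairs E, (IsEdge G V i.1 ∧ IsEdge G V i.2) ∧ i.1.Crosses i.2 :=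
    fun i hi => (mem_filter.1 hi).imp_left fun h => (mem_product.1 h).imp (hE _) (hE _)
  choose! x hx hxeq using fun i hi => (hcross i hi).2.2
  have hinj : ∀ i ∈ crossingPairs E, ∀ j ∈ crossingPairs E, curvePair i = curvePair j → i ≠ j →
      x i ≠ x j := fun i hi j hj hc hij hxij => by
    obtain ⟨hi₁, hi₂⟩ := (hcross i hi).1
    obtain ⟨hj₁, hj₂⟩ := (hcross j hj).1
    exact hij (Prod.ext
      (hi₁.eq_of_mem_interior hj₁ (congrArg Prod.fst hc) ⟨(hx i hi).1, hxij ▸ (hx j hj).1⟩)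
      (hi₂.eq_of_mem_interior hj₂ (congrArg Prod.snd hc) ⟨(hx i hi).2, hxij ▸ (hx j hj).2⟩))
  have hfiber : ∀ b ∈ (crossingPairs E).image curvePair,
      #{i ∈ crossingPairs E | curvePair i = b} ≤ 2 := by
    rintro ⟨c, d⟩ -
    by_contra! hthree
    obtain ⟨i, hi, j, hj, k, hk, hij, hik, hjk⟩ := two_lt_card.1 hthree
    rw [mem_filter] at hi hj hk
    obtain ⟨⟨hi, hci⟩, ⟨hj, hcj⟩, hk, hck⟩ := And.intro hi (And.intro hj hk)
    have heq : ∀ l ∈ crossingPairs E, curvePair l = (c, d) → c.eval (x l) = d.eval (x l) := by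
      rintro l hl ⟨rfl, rfl⟩
      exact hxeq l hl
    have hcd : c = d := Quad.eq_of_eval_eq_three
      (hinj i hi j hj (hci.trans hcj.symm) hij) (hinj i hi k hk (hci.trans hck.symm) hik)
      (hinj j hj k hk (hcj.trans hck.symm) hjk) (heq i hi hci) (heq j hj hcj) (heq k hk hck)
    obtain ⟨⟨hi₁, hi₂⟩, hne, -⟩ := hcross i hi
    exact hne (hi₁.eq_of_mem_interior hi₂
      ((congrArg Prod.fst hci).trans (hcd.trans (congrArg Prod.snd hci).symm)) (hx i hi))
  refine (card_le_mul_card_image _ 2 hfiber).trans (Nat.mul_le_mul_left 2 ?_)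
  rw [sq, ← card_product]
  refine card_le_card (image_subset_iff.2 fun i hi => mem_product.2 ?_)
  exact (hcross i hi).1.imp IsEdge.curve_mem IsEdge.curve_mem

end Edges

/-- The arcs `e` and `f` bound a lens, `e` from below and `f` from above. -/
def Arc.Lens (e f : Arc) : Prop :=
  f.curve.1 < e.curve.1 ∧ ∃ a b, a < b ∧ a ∈ Set.Icc e.lo e.hi ∩ Set.Icc f.lo f.hi ∧
    b ∈ Set.Icc e.lo e.hi ∩ Set.Icc f.lo f.hi ∧ e.eval a = f.eval a ∧ e.eval b = f.eval b

namespace Arc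

variable {e f : Arc} {a b x : ℝ}

lemma lens_irrefl (e : Arc) : ¬e.Lens e := fun h => h.1.false

lemma lens_or_lens (hne : e.curve ≠ f.curve) (hab : a < b)
    (ha : a ∈ Set.Icc e.lo e.hi ∩ Set.Icc f.lo f.hi)
    (hb : b ∈ Set.Icc e.lo e.hi ∩ Set.Icc f.lo f.hi)
    (hea : e.eval a = f.eval a) (heb : e.eval b = f.eval b) : e.Lens f ∨ f.Lens e := by
  rcases (Quad.leading_ne_of_ne hne hab.ne hea heb).lt_or_gt with h | h
  · exact Or.inr ⟨h, a, b, hab, ha.symm, hb.symm, hea.symm, heb.symm⟩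
  · exact Or.inl ⟨h, a, b, hab, ha, hb, hea, heb⟩

lemma Lens.exists_eval_lt (h : e.Lens f) :
    ∃ t ∈ Set.Ioo e.lo e.hi ∩ Set.Ioo f.lo f.hi, e.eval t < f.eval t := by
  obtain ⟨hlead, a, b, hab, ha, hb, hea, heb⟩ := h
  obtain ⟨t, hat, htb⟩ := exists_between hab
  refine ⟨t, ⟨⟨ha.1.1.trans_lt hat, htb.trans_le hb.1.2⟩, ha.2.1.trans_lt hat,
    htb.trans_le hb.2.2⟩, sub_neg.1 ?_⟩
  rw [Quad.eval_sub_eval_of_eval_eq hab.ne hea heb]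
  exact mul_neg_of_pos_of_neg (sub_pos.2 hlead)
    (mul_neg_of_pos_of_neg (sub_pos.2 hat) (sub_neg.2 htb))

lemma Lens.eval_lt_of_notMem (h : e.Lens f)
    (hx : x ∉ Set.Icc e.lo e.hi ∩ Set.Icc f.lo f.hi) : f.eval x < e.eval x := by
  obtain ⟨hlead, a, b, hab, ha, hb, hea, heb⟩ := h
  refine sub_pos.1 ?_
  rw [Quad.eval_sub_eval_of_eval_eq hab.ne hea heb]
  refine mul_pos (sub_pos.2 hlead) ?_
  rcases lt_or_ge x a with hxa | hax
  · exact mul_pos_of_neg_of_neg (sub_neg.2 hxa) (sub_neg.2 (hxa.trans hab))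
  · have hbx : b < x := not_le.1 fun hxb =>
      hx ⟨⟨ha.1.1.trans hax, hxb.trans hb.1.2⟩, ha.2.1.trans hax, hxb.trans hb.2.2⟩
    exact mul_pos (sub_pos.2 (hab.trans hbx)) (sub_pos.2 hbx)

end Arc

section LensFree

variable {G : Finset Quad} {V : Finset (ℝ × ℝ)} {E : Finset Arc} {p : ℝ}

lemma isDrawing_of_not_lens (hE : ∀ e ∈ E, IsEdge G V e) (hfree : ∀ e ∈ E, ∀ f ∈ E, ¬e.Lens f) :
    IsDrawing V E where
  lo_lt_hi e he := (hE e he).lo_lt_hi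
  leftPt_mem e he := (hE e he).leftPt_mem
  rightPt_mem e he := (hE e he).rightPt_mem
  vertex_ne e he := (hE e he).vertex_ne
  simple e he f hf hl hr := by
    obtain ⟨hlo, hel⟩ := Prod.ext_iff.1 hl
    obtain ⟨hhi, her⟩ := Prod.ext_iff.1 hr
    change e.lo = f.lo at hlo
    change e.hi = f.hi at hhi
    simp only [Arc.leftPt, Arc.rightPt, ← hlo, ← hhi] at hel her
    have hle := (hE e he).lo_lt_hi.le
    by_contra hne
    rcases Arc.lens_or_lens (fun hc => hne (Arc.ext hc hlo hhi)) (hE e he).lo_lt_hi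
      ⟨⟨le_rfl, hle⟩, hlo.ge, hhi ▸ hle⟩ ⟨⟨hle, le_rfl⟩, hlo ▸ hle, hhi.le⟩ hel her with h | h
    · exact hfree e he f hf h
    · exact hfree f hf e he h

lemma disjoint_ends_of_not_lens (hE : ∀ e ∈ E, IsEdge G V e)
    (hfree : ∀ e ∈ E, ∀ f ∈ E, ¬e.Lens f) {e f : Arc} (he : e ∈ E) (hf : f ∈ E)
    (hcross : e.Crosses f) : Disjoint e.ends f.ends := by
  obtain ⟨hne, x, hx, hxeq⟩ := hcross
  have hc : e.curve ≠ f.curve := fun hc => hne ((hE e he).eq_of_mem_interior (hE f hf) hc hx)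
  have hxI := Set.inter_subset_inter Set.Ioo_subset_Icc_self Set.Ioo_subset_Icc_self hx
  have hle := (hE e he).lo_lt_hi.le
  have no_lens : ¬(e.Lens f ∨ f.Lens e) := not_or.2 ⟨hfree e he f hf, hfree f hf e he⟩
  have hleft : e.leftPt ≠ f.leftPt := fun h => by
    obtain ⟨hlo, heq⟩ := Prod.ext_iff.1 h
    change e.lo = f.lo at hlo
    simp only [Arc.leftPt, ← hlo] at heq
    exact no_lens (Arc.lens_or_lens hc hx.1.1
      ⟨⟨le_rfl, hle⟩, hlo.ge, hlo ▸ hxI.2.1.trans hxI.2.2⟩ hxI heq hxeq)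
  have hright : e.rightPt ≠ f.rightPt := fun h => by
    obtain ⟨hhi, heq⟩ := Prod.ext_iff.1 h
    change e.hi = f.hi at hhi
    simp only [Arc.rightPt, ← hhi] at heq
    exact no_lens (Arc.lens_or_lens hc hx.1.2 hxI
      ⟨⟨hle, le_rfl⟩, hhi ▸ hxI.2.1.trans hxI.2.2, hhi.le⟩ hxeq heq)
  have hleft_right : e.leftPt ≠ f.rightPt := fun h =>
    (hx.1.1.trans hx.2.2).ne (congrArg Prod.fst h)
  have hright_left : e.rightPt ≠ f.leftPt := fun h =>
    (hx.2.1.trans hx.1.2).ne' (congrArg Prod.fst h)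
  simp [Arc.ends, hleft.symm, hright.symm, hleft_right.symm, hright_left.symm]

lemma card_mul_sq_le_of_not_lens (hE : ∀ e ∈ E, IsEdge G V e)
    (hfree : ∀ e ∈ E, ∀ f ∈ E, ¬e.Lens f) (h0 : 0 ≤ p) (h1 : p ≤ 1) :
    #E * p ^ 2 ≤ 3 * (#V * p) + 2 * (#G : ℝ) ^ 2 * p ^ 4 := by
  have hcross : (#(crossingPairs E) : ℝ) ≤ 2 * (#G : ℝ) ^ 2 := by
    exact_mod_cast card_crossingPairs_le hE
  have hcard := (isDrawing_of_not_lens hE hfree).card_mul_sq_le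
    (fun e he f hf => disjoint_ends_of_not_lens hE hfree he hf) h0 h1
  exact hcard.trans (by gcongr)

end LensFree

namespace IsMatching

variable {G : Finset Quad} {V : Finset (ℝ × ℝ)} {M : Finset (Arc × Arc)} {i j : Arc × Arc} {t : ℝ}

lemma eval_lt_of_fst_curve_eq (hM : IsMatching Arc.Lens (edges G V) M) (hi : i ∈ M) (hj : j ∈ M)
    (hne : i ≠ j) (hc : i.1.curve = j.1.curve) (ht : t ∈ Set.Ioo i.1.lo i.1.hi) :
    j.2.eval t < j.1.eval t :=
  (hM.rel j hj).eval_lt_of_notMem fun hmem =>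
    (mem_edges.1 (hM.fst_mem i hi)).notMem_Icc_of_mem_interior (mem_edges.1 (hM.fst_mem j hj)) hc
      (hM.injOn_fst.ne hi hj hne) ht hmem.1

lemma eval_lt_of_snd_curve_eq (hM : IsMatching Arc.Lens (edges G V) M) (hi : i ∈ M) (hj : j ∈ M)
    (hne : i ≠ j) (hc : i.2.curve = j.2.curve) (ht : t ∈ Set.Ioo i.2.lo i.2.hi) :
    j.2.eval t < j.1.eval t :=
  (hM.rel j hj).eval_lt_of_notMem fun hmem =>
    (mem_edges.1 (hM.snd_mem i hi)).notMem_Icc_of_mem_interior (mem_edges.1 (hM.snd_mem j hj)) hc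
      (hM.injOn_snd.ne hi hj hne) ht hmem.2

lemma injOn_curvePair (hM : IsMatching Arc.Lens (edges G V) M) :
    Set.InjOn curvePair (M : Set (Arc × Arc)) := by
  intro i hi j hj hij
  by_contra hne
  obtain ⟨t, ht, hlt⟩ := (hM.rel i hi).exists_eval_lt
  have hfst : i.1.curve = j.1.curve := congrArg Prod.fst hij
  have hsnd : i.2.curve = j.2.curve := congrArg Prod.snd hij
  have hgt := hM.eval_lt_of_fst_curve_eq hi hj hne hfst ht.1
  rw [Arc.eval, Arc.eval, ← hfst, ← hsnd] at hgt
  exact hlt.asymm hgt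

open Classical in
lemma exists_lensFamily (hM : IsMatching Arc.Lens (edges G V) M) :
    ∃ τ, LensFamily G (M.image curvePair) τ := by
  choose! t ht hlt using fun i hi => (hM.rel i hi).exists_eval_lt
  have hex : ∀ b ∈ M.image curvePair, ∃ i ∈ M, curvePair i = b := fun b hb => mem_image.1 hb
  have : Nonempty (Arc × Arc) := ⟨⟨0, 0, 0⟩, ⟨0, 0, 0⟩⟩
  choose! pre hpre hpre_eq using hex
  have hfst : ∀ b ∈ M.image curvePair, (pre b).1.curve = b.1 := fun b hb =>
    congrArg Prod.fst (hpre_eq b hb)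
  have hsnd : ∀ b ∈ M.image curvePair, (pre b).2.curve = b.2 := fun b hb =>
    congrArg Prod.snd (hpre_eq b hb)
  refine ⟨fun b => t (pre b), ?_, fun u x hux => ?_, fun u x y hux huy hne => ?_,
    fun u v x hux hvx hne => ?_⟩
  · refine image_subset_iff.2 fun i hi => mem_product.2 ?_
    exact ⟨(mem_edges.1 (hM.fst_mem i hi)).curve_mem, (mem_edges.1 (hM.snd_mem i hi)).curve_mem⟩
  · have h := hlt _ (hpre _ hux)
    rwa [Arc.eval, Arc.eval, hfst _ hux, hsnd _ hux] at h
  · have hne' : pre (u, x) ≠ pre (u, y) := fun h => hne.symm <|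
      (hsnd _ hux).symm.trans ((congrArg (·.2.curve) h).trans (hsnd _ huy))
    have h := hM.eval_lt_of_fst_curve_eq (hpre _ hux) (hpre _ huy) hne'
      ((hfst _ hux).trans (hfst _ huy).symm) (ht _ (hpre _ hux)).1
    rwa [Arc.eval, Arc.eval, hfst _ huy, hsnd _ huy] at h
  · have hne' : pre (u, x) ≠ pre (v, x) := fun h => hne.symm <|
      (hfst _ hux).symm.trans ((congrArg (·.1.curve) h).trans (hfst _ hvx))
    have h := hM.eval_lt_of_snd_curve_eq (hpre _ hux) (hpre _ hvx) hne'
      ((hsnd _ hux).trans (hsnd _ hvx).symm) (ht _ (hpre _ hux)).2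
    rwa [Arc.eval, Arc.eval, hfst _ hvx, hsnd _ hvx] at h

lemma card_le (hM : IsMatching Arc.Lens (edges G V) M) :
    (#M : ℝ) ≤ 2 * #G + 13 * (#G * √(#G : ℝ) * (Nat.log 2 #G + 2)) := by
  classical
  have hpos : 0 ≤ (#G : ℝ) * √(#G : ℝ) * (Nat.log 2 #G + 2) := by positivity
  rcases le_or_gt (2 * #G) #M with hlarge | hsmall
  · obtain ⟨τ, hΛ⟩ := hM.exists_lensFamily
    have hcard := card_image_of_injOn hM.injOn_curvePair
    have hsq := hΛ.card_sq_le (hcard ▸ hlarge)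
    have hsquare : ((#G : ℝ) * √(#G : ℝ) * (Nat.log 2 #G + 2)) ^ 2 =
        (Nat.log 2 #G + 2) ^ 2 * (#G : ℝ) ^ 3 := by
      rw [mul_pow, mul_pow, Real.sq_sqrt (Nat.cast_nonneg _)]
      ring
    have hle : (#M : ℝ) ≤ 13 * (#G * √(#G : ℝ) * (Nat.log 2 #G + 2)) := by
      refine (abs_le_of_sq_le_sq' ?_ (mul_nonneg (by norm_num) hpos)).2
      rw [hcard] at hsq
      rw [mul_pow, hsquare]
      linarith [mul_nonneg (sq_nonneg ((Nat.log 2 #G : ℝ) + 2)) (pow_nonneg (#G).cast_nonneg' 3)]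
    linarith [(Nat.cast_nonneg #G : (0 : ℝ) ≤ #G)]
  · have hle : (#M : ℝ) ≤ 2 * #G := by exact_mod_cast hsmall.le
    linarith

end IsMatching

/-- The part of the bound on the number of incidences between points and `M` quadratics that does
not depend on the number of points; `q` is the reciprocal of the sampling probability. -/
def incidenceError (M : ℕ) (q : ℝ) : ℝ :=
  5 * M + 2 * (M : ℝ) ^ 2 / q ^ 2 + 26 * (M * √M * (Nat.log 2 M + 2))

lemma incidenceError_nonneg (M : ℕ) (q : ℝ) : 0 ≤ incidenceError M q := by
  unfold incidenceError
  positivity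

lemma incidenceError_mono (q : ℝ) : Monotone fun M => incidenceError M q := by
  intro M N hMN
  have hcast : (M : ℝ) ≤ N := Nat.cast_le.2 hMN
  have hlog : (Nat.log 2 M : ℝ) ≤ Nat.log 2 N := Nat.cast_le.2 (Nat.log_mono_right hMN)
  have hsqrt := Real.sqrt_le_sqrt hcast
  simp only [incidenceError]
  gcongr

/-- A maximal matching removes all lenses from the arrangement at a cost of `IsMatching.card_le`;
what remains is a simple drawing with at most `2 * #G ^ 2` crossings. -/
theorem card_incidences_le (G : Finset Quad) (V : Finset (ℝ × ℝ)) {q : ℝ} (hq : 1 ≤ q) :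
    (#(incidences G V) : ℝ) ≤ 3 * #V * q + incidenceError #G q := by
  obtain ⟨M, E, hM, hE, hfree, hcard⟩ :=
    exists_isMatching_card_le Arc.Lens Arc.lens_irrefl (edges G V)
  have hq0 := zero_lt_one.trans_le hq
  have lensfree : (#E : ℝ) ≤ 3 * #V * q + 2 * (#G : ℝ) ^ 2 / q ^ 2 := by
    have h := card_mul_sq_le_of_not_lens (fun e he => mem_edges.1 (hE he)) hfree
      (inv_nonneg.2 hq0.le) (inv_le_one_of_one_le₀ hq)
    calc (#E : ℝ) = #E * q⁻¹ ^ 2 * q ^ 2 := by field_simp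
      _ ≤ (3 * (#V * q⁻¹) + 2 * (#G : ℝ) ^ 2 * q⁻¹ ^ 4) * q ^ 2 := by gcongr
      _ = 3 * #V * q + 2 * (#G : ℝ) ^ 2 / q ^ 2 := by field_simp
  have hincidences : (#(incidences G V) : ℝ) ≤ #G + #(edges G V) := by
    exact_mod_cast card_incidences_le_card_edges
  have hedges : (#(edges G V) : ℝ) ≤ #E + 2 * #M := by exact_mod_cast hcard
  unfold incidenceError
  linarith [hM.card_le]

/-! ### Haussler's packing lemma -/

section OneInclusion

variable {β : Type*} [DecidableEq β] {T s : Finset β} {a : β}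

/-- The weight of the one-inclusion graph of a weighted family `w` of subsets of `T`: every pair
`u`, `insert h u` of subsets counts with the smaller of its two weights. -/
def edgeWeight (T : Finset β) (w : Finset β → ℕ) : ℕ :=
  ∑ h ∈ T, ∑ u ∈ (T.erase h).powerset, min (w u) (w (insert h u))

lemma edgeWeight_insert_le (ha : a ∉ T) (w : Finset β → ℕ) :
    edgeWeight (insert a T) w ≤ ∑ u ∈ T.powerset, min (w u) (w (insert a u)) +
      (edgeWeight T (fun u => max (w u) (w (insert a u))) +
        edgeWeight T (fun u => min (w u) (w (insert a u)))) := by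
  unfold edgeWeight
  rw [sum_insert ha, erase_insert ha, ← sum_add_distrib]
  gcongr with h hh
  have hah : a ≠ h := fun hah => ha (hah ▸ hh)
  rw [erase_insert_of_ne hah, sum_powerset_insert (fun hmem => ha (mem_of_mem_erase hmem)),
    ← sum_add_distrib, ← sum_add_distrib]
  refine sum_le_sum fun u _ => ?_
  rw [insert_comm h a u]
  dsimp only
  omega

lemma shatters_of_shatters_max (ha : a ∉ T) {w : Finset β → ℕ}
    (hs : ({u ∈ T.powerset | 0 < max (w u) (w (insert a u))} : Finset _).Shatters s) :
    ({u ∈ (insert a T).powerset | 0 < w u} : Finset _).Shatters s := by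
  obtain ⟨v, hv, hsv⟩ := hs.exists_superset
  have has : a ∉ s := fun h => ha (mem_powerset.1 (mem_filter.1 hv).1 (hsv h))
  intro t ht
  obtain ⟨u, hu, hut⟩ := hs ht
  obtain ⟨huT, hpos⟩ := mem_filter.1 hu
  have huT' := (mem_powerset.1 huT).trans (subset_insert a T)
  rcases lt_max_iff.1 hpos with hpos | hpos
  · exact ⟨u, mem_filter.2 ⟨mem_powerset.2 huT', hpos⟩, hut⟩
  · refine ⟨insert a u, mem_filter.2 ⟨mem_powerset.2 ?_, hpos⟩, ?_⟩
    · exact insert_subset (mem_insert_self a T) huT'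
    · rw [inter_insert_of_notMem has, hut]

lemma shatters_insert_of_shatters_min (ha : a ∉ T) {w : Finset β → ℕ}
    (hs : ({u ∈ T.powerset | 0 < min (w u) (w (insert a u))} : Finset _).Shatters s) :
    a ∉ s ∧ ({u ∈ (insert a T).powerset | 0 < w u} : Finset _).Shatters (insert a s) := by
  obtain ⟨v, hv, hsv⟩ := hs.exists_superset
  refine ⟨fun h => ha (mem_powerset.1 (mem_filter.1 hv).1 (hsv h)), fun t ht => ?_⟩
  obtain ⟨u, hu, hut⟩ := hs (subset_insert_iff.1 ht)
  obtain ⟨huT, hpos⟩ := mem_filter.1 hu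
  obtain ⟨hpos, hpos_insert⟩ := lt_min_iff.1 hpos
  have huT' := (mem_powerset.1 huT).trans (subset_insert a T)
  by_cases hat : a ∈ t
  · refine ⟨insert a u, mem_filter.2 ⟨mem_powerset.2 ?_, hpos_insert⟩, ?_⟩
    · exact insert_subset (mem_insert_self a T) huT'
    · rw [← insert_inter_distrib, hut, insert_erase hat]
  · refine ⟨u, mem_filter.2 ⟨mem_powerset.2 huT', hpos⟩, ?_⟩
    rw [insert_inter_of_notMem fun hau => ha (mem_powerset.1 huT hau), hut, erase_eq_of_notMem hat]

/-- Haussler's edge bound: splitting the subsets of `insert a T` according to whether they contain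
`a`, the pointwise maximum of the two halves has dimension at most `d` and the minimum at most
`d - 1`. -/
theorem edgeWeight_le (T : Finset β) {d : ℕ} {w : Finset β → ℕ}
    (hd : ∀ s, ({u ∈ T.powerset | 0 < w u} : Finset _).Shatters s → #s ≤ d) :
    edgeWeight T w ≤ d * ∑ u ∈ T.powerset, w u := by
  induction T using Finset.induction_on generalizing d w with
  | empty => simp [edgeWeight]
  | insert a T ha ih =>
    have hmax := ih fun s hs => hd s (shatters_of_shatters_max ha hs)
    have hsum : ∑ u ∈ (insert a T).powerset, w u =
        ∑ u ∈ T.powerset, max (w u) (w (insert a u)) +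
          ∑ u ∈ T.powerset, min (w u) (w (insert a u)) := by
      rw [sum_powerset_insert ha, ← sum_add_distrib, ← sum_add_distrib]
      exact sum_congr rfl fun u _ => (max_add_min _ _).symm
    have card_lt : ∀ s, ({u ∈ T.powerset | 0 < min (w u) (w (insert a u))} : Finset _).Shatters s →
        #s + 1 ≤ d := fun s hs => by
      obtain ⟨has, hs⟩ := shatters_insert_of_shatters_min ha hs
      simpa only [card_insert_of_notMem has] using hd _ hs
    have hmin : ∑ u ∈ T.powerset, min (w u) (w (insert a u)) +
        edgeWeight T (fun u => min (w u) (w (insert a u))) ≤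
          d * ∑ u ∈ T.powerset, min (w u) (w (insert a u)) := by
      cases d with
      | zero =>
        have hzero : ∑ u ∈ T.powerset, min (w u) (w (insert a u)) = 0 := by
          refine sum_eq_zero fun u hu => Nat.eq_zero_of_not_pos fun hpos => ?_
          exact absurd (card_lt ∅ (shatters_empty.2 ⟨u, mem_filter.2 ⟨hu, hpos⟩⟩)) (by simp)
        have := ih (d := 0) fun s hs => (Nat.le_succ _).trans (card_lt s hs)
        omega
      | succ d =>
        have := ih fun s hs => Nat.le_of_succ_le_succ (card_lt s hs)
        linarith
    rw [hsum, mul_add]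
    linarith [edgeWeight_insert_le ha w]

end OneInclusion

section Packing

variable {α β : Type*} [DecidableEq β] (P : Finset α) (F : α → Finset β) {T : Finset β} {d : ℕ}

/-- The number of points of `P` in a minority with respect to the test `h`, where each point is only
compared with the points which have the same trace on the sample `B`. -/
def minorityCount (B : Finset β) (h : β) : ℕ :=
  ∑ u ∈ B.powerset, min #{p ∈ P | F p ∩ B = u ∧ h ∉ F p} #{p ∈ P | F p ∩ B = u ∧ h ∈ F p}

variable {P F}

lemma minorityCount_eq_zero {B : Finset β} {h : β} (hB : h ∈ B) : minorityCount P F B h = 0 := by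
  refine sum_eq_zero fun u _ => Nat.min_eq_zero_iff.2 ?_
  simp only [card_eq_zero, filter_eq_empty_iff]
  by_cases hu : h ∈ u
  · exact Or.inl fun p _ hp => hp.2 (mem_inter.1 (hp.1.symm ▸ hu)).1
  · exact Or.inr fun p _ hp => hu (hp.1 ▸ mem_inter.2 ⟨hp.2, hB⟩)

lemma sum_minorityCount_erase (A : Finset β) :
    ∑ h ∈ A, minorityCount P F (A.erase h) h = edgeWeight A fun u => #{p ∈ P | F p ∩ A = u} := by
  refine sum_congr rfl fun h hA => sum_congr rfl fun u hu => ?_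
  have hhu : h ∉ u := fun h' => notMem_erase h A (mem_powerset.1 hu h')
  congr 2
  · refine filter_congr fun p _ => ?_
    simp only [Finset.ext_iff, mem_inter, mem_erase]
    grind
  · refine filter_congr fun p _ => ?_
    simp only [Finset.ext_iff, mem_inter, mem_erase, mem_insert]
    grind

lemma sum_minorityCount_erase_le (hd : (P.image F).vcDim ≤ d) (A : Finset β) :
    ∑ h ∈ A, minorityCount P F (A.erase h) h ≤ d * #P := by
  have hsum : ∑ u ∈ A.powerset, #{p ∈ P | F p ∩ A = u} = #P :=
    (card_eq_sum_card_fiberwise fun p _ => mem_powerset.2 inter_subset_right).symm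
  rw [sum_minorityCount_erase, ← hsum]
  refine edgeWeight_le A fun s hs => le_trans (Shatters.card_le_vcDim fun t ht => ?_) hd
  obtain ⟨v, hv, hsv⟩ := hs.exists_superset
  have hsA : s ⊆ A := hsv.trans (mem_powerset.1 (mem_filter.1 hv).1)
  obtain ⟨u, hu, rfl⟩ := hs ht
  obtain ⟨p, hp⟩ := card_pos.1 (mem_filter.1 hu).2
  obtain ⟨hpP, rfl⟩ := mem_filter.1 hp
  exact ⟨F p, mem_image_of_mem F hpP, by rw [inter_comm (F p), ← inter_assoc,
    inter_eq_left.2 hsA]⟩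

lemma sum_powersetCard_succ_erase {M : Type*} [AddCommMonoid M] (T : Finset β) (a : ℕ)
    (f : Finset β → β → M) :
    ∑ A ∈ T.powersetCard (a + 1), ∑ h ∈ A, f (A.erase h) h =
      ∑ B ∈ T.powersetCard a, ∑ h ∈ T \ B, f B h := by
  rw [sum_sigma', sum_sigma']
  refine sum_bij' (fun x _ => ⟨x.1.erase x.2, x.2⟩) (fun x _ => ⟨insert x.2 x.1, x.2⟩)
    ?_ ?_ ?_ ?_ ?_
  · rintro ⟨A, h⟩ hx
    simp only [mem_sigma, mem_powersetCard, mem_sdiff] at hx ⊢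
    exact ⟨⟨(erase_subset _ _).trans hx.1.1, by rw [card_erase_of_mem hx.2, hx.1.2]; rfl⟩,
      hx.1.1 hx.2, notMem_erase _ _⟩
  · rintro ⟨B, h⟩ hx
    simp only [mem_sigma, mem_powersetCard, mem_sdiff] at hx ⊢
    exact ⟨⟨insert_subset hx.2.1 hx.1.1, by rw [card_insert_of_notMem hx.2.2, hx.1.2]⟩,
      mem_insert_self _ _⟩
  · rintro ⟨A, h⟩ hx
    simp [insert_erase (mem_sigma.1 hx).2]
  · rintro ⟨B, h⟩ hx
    simp [erase_insert (mem_sdiff.1 (mem_sigma.1 hx).2).2]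
  · exact fun _ _ => rfl

lemma exists_sum_minorityCount_le (hd : (P.image F).vcDim ≤ d) (T : Finset β) (a : ℕ) :
    ∃ B, #B ≤ a ∧ (a + 1) * ∑ h ∈ T, minorityCount P F B h ≤ d * #P * #T := by
  classical
  rcases le_or_gt #T a with haT | haT
  · exact ⟨T, haT, by simp [sum_eq_zero fun h (hT : h ∈ T) => minorityCount_eq_zero hT]⟩
  have htotal : ∑ B ∈ T.powersetCard a, ∑ h ∈ T, minorityCount P F B h ≤
      (#T).choose (a + 1) * (d * #P) := by
    calc ∑ B ∈ T.powersetCard a, ∑ h ∈ T, minorityCount P F B h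
        = ∑ B ∈ T.powersetCard a, ∑ h ∈ T \ B, minorityCount P F B h :=
          sum_congr rfl fun B _ => (sum_subset sdiff_subset fun h hT hTB =>
            minorityCount_eq_zero (by simpa [hT] using hTB)).symm
      _ = ∑ A ∈ T.powersetCard (a + 1), ∑ h ∈ A, minorityCount P F (A.erase h) h :=
          (sum_powersetCard_succ_erase T a _).symm
      _ ≤ ∑ _A ∈ T.powersetCard (a + 1), d * #P :=
          sum_le_sum fun A _ => sum_minorityCount_erase_le hd A
      _ = (#T).choose (a + 1) * (d * #P) := by rw [sum_const, card_powersetCard, smul_eq_mul]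
  obtain ⟨B, hB, hle⟩ := exists_le_of_sum_le (powersetCard_nonempty.2 haT.le)
    (f := fun B => (a + 1) * ∑ h ∈ T, minorityCount P F B h) (g := fun _ => d * #P * #T) <| by
      rw [← mul_sum, sum_const, card_powersetCard, smul_eq_mul]
      calc (a + 1) * ∑ B ∈ T.powersetCard a, ∑ h ∈ T, minorityCount P F B h
          ≤ (a + 1) * ((#T).choose (a + 1) * (d * #P)) := by gcongr
        _ = (#T).choose a * (#T - a) * (d * #P) := by
          rw [← Nat.choose_succ_right_eq]
          ring
        _ ≤ (#T).choose a * #T * (d * #P) := by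
          gcongr
          exact Nat.sub_le _ _
        _ = (#T).choose a * (d * #P * #T) := by ring
  exact ⟨B, (mem_powersetCard.1 hB).2.le, hle⟩

lemma sum_sum_card_symmDiff (hF : ∀ p ∈ P, F p ⊆ T) :
    ∑ q ∈ P, ∑ p ∈ P, #(symmDiff (F p) (F q)) =
      ∑ h ∈ T, 2 * (#{p ∈ P | h ∉ F p} * #{p ∈ P | h ∈ F p}) := by
  have hswap : ∀ q ∈ P, ∑ p ∈ P, #(symmDiff (F p) (F q)) =
      ∑ h ∈ T, #{p ∈ P | h ∈ symmDiff (F p) (F q)} := fun q hq => by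
    refine Eq.trans ?_ (sum_card_bipartiteAbove_eq_sum_card_bipartiteBelow
      fun p h => h ∈ symmDiff (F p) (F q))
    refine sum_congr rfl fun p hp => congrArg card ?_
    rw [bipartiteAbove, filter_mem_eq_inter, eq_comm, inter_eq_right]
    exact symmDiff_subset_union.trans (union_subset (hF p hp) (hF q hq))
  rw [sum_congr rfl hswap, sum_comm]
  refine sum_congr rfl fun h _ => ?_
  have hcount : ∀ q ∈ P, #{p ∈ P | h ∈ symmDiff (F p) (F q)} =
      if h ∈ F q then #{p ∈ P | h ∉ F p} else #{p ∈ P | h ∈ F p} := fun q _ => by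
    split_ifs with hq <;> simp [mem_symmDiff, hq]
  rw [sum_congr rfl hcount, sum_ite, sum_const, sum_const, smul_eq_mul, smul_eq_mul]
  ring

lemma mul_le_add_mul_min (a b : ℕ) : a * b ≤ (a + b) * min a b := by
  rw [← min_mul_max a b, mul_comm]
  gcongr
  omega

/-- A random element of `P` disagrees on the test `h` with `2 * c₀ * c₁ / (c₀ + c₁)` elements on
average, where `c₀` and `c₁` count the elements failing and passing `h`. -/
lemma exists_sum_card_symmDiff_le (hP : P.Nonempty) (hF : ∀ p ∈ P, F p ⊆ T) :
    ∃ q ∈ P, ∑ p ∈ P, #(symmDiff (F p) (F q)) ≤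
      2 * ∑ h ∈ T, min #{p ∈ P | h ∉ F p} #{p ∈ P | h ∈ F p} := by
  refine exists_le_of_sum_le hP ?_
  rw [sum_sum_card_symmDiff hF, sum_const, smul_eq_mul, mul_left_comm, ← mul_sum, mul_sum _ _ #P]
  refine Nat.mul_le_mul_left 2 (sum_le_sum fun h _ => ?_)
  refine (mul_le_add_mul_min _ _).trans_eq ?_
  rw [add_comm, card_filter_add_card_filter_not]

lemma card_image_inter_le (hd : (P.image F).vcDim ≤ d) (B : Finset β) :
    #(P.image fun p => F p ∩ B) ≤ ∑ k ∈ range (d + 1), (#B).choose k := by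
  have hsub : (P.image fun p => F p ∩ B).shatterer ⊆
      (range (d + 1)).biUnion fun k => B.powersetCard k := fun s hs => by
    have hs := mem_shatterer.1 hs
    obtain ⟨v, hv, hsv⟩ := hs.exists_superset
    obtain ⟨_, _, rfl⟩ := mem_image.1 hv
    have hsB : s ⊆ B := hsv.trans inter_subset_right
    have hsF : (P.image F).Shatters s := fun t ht => by
      obtain ⟨u, hu, rfl⟩ := hs ht
      obtain ⟨p, hp, rfl⟩ := mem_image.1 hu
      exact ⟨F p, mem_image_of_mem F hp, by rw [inter_comm (F p), ← inter_assoc,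
        inter_eq_left.2 hsB]⟩
    exact mem_biUnion.2 ⟨#s, mem_range_succ_iff.2 (hsF.card_le_vcDim.trans hd),
      mem_powersetCard.2 ⟨hsB, rfl⟩⟩
  refine (card_le_card_shatterer _).trans ((card_le_card hsub).trans ?_)
  exact card_biUnion_le.trans_eq (sum_congr rfl fun k _ => card_powersetCard k B)

/-- Haussler's packing argument: points with the same trace on a good sample `B` share a center. -/
theorem exists_center_of_vcDim_le [DecidableEq α] (hd : (P.image F).vcDim ≤ d)
    (hF : ∀ p ∈ P, F p ⊆ T) (a : ℕ) :
    ∃ center : α → α, #(P.image center) ≤ ∑ k ∈ range (d + 1), a.choose k ∧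
      (a + 1) * ∑ p ∈ P, #(symmDiff (F p) (F (center p))) ≤ 2 * d * #P * #T := by
  rcases P.eq_empty_or_nonempty with rfl | ⟨p₀, -⟩
  · exact ⟨id, by simp, by simp⟩
  have : Nonempty α := ⟨p₀⟩
  obtain ⟨B, hBa, hB⟩ := exists_sum_minorityCount_le hd T a
  have hclass : ∀ u ∈ P.image fun p => F p ∩ B, ∃ q, ∑ p ∈ P with F p ∩ B = u,
      #(symmDiff (F p) (F q)) ≤ 2 * ∑ h ∈ T, min #{p ∈ P | F p ∩ B = u ∧ h ∉ F p}
        #{p ∈ P | F p ∩ B = u ∧ h ∈ F p} := fun u hu => by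
    obtain ⟨p, hp, hpu⟩ := mem_image.1 hu
    obtain ⟨q, -, hq⟩ := exists_sum_card_symmDiff_le (P := {p ∈ P | F p ∩ B = u}) (F := F) (T := T)
      ⟨p, mem_filter.2 ⟨hp, hpu⟩⟩ fun p hp => hF p (mem_filter.1 hp).1
    exact ⟨q, by simpa only [filter_filter] using hq⟩
  choose! q hq using hclass
  refine ⟨fun p => q (F p ∩ B), ?_, ?_⟩
  · calc #(P.image fun p => q (F p ∩ B)) = #((P.image fun p => F p ∩ B).image q) := by
          rw [image_image]
          rfl
      _ ≤ #(P.image fun p => F p ∩ B) := card_image_le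
      _ ≤ ∑ k ∈ range (d + 1), (#B).choose k := card_image_inter_le hd B
      _ ≤ ∑ k ∈ range (d + 1), a.choose k := sum_le_sum fun k _ => Nat.choose_le_choose k hBa
  · have hsum : ∑ p ∈ P, #(symmDiff (F p) (F (q (F p ∩ B)))) ≤
        2 * ∑ h ∈ T, minorityCount P F B h := by
      rw [← sum_fiberwise_of_maps_to fun p hp => mem_image_of_mem (fun p => F p ∩ B) hp]
      calc _ ≤ ∑ u ∈ P.image fun p => F p ∩ B, 2 * ∑ h ∈ T,
            min #{p ∈ P | F p ∩ B = u ∧ h ∉ F p} #{p ∈ P | F p ∩ B = u ∧ h ∈ F p} := by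
              refine sum_le_sum fun u hu => le_trans (le_of_eq ?_) (hq u hu)
              exact sum_congr rfl fun p hp => by rw [(mem_filter.1 hp).2]
        _ = 2 * ∑ h ∈ T, ∑ u ∈ P.image fun p => F p ∩ B,
            min #{p ∈ P | F p ∩ B = u ∧ h ∉ F p} #{p ∈ P | F p ∩ B = u ∧ h ∈ F p} := by
              rw [← mul_sum, sum_comm]
        _ ≤ 2 * ∑ h ∈ T, minorityCount P F B h := by
              refine Nat.mul_le_mul_left 2 (sum_le_sum fun h _ => ?_)
              refine sum_le_sum_of_subset (image_subset_iff.2 fun p _ => ?_)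
              exact mem_powerset.2 inter_subset_right
    calc (a + 1) * ∑ p ∈ P, #(symmDiff (F p) (F (q (F p ∩ B))))
        ≤ (a + 1) * (2 * ∑ h ∈ T, minorityCount P F B h) := by gcongr
      _ = 2 * ((a + 1) * ∑ h ∈ T, minorityCount P F B h) := by ring
      _ ≤ 2 * (d * #P * #T) := by gcongr
      _ = 2 * d * #P * #T := by ring

end Packing

/-! ### Levels of signed distances -/

section HalfSpaces

variable {α β V : Type*} [DecidableEq β] [AddCommGroup V] [Module ℝ V] [FiniteDimensional ℝ V]

/-- Radon's argument: a linear relation between the normals of more than `finrank ℝ V` half-spaces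
prevents these half-spaces from being shattered. -/
lemma vcDim_image_le_finrank {P : Finset α} {F : α → Finset β} (normal : β → V)
    (φ : α → Module.Dual ℝ V)
    (hF : ∀ p p' h, h ∈ F p → h ∉ F p' → φ p' (normal h) < φ p (normal h)) :
    (P.image F).vcDim ≤ Module.finrank ℝ V := by
  refine Finset.sup_le fun s hs => not_lt.1 fun hlt => ?_
  have hs := mem_shatterer.1 hs
  have hdep : ¬LinearIndepOn ℝ normal (s : Set β) := fun hind =>
    hlt.not_ge (by simpa using LinearIndependent.fintype_card_le_finrank hind)
  obtain ⟨c, hc, h₀, hh₀, hc₀⟩ := not_linearIndepOn_finset_iff.1 hdep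
  obtain ⟨u, hu, hpos⟩ := hs (filter_subset (fun h => 0 < c h) s)
  obtain ⟨u', hu', hneg⟩ := hs (filter_subset (fun h => ¬0 < c h) s)
  obtain ⟨p, -, rfl⟩ := mem_image.1 hu
  obtain ⟨p', -, rfl⟩ := mem_image.1 hu'
  have mem_iff : ∀ h ∈ s, (h ∈ F p ↔ 0 < c h) ∧ (h ∈ F p' ↔ ¬0 < c h) := fun h hh => by
    have h1 := Finset.ext_iff.1 hpos h
    have h2 := Finset.ext_iff.1 hneg h
    simp only [mem_inter, mem_filter, hh, true_and] at h1 h2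
    exact ⟨h1, h2⟩
  have hlt : ∀ h ∈ s, c h ≠ 0 → c h * φ p' (normal h) < c h * φ p (normal h) := fun h hh hch => by
    obtain ⟨hp, hp'⟩ := mem_iff h hh
    rcases hch.lt_or_gt with hch | hch
    · have hmem : h ∉ F p := fun h' => hch.not_gt (hp.1 h')
      exact mul_lt_mul_of_neg_left (hF p' p h (hp'.2 hch.not_gt) hmem) hch
    · have hmem : h ∉ F p' := fun h' => hp'.1 h' hch
      exact mul_lt_mul_of_pos_left (hF p p' h (hp.2 hch) hmem) hch
  have hzero : ∀ x : α, ∑ h ∈ s, c h * φ x (normal h) = 0 := fun x => by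
    simpa using congrArg (φ x) hc
  refine (sum_lt_sum (fun h hh => ?_) ⟨h₀, hh₀, hlt h₀ hh₀ hc₀⟩).ne
    ((hzero p').trans (hzero p).symm)
  by_cases hch : c h = 0
  · simp [hch]
  · exact (hlt h hh hch).le

end HalfSpaces

section SignedDistance

/-- The signed distance from the point `p` to the line `(1 - t ^ 2) * x + 2 * t * y = s`, which is
encoded by `l = (t, s)`; its normal vector has norm `1 + t ^ 2`. -/
def signedLineDist (p l : ℝ × ℝ) : ℝ :=
  (l.2 - (p.1 * (1 - l.1 ^ 2) + p.2 * (2 * l.1))) / (1 + l.1 ^ 2)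

/-- The quadratic whose graph consists of the lines `(t, s)` at signed distance `δ` from `p`. -/
def equidistantQuad (p : ℝ × ℝ) (δ : ℝ) : Quad := (δ - p.1, 2 * p.2, δ + p.1)

lemma eval_equidistantQuad (p l : ℝ × ℝ) :
    (equidistantQuad p (signedLineDist p l)).eval l.1 = l.2 := by
  have h : signedLineDist p l * (1 + l.1 ^ 2) = l.2 - (p.1 * (1 - l.1 ^ 2) + p.2 * (2 * l.1)) :=
    div_mul_cancel₀ _ (by positivity)
  simp only [Quad.eval, equidistantQuad]
  linarith

lemma equidistantQuad_injective2 : Function.Injective2 equidistantQuad := by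
  intro p p' δ δ' h
  simp only [equidistantQuad, Prod.mk.injEq] at h
  obtain ⟨h₁, h₂, h₃⟩ := h
  exact ⟨Prod.ext (by linarith) (by linarith), by linarith⟩

lemma card_signedLineDist_mem_le (P L : Finset (ℝ × ℝ)) (D : Finset ℝ) {q : ℝ} (hq : 1 ≤ q) :
    (#{x ∈ P ×ˢ L | signedLineDist x.1 x.2 ∈ D} : ℝ) ≤ 3 * #L * q + incidenceError (#P * #D) q := by
  classical
  set G := (P ×ˢ D).image fun x => equidistantQuad x.1 x.2
  have hG : #G ≤ #P * #D := card_image_le.trans (card_product P D).le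
  have hle : #{x ∈ P ×ˢ L | signedLineDist x.1 x.2 ∈ D} ≤ #(incidences G L) := by
    refine card_le_card_of_injOn
      (fun x => (equidistantQuad x.1 (signedLineDist x.1 x.2), x.2)) ?_ ?_
    · intro x hx
      obtain ⟨hx, hD⟩ := mem_filter.1 hx
      obtain ⟨hP, hL⟩ := mem_product.1 hx
      have hG : equidistantQuad x.1 (signedLineDist x.1 x.2) ∈ G :=
        mem_image.2 ⟨(x.1, signedLineDist x.1 x.2), mem_product.2 ⟨hP, hD⟩, rfl⟩
      exact mem_incidences.2 ⟨⟨hG, hL⟩, (eval_equidistantQuad x.1 x.2).symm⟩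
    · intro x _ y _ hxy
      obtain ⟨hfst, hsnd⟩ := Prod.ext_iff.1 hxy
      exact Prod.ext (equidistantQuad_injective2 hfst).1 hsnd
  calc (#{x ∈ P ×ˢ L | signedLineDist x.1 x.2 ∈ D} : ℝ) ≤ #(incidences G L) := Nat.cast_le.2 hle
    _ ≤ 3 * #L * q + incidenceError #G q := card_incidences_le G L hq
    _ ≤ 3 * #L * q + incidenceError (#P * #D) q := by gcongr; exact incidenceError_mono q hG

/-- The index of the block of `w` consecutive elements of `D` in which `x` falls. -/
def level (D : Finset ℝ) (w : ℕ) (x : ℝ) : ℕ := rankIn D id x / w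

lemma level_mono (D : Finset ℝ) (w : ℕ) : Monotone (level D w) := fun _ _ h =>
  Nat.div_le_div_right (rankIn_mono D h)

lemma level_le (D : Finset ℝ) (w : ℕ) (x : ℝ) : level D w x ≤ #D / w :=
  Nat.div_le_div_right (rankIn_le_card D id x)

/-- The unary encoding of the levels of the signed distances from `p` to the lines in `L`: the
number of `j` with `(l, j) ∈ levelTests D w L p` is the level of the signed distance to `l`. -/
def levelTests (D : Finset ℝ) (w : ℕ) (L : Finset (ℝ × ℝ)) (p : ℝ × ℝ) : Finset ((ℝ × ℝ) × ℕ) :=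
  {h ∈ L ×ˢ range (#D / w) | h.2 < level D w (signedLineDist p h.1)}

variable (D : Finset ℝ) (w : ℕ) (P L : Finset (ℝ × ℝ))

open Classical in
lemma vcDim_levelTests_le : (P.image (levelTests D w L)).vcDim ≤ 2 := by
  let normal : (ℝ × ℝ) × ℕ → ℝ × ℝ := fun h =>
    ((1 - h.1.1 ^ 2) / (1 + h.1.1 ^ 2), 2 * h.1.1 / (1 + h.1.1 ^ 2))
  let φ : ℝ × ℝ → Module.Dual ℝ (ℝ × ℝ) := fun p =>
    -(p.1 • LinearMap.fst ℝ ℝ ℝ + p.2 • LinearMap.snd ℝ ℝ ℝ)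
  have hdist : ∀ p h, signedLineDist p h.1 = h.1.2 / (1 + h.1.1 ^ 2) + φ p (normal h) := by
    intro p h
    simp only [signedLineDist, φ, normal, neg_add_rev, LinearMap.add_apply, LinearMap.neg_apply,
      LinearMap.smul_apply, LinearMap.fst_apply, LinearMap.snd_apply, smul_eq_mul]
    ring
  refine (vcDim_image_le_finrank normal φ fun p p' h hmem hnot => ?_).trans_eq (by simp)
  simp only [levelTests, mem_filter, not_and, not_lt] at hmem hnot
  have hlt := (level_mono D w).reflect_lt ((hnot hmem.1).trans_lt hmem.2)
  rwa [hdist, hdist, add_lt_add_iff_left] at hlt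

open Classical in
lemma card_level_ne_le (p c : ℝ × ℝ) :
    #{l ∈ L | level D w (signedLineDist p l) ≠ level D w (signedLineDist c l)} ≤
      #(symmDiff (levelTests D w L p) (levelTests D w L c)) := by
  refine (card_le_card fun l hl => ?_).trans (card_image_le (f := Prod.fst))
  obtain ⟨hL, hne⟩ := mem_filter.1 hl
  have hp := level_le D w (signedLineDist p l)
  have hc := level_le D w (signedLineDist c l)
  refine mem_image.2
    ⟨(l, min (level D w (signedLineDist p l)) (level D w (signedLineDist c l))), ?_, rfl⟩
  simp only [mem_symmDiff, levelTests, mem_filter, mem_product, mem_range, hL, true_and]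
  omega

/-- The pairs of a point and a line whose signed distance has the same level as the signed distance
from the center of the point to the line. -/
def agreeingPairs (center : ℝ × ℝ → ℝ × ℝ) : Finset ((ℝ × ℝ) × (ℝ × ℝ)) :=
  {x ∈ P ×ˢ L | level D w (signedLineDist x.1 x.2) = level D w (signedLineDist (center x.1) x.2)}

variable {D w}

lemma exists_center_card_agreeingPairs {a : ℕ} (ha : 8 * (#D / w) ≤ a + 1) :
    ∃ center : ℝ × ℝ → ℝ × ℝ, #(P.image center) ≤ a ^ 2 + a + 1 ∧
      #P * #L ≤ 2 * #(agreeingPairs D w P L center) := by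
  classical
  obtain ⟨center, hcard, hle⟩ := exists_center_of_vcDim_le (vcDim_levelTests_le D w P L)
    (fun p _ => filter_subset _ (L ×ˢ range (#D / w))) a
  refine ⟨center, hcard.trans ?_, ?_⟩
  · have h2 := Nat.choose_le_pow a 2
    simp only [sum_range_succ, sum_range_zero, Nat.choose_zero_right, Nat.choose_one_right]
    omega
  set bad := #{x ∈ P ×ˢ L |
    ¬level D w (signedLineDist x.1 x.2) =
      level D w (signedLineDist (center x.1) x.2)} with hbad_def
  have hbad : bad ≤ ∑ p ∈ P, #(symmDiff (levelTests D w L p) (levelTests D w L (center p))) := by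
    rw [hbad_def, card_filter, sum_product]
    simp_rw [← card_filter]
    exact sum_le_sum fun p _ => card_level_ne_le D w L p (center p)
  have htwo : 2 * bad ≤ #P * #L := by
    refine Nat.le_of_mul_le_mul_left ?_ a.succ_pos
    calc (a + 1) * (2 * bad) ≤ 2 * ((a + 1) * ∑ p ∈ P,
          #(symmDiff (levelTests D w L p) (levelTests D w L (center p)))) := by
          rw [mul_left_comm]
          gcongr
      _ ≤ 2 * (2 * 2 * #P * #(L ×ˢ range (#D / w))) := by gcongr
      _ = 8 * (#D / w) * (#P * #L) := by rw [card_product, card_range]; ring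
      _ ≤ (a + 1) * (#P * #L) := by gcongr
  have htotal : #(agreeingPairs D w P L center) + bad = #P * #L :=
    (card_filter_add_card_filter_not _).trans (card_product P L)
  omega

variable {P L} {B : ℕ} {q : ℝ}

lemma card_agreeingPairs_class_le (hD : ∀ p ∈ P, ∀ l ∈ L, signedLineDist p l ∈ D) (hw : 0 < w)
    (hB : 0 < B) (hq : 1 ≤ q) (center : ℝ × ℝ → ℝ × ℝ) (g : (ℝ × ℝ) × ℕ) (j : ℕ) :
    (#{x ∈ agreeingPairs D w P L center |
        (blockLabel P center toLex B x.1, level D w (signedLineDist x.1 x.2)) = (g, j)} : ℝ) ≤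
      3 * #{l ∈ L | level D w (signedLineDist g.1 l) = j} * q + incidenceError (B * w) q := by
  classical
  set near := {l ∈ L | level D w (signedLineDist g.1 l) = j}
  set block := {p ∈ P | blockLabel P center toLex B p = g}
  set values := {δ ∈ D | level D w δ = j}
  have hblock : #block ≤ B := card_blockLabel_eq_le (fun _ => toLex.injective.injOn) hB g
  have hvalues : #values ≤ w := card_rankIn_div_eq_le Function.injective_id.injOn hw j
  calc _ ≤ (#{x ∈ block ×ˢ near | signedLineDist x.1 x.2 ∈ values} : ℝ) := by
        refine Nat.cast_le.2 (card_le_card fun ⟨p, l⟩ hx => ?_)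
        obtain ⟨hagree, hlabel⟩ := mem_filter.1 hx
        obtain ⟨hPL, hlevel⟩ := mem_filter.1 hagree
        obtain ⟨hp, hl⟩ := mem_product.1 hPL
        obtain ⟨rfl, rfl⟩ := Prod.ext_iff.1 hlabel
        simp only [mem_filter, mem_product, block, near, values]
        exact ⟨⟨⟨hp, trivial⟩, hl, hlevel.symm⟩, hD p hp l hl, trivial⟩
    _ ≤ 3 * #near * q + incidenceError (#block * #values) q :=
        card_signedLineDist_mem_le _ _ _ hq
    _ ≤ 3 * #near * q + incidenceError (B * w) q := by
        gcongr
        exact incidenceError_mono q (Nat.mul_le_mul hblock hvalues)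

/-- Splitting the points into groups of at most `B` points with a common center, the agreeing pairs
of a given group and level are incidences between few quadratics and few points. -/
theorem card_mul_card_div_two_le (hD : ∀ p ∈ P, ∀ l ∈ L, signedLineDist p l ∈ D) {a : ℕ}
    (hw : 0 < w) (hB : 0 < B) (hq : 1 ≤ q) (ha : 8 * (#D / w) ≤ a + 1) :
    (#P * #L : ℝ) / 2 ≤ ((a : ℝ) ^ 2 + a + 1 + #P / B) *
      (3 * q * #L + ((#D / w : ℕ) + 1) * incidenceError (B * w) q) := by
  classical
  obtain ⟨center, hcenter, hhalf⟩ := exists_center_card_agreeingPairs P L ha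
  set good := agreeingPairs D w P L center with hgood
  set group := blockLabel P center toLex B
  have hgroups : (#(P.image group) : ℝ) ≤ (a : ℝ) ^ 2 + a + 1 + #P / B := by
    refine (card_image_blockLabel_le P center toLex B).trans ?_
    gcongr
    exact_mod_cast hcenter
  have hnear : ∀ g : (ℝ × ℝ) × ℕ, ∑ j ∈ range (#D / w + 1),
      #{l ∈ L | level D w (signedLineDist g.1 l) = j} = #L := fun g =>
    (card_eq_sum_card_fiberwise fun l _ =>
      mem_coe.2 (mem_range_succ_iff.2 (level_le D w (signedLineDist g.1 l)))).symm
  have hsplit : #good = ∑ g ∈ P.image group, ∑ j ∈ range (#D / w + 1),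
      #{x ∈ good | (group x.1, level D w (signedLineDist x.1 x.2)) = (g, j)} := by
    rw [← sum_product']
    refine card_eq_sum_card_fiberwise fun x hx => mem_coe.2 (mem_product.2 ⟨?_, ?_⟩)
    · exact mem_image_of_mem group (mem_product.1 (mem_filter.1 hx).1).1
    · exact mem_range_succ_iff.2 (level_le D w _)
  calc (#P * #L : ℝ) / 2 ≤ #good := by rw [div_le_iff₀' two_pos]; exact_mod_cast hhalf
    _ ≤ ∑ g ∈ P.image group, ∑ j ∈ range (#D / w + 1),
          (3 * #{l ∈ L | level D w (signedLineDist g.1 l) = j} * q +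
            incidenceError (B * w) q) := by
        rw [hsplit]
        push_cast
        exact sum_le_sum fun g _ => sum_le_sum fun j _ =>
          card_agreeingPairs_class_le hD hw hB hq center g j
    _ = ∑ _g ∈ P.image group, (3 * q * #L + ((#D / w : ℕ) + 1) * incidenceError (B * w) q) := by
        refine sum_congr rfl fun g _ => ?_
        rw [sum_add_distrib, ← sum_mul, ← mul_sum, ← Nat.cast_sum, hnear g]
        simp only [sum_const, card_range, nsmul_eq_mul, Nat.cast_add, Nat.cast_one]
        ring
    _ ≤ _ := by
        rw [sum_const, nsmul_eq_mul]
        have := incidenceError_nonneg (B * w) q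
        gcongr

end SignedDistance

section Lines

open scoped RealInnerProductSpace

lemma infDist_setOf_inner_eq {E : Type*} [NormedAddCommGroup E] [InnerProductSpace ℝ E] {u : E}
    (hu : ‖u‖ = 1) (c : ℝ) (p : E) : Metric.infDist p {x | ⟪u, x⟫ = c} = |c - ⟪u, p⟫| := by
  have hfoot : p + (c - ⟪u, p⟫) • u ∈ {x | ⟪u, x⟫ = c} := by
    simp [inner_add_right, inner_smul_right, hu]
  refine le_antisymm ?_ ((Metric.le_infDist ⟨_, hfoot⟩).2 fun x hx => ?_)
  · simpa [norm_smul, hu] using Metric.infDist_le_dist_of_mem (x := p) hfoot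
  · rw [← show ⟪u, x⟫ = c from hx, ← inner_sub_right, dist_comm, dist_eq_norm]
    simpa [hu] using abs_real_inner_le_norm u (x - p)

/-- The rational parametrization of the unit vectors other than `(-1, 0)`. -/
def unitNormal (t : ℝ) : Pt2 := !₂[(1 - t ^ 2) / (1 + t ^ 2), 2 * t / (1 + t ^ 2)]

lemma norm_unitNormal (t : ℝ) : ‖unitNormal t‖ = 1 := by
  have h : ((1 - t ^ 2) / (1 + t ^ 2)) ^ 2 + (2 * t / (1 + t ^ 2)) ^ 2 = 1 := by
    field_simp
    ring
  rw [EuclideanSpace.norm_eq]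
  simp [unitNormal, Fin.sum_univ_two, h]

/-- The line `(1 - t ^ 2) * x + 2 * t * y = s` encoded by `l = (t, s)`. -/
def paramLine (l : ℝ × ℝ) : Set Pt2 := {x | ⟪unitNormal l.1, x⟫ = l.2 / (1 + l.1 ^ 2)}

lemma inner_unitNormal (t : ℝ) (x : Pt2) :
    ⟪unitNormal t, x⟫ = (x 0 * (1 - t ^ 2) + x 1 * (2 * t)) / (1 + t ^ 2) := by
  simp only [unitNormal, PiLp.inner_apply, RCLike.inner_apply, Real.ringHom_apply,
    Fin.sum_univ_two, Matrix.cons_val_zero, Matrix.cons_val_one]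
  ring

lemma mem_paramLine {l : ℝ × ℝ} {x : Pt2} :
    x ∈ paramLine l ↔ x 0 * (1 - l.1 ^ 2) + x 1 * (2 * l.1) = l.2 := by
  rw [paramLine, Set.mem_ofPred_eq, inner_unitNormal, div_left_inj' (by positivity)]

lemma infDist_paramLine (p : Pt2) (l : ℝ × ℝ) :
    Metric.infDist p (paramLine l) = |signedLineDist (p 0, p 1) l| := by
  rw [paramLine, infDist_setOf_inner_eq (norm_unitNormal l.1), inner_unitNormal, ← sub_div]
  rfl

lemma exists_mem_Ioc_orthogonal (x y : ℝ) :
    ∃ t ∈ Set.Ioc (-1 : ℝ) 1, x * (1 - t ^ 2) + y * (2 * t) = 0 := by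
  have hcont : ContinuousOn (fun t : ℝ => x * (1 - t ^ 2) + y * (2 * t)) (Set.uIcc (-1) 1) := by
    fun_prop
  have hzero : (0 : ℝ) ∈ Set.uIcc (x * (1 - (-1) ^ 2) + y * (2 * -1))
      (x * (1 - 1 ^ 2) + y * (2 * 1)) := by
    rw [Set.mem_uIcc]
    rcases le_total 0 y with hy | hy
    · exact Or.inl ⟨by linarith, by linarith⟩
    · exact Or.inr ⟨by linarith, by linarith⟩
  obtain ⟨t, ht, hroot⟩ := intermediate_value_uIcc hcont hzero
  rw [Set.uIcc_of_le (by norm_num)] at ht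
  rcases ht.1.eq_or_lt with rfl | hlt
  · exact ⟨1, by norm_num, by simp only at hroot; linarith⟩
  · exact ⟨t, ⟨hlt, ht.2⟩, hroot⟩

lemma IsLine2.exists_eq_paramLine {l : Set Pt2} (hl : IsLine2 l) :
    ∃ x : ℝ × ℝ, x.1 ∈ Set.Ioc (-1) 1 ∧ l = paramLine x := by
  obtain ⟨a, v, hv, rfl⟩ := hl
  obtain ⟨t, ht, hvt⟩ := exists_mem_Ioc_orthogonal (v 0) (v 1)
  refine ⟨(t, a 0 * (1 - t ^ 2) + a 1 * (2 * t)), ht, Set.ext fun x => ?_⟩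
  rw [mem_paramLine]
  refine ⟨?_, fun hx => ?_⟩
  · rintro ⟨s, rfl⟩
    simp only [PiLp.add_apply, PiLp.smul_apply, smul_eq_mul]
    linear_combination s * hvt
  · have hcross : (x 0 - a 0) * v 1 = (x 1 - a 1) * v 0 := by
      have h : (1 + t ^ 2) ^ 2 * ((x 0 - a 0) * v 1 - (x 1 - a 1) * v 0) = 0 := by
        linear_combination ((1 - t ^ 2) * v 1 - 2 * t * v 0) * hx +
          (2 * t * (x 0 - a 0) - (1 - t ^ 2) * (x 1 - a 1)) * hvt
      exact sub_eq_zero.1 ((mul_eq_zero.1 h).resolve_left (by positivity))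
    have hnorm : v 0 ^ 2 + v 1 ^ 2 ≠ 0 := fun h => hv <| by
      ext i
      fin_cases i <;> simp only [Fin.zero_eta, Fin.mk_one, PiLp.zero_apply] <;> nlinarith
    refine ⟨((x 0 - a 0) * v 0 + (x 1 - a 1) * v 1) / (v 0 ^ 2 + v 1 ^ 2), ?_⟩
    ext i
    fin_cases i <;>
      simp only [Fin.zero_eta, Fin.mk_one, PiLp.add_apply, PiLp.smul_apply, smul_eq_mul] <;>
      field_simp
    · linear_combination v 1 * hcross
    · linear_combination -v 0 * hcross

open Classical in
/-- The set of signed distances from the points in `P` to the lines encoded by `L`. -/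
def signedLineDists (P L : Finset (ℝ × ℝ)) : Finset ℝ :=
  (P ×ˢ L).image fun x => signedLineDist x.1 x.2

variable {P L : Finset (ℝ × ℝ)}

lemma signedLineDist_mem_signedLineDists :
    ∀ p ∈ P, ∀ l ∈ L, signedLineDist p l ∈ signedLineDists P L := fun p hp l hl =>
  mem_image.2 ⟨(p, l), mem_product.2 ⟨hp, hl⟩, rfl⟩

lemma exists_params (P : Finset Pt2) (L : Finset (Set Pt2)) (hL : ∀ l ∈ L, IsLine2 l) :
    ∃ P' L' : Finset (ℝ × ℝ), #P' = #P ∧ #L' = #L ∧ (∀ l ∈ L', l.1 ∈ Set.Ioc (-1) 1) ∧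
      #(signedLineDists P' L') ≤
        2 * {d : ℝ | ∃ p ∈ P, ∃ l ∈ L, d = Metric.infDist p l}.ncard := by
  classical
  choose! param hmem hparam using fun l hl => (hL l hl).exists_eq_paramLine
  set E : Finset ℝ := (P ×ˢ L).image fun x => Metric.infDist x.1 x.2
  have hE : {d : ℝ | ∃ p ∈ P, ∃ l ∈ L, d = Metric.infDist p l} = E := by
    ext d
    simp only [E, coe_image, coe_product, Set.mem_image, Set.mem_prod, mem_coe, Prod.exists]
    grind
  refine ⟨P.image fun p => (p 0, p 1), L.image param, ?_, ?_, ?_, ?_⟩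
  · refine card_image_of_injective P fun p p' h => ?_
    ext i
    fin_cases i
    exacts [(Prod.ext_iff.1 h).1, (Prod.ext_iff.1 h).2]
  · refine card_image_of_injOn fun l hl l' hl' h => ?_
    rw [hparam l hl, hparam l' hl', h]
  · exact forall_mem_image.2 hmem
  have hsub : signedLineDists (P.image fun p => (p 0, p 1)) (L.image param) ⊆
      E ∪ E.image Neg.neg := by
    refine image_subset_iff.2 fun x hx => ?_
    obtain ⟨hp, hl⟩ := mem_product.1 hx
    obtain ⟨p, hp, hpx⟩ := mem_image.1 hp
    obtain ⟨l, hl, hlx⟩ := mem_image.1 hl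
    have habs : |signedLineDist x.1 x.2| ∈ E := by
      rw [← hpx, ← hlx, ← infDist_paramLine, ← hparam l hl]
      exact mem_image.2 ⟨(p, l), mem_product.2 ⟨hp, hl⟩, rfl⟩
    rcases abs_choice (signedLineDist x.1 x.2) with h | h
    · exact mem_union_left _ (h ▸ habs)
    · exact mem_union_right _ (mem_image.2 ⟨_, habs, by rw [h, neg_neg]⟩)
  rw [hE, Set.ncard_coe_finset, two_mul]
  exact (card_le_card hsub).trans <| (card_union_le _ _).trans <|
    Nat.add_le_add_left card_image_le #E

lemma eq_of_signedLineDist_eq {l l' p p' : ℝ × ℝ} (hl : l.1 ∈ Set.Ioc (-1) 1)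
    (hl' : l'.1 ∈ Set.Ioc (-1) 1) (hne : l.1 ≠ l'.1)
    (h : signedLineDist p l = signedLineDist p' l)
    (h' : signedLineDist p l' = signedLineDist p' l') : p = p' := by
  rw [signedLineDist, signedLineDist, div_left_inj' (by positivity)] at h h'
  obtain ⟨⟨hl₁, hl₂⟩, hl₁', hl₂'⟩ := hl, hl'
  have hnotperp : 0 < 1 + l.1 * l'.1 := by
    linarith [mul_pos (neg_lt_iff_pos_add.1 hl₁) (neg_lt_iff_pos_add.1 hl₁'),
      mul_nonneg (sub_nonneg.2 hl₂) (sub_nonneg.2 hl₂')]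
  have hdet : (l'.1 - l.1) * (1 + l.1 * l'.1) ≠ 0 :=
    mul_ne_zero (sub_ne_zero.2 hne.symm) hnotperp.ne'
  have hfst : (p.1 - p'.1) * ((l'.1 - l.1) * (1 + l.1 * l'.1)) = 0 := by
    linear_combination -l'.1 * h + l.1 * h'
  have hsnd : (p.2 - p'.2) * ((l'.1 - l.1) * (1 + l.1 * l'.1)) = 0 := by
    linear_combination ((1 - l'.1 ^ 2) * h - (1 - l.1 ^ 2) * h') / 2
  exact Prod.ext (sub_eq_zero.1 ((mul_eq_zero.1 hfst).resolve_right hdet))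
    (sub_eq_zero.1 ((mul_eq_zero.1 hsnd).resolve_right hdet))

/-- Fewer than `√#P` signed distances are only possible for parallel lines. -/
lemma card_le_of_sq_card_signedLineDists_lt (hL : ∀ l ∈ L, l.1 ∈ Set.Ioc (-1) 1)
    (h : #(signedLineDists P L) ^ 2 < #P) : #L ≤ #(signedLineDists P L) := by
  have hparallel : ∀ l ∈ L, ∀ l' ∈ L, l.1 = l'.1 := by
    intro l hl l' hl'
    by_contra hne
    refine h.not_ge ?_
    rw [sq, ← card_product]
    refine card_le_card_of_injOn (fun p => (signedLineDist p l, signedLineDist p l'))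
      (fun p hp => mem_coe.2 (mem_product.2 ⟨?_, ?_⟩)) fun p _ p' _ hpp' => ?_
    · exact signedLineDist_mem_signedLineDists p hp l hl
    · exact signedLineDist_mem_signedLineDists p hp l' hl'
    · obtain ⟨h1, h2⟩ := Prod.ext_iff.1 hpp'
      exact eq_of_signedLineDist_eq (hL l hl) (hL l' hl') hne h1 h2
  obtain ⟨p, hp⟩ := card_pos.1 ((Nat.zero_le _).trans_lt h)
  refine card_le_card_of_injOn (signedLineDist p)
    (fun l hl => signedLineDist_mem_signedLineDists p hp l hl) fun l hl l' hl' heq => ?_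
  have h1 := hparallel l hl l' hl'
  rw [signedLineDist, signedLineDist, h1, div_left_inj' (by positivity)] at heq
  exact Prod.ext h1 (by linarith)

end Lines

section Optimization

/-- The lower bound on the number `δ` of signed distances between `m` points and `n` lines which
results from dividing the distances into about `a` levels. -/
def LevelInequality (m n δ : ℕ) : Prop :=
  ∀ a : ℕ, 0 < a → 49 * a ^ 2 ≤ m →
    (m * n : ℝ) ≤ 32 * a ^ 3 * incidenceError ⌊18 * (m * δ / a ^ 3 : ℝ)⌋₊ (m / (48 * a ^ 2))

lemma exists_levelWidth {a δ : ℕ} (ha : 0 < a) (haδ : a ≤ δ) :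
    ∃ w : ℕ, 0 < w ∧ (w : ℝ) ≤ 9 * δ / a ∧ 8 * (δ / w) ≤ a + 1 := by
  have ha' : (1 : ℝ) ≤ a := Nat.one_le_cast.2 ha
  have haδ' : (a : ℝ) ≤ δ := Nat.cast_le.2 haδ
  refine ⟨8 * δ / (a + 1) + 1, Nat.succ_pos _, ?_, ?_⟩
  · have hdiv : ((8 * δ / (a + 1) : ℕ) : ℝ) ≤ 8 * δ / a := by
      refine Nat.cast_div_le.trans ?_
      push_cast
      gcongr
      linarith
    have hone : (1 : ℝ) ≤ δ / a := (one_le_div (by linarith)).2 haδ'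
    push_cast
    linarith [show (8 : ℝ) * δ / a + δ / a = 9 * δ / a by ring]
  · set w := 8 * δ / (a + 1) + 1
    have hlt : 8 * δ < (a + 1) * w := Nat.lt_mul_div_succ (8 * δ) a.succ_pos
    refine Nat.le_of_mul_le_mul_left (?_ : w * _ ≤ w * _) (Nat.succ_pos _)
    linarith [Nat.mul_div_le δ w]

theorem levelInequality_of_card_le {P L : Finset (ℝ × ℝ)}
    (hP : #P ≤ #(signedLineDists P L) ^ 2) : LevelInequality #P #L #(signedLineDists P L) := by
  intro a ha ham
  set m := #P
  set n := #L
  set δ := #(signedLineDists P L)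
  have ha' : (1 : ℝ) ≤ a := Nat.one_le_cast.2 ha
  have ham' : 49 * (a : ℝ) ^ 2 ≤ m := by exact_mod_cast ham
  set y : ℝ := m / a ^ 2
  have hya : y * a ^ 2 = m := div_mul_cancel₀ _ (by positivity)
  have hy : 49 ≤ y := (le_div_iff₀ (by positivity)).2 ham'
  have haδ : a ≤ δ := (Nat.pow_le_pow_iff_left two_ne_zero).1 (by omega : a ^ 2 ≤ δ ^ 2)
  obtain ⟨w, hw, hwa, hwδ⟩ := exists_levelWidth ha haδ
  set B := ⌈y⌉₊
  have hyB : y ≤ B := Nat.le_ceil y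
  have hBy : (B : ℝ) ≤ 2 * y := by linarith [Nat.ceil_lt_add_one (show 0 ≤ y by linarith)]
  have hB : 0 < B := Nat.cast_pos.1 (lt_of_lt_of_le (by linarith : (0 : ℝ) < y) hyB)
  have hBw : B * w ≤ ⌊18 * (m * δ / a ^ 3 : ℝ)⌋₊ := by
    refine Nat.le_floor ?_
    push_cast
    calc (B * w : ℝ) ≤ 2 * y * (9 * δ / a) := by gcongr
      _ = 18 * (m * δ / a ^ 3) := by simp only [y]; field_simp; ring
  have hq : (m / (48 * a ^ 2) : ℝ) = y / 48 := by simp only [y]; field_simp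
  rw [hq]
  set F := incidenceError ⌊18 * (m * δ / a ^ 3 : ℝ)⌋₊ (y / 48)
  have hF : incidenceError (B * w) (y / 48) ≤ F := incidenceError_mono _ hBw
  have hF0 : 0 ≤ incidenceError (B * w) (y / 48) := incidenceError_nonneg _ _
  have hmain := card_mul_card_div_two_le (P := P) (L := L) (q := y / 48)
    signedLineDist_mem_signedLineDists hw hB (by linarith) hwδ
  have hgroups : (a : ℝ) ^ 2 + a + 1 + m / B ≤ 4 * a ^ 2 := by
    have : (m / B : ℝ) ≤ a ^ 2 := by
      rw [div_le_iff₀ (by positivity), ← hya, mul_comm y]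
      gcongr
    nlinarith
  have hlevels : ((δ / w : ℕ) : ℝ) + 1 ≤ 2 * a := by
    have : (8 * (δ / w : ℕ) : ℝ) ≤ a + 1 := by exact_mod_cast hwδ
    linarith
  have hbound : (m * n / 2 : ℝ) ≤ 4 * a ^ 2 * (3 * (y / 48) * n + 2 * a * F) := by
    refine hmain.trans ?_
    gcongr
  linear_combination 4 * hbound + n * hya

variable {m n δ : ℕ}

lemma sqrt_eighteen_mul_div_sq_le {T a : ℝ} (hT : 0 ≤ T) (ha : 0 ≤ a) :
    √(18 * (T / a ^ 2)) ≤ 5 * (√T / a) := by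
  refine Real.sqrt_le_iff.2 ⟨by positivity, ?_⟩
  rw [mul_pow, div_pow, Real.sq_sqrt hT]
  gcongr
  norm_num

lemma LevelInequality.mul_le (h : LevelInequality m n δ) {a : ℕ} (ha : 0 < a)
    (ham : 49 * a ^ 2 ≤ m) {Λ : ℝ}
    (hΛ : (Nat.log 2 ⌊18 * (m * δ / a ^ 3 : ℝ)⌋₊ : ℝ) + 2 ≤ Λ) :
    (m * n : ℝ) ≤ 2880 * (m * δ) + 47775744 * (a * δ ^ 2) +
      74880 * (m * δ / a * √(m * δ / a) * Λ) := by
  have hm : (0 : ℝ) < m := Nat.cast_pos.2 (by nlinarith)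
  have hmul := h a ha ham
  set T : ℝ := m * δ / a with hT
  set M := ⌊18 * (m * δ / a ^ 3 : ℝ)⌋₊
  have hTa : (18 * (m * δ / a ^ 3) : ℝ) = 18 * (T / a ^ 2) := by
    rw [hT]
    field_simp
  have hM : (M : ℝ) ≤ 18 * (T / a ^ 2) := (Nat.floor_le (by positivity)).trans_eq hTa
  have hsqrt : √(M : ℝ) ≤ 5 * (√T / a) :=
    (Real.sqrt_le_sqrt hM).trans (sqrt_eighteen_mul_div_sq_le (by positivity) a.cast_nonneg)
  calc (m * n : ℝ) ≤ 32 * a ^ 3 * incidenceError M (m / (48 * a ^ 2)) := hmul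
    _ ≤ 32 * a ^ 3 * (5 * (18 * (T / a ^ 2)) + 2 * (18 * (T / a ^ 2)) ^ 2 / (m / (48 * a ^ 2)) ^ 2 +
          26 * (18 * (T / a ^ 2) * (5 * (√T / a)) * Λ)) := by
        unfold incidenceError
        gcongr
    _ = 2880 * (a * T) + 47775744 * (a ^ 3 * T ^ 2 / m ^ 2) + 74880 * (T * √T * Λ) := by
        field_simp
        ring
    _ = 2880 * (m * δ) + 47775744 * (a * δ ^ 2) + 74880 * (T * √T * Λ) := by
        rw [hT]
        field_simp

lemma natLog_two_floor_add_two_le {x : ℝ} (hx : 1 ≤ x) : (Nat.log 2 ⌊x⌋₊ : ℝ) + 2 ≤ 4 * √x := by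
  have hpow : ∀ k : ℕ, (k + 2) ^ 2 ≤ 16 * 2 ^ k := fun k => by
    induction k with
    | zero => norm_num
    | succ k ih =>
      rw [pow_succ 2 k]
      nlinarith [Nat.one_le_two_pow (n := k)]
  have hlog : 2 ^ Nat.log 2 ⌊x⌋₊ ≤ ⌊x⌋₊ := Nat.pow_log_le_self 2 (Nat.floor_pos.2 hx).ne'
  have hsq : ((Nat.log 2 ⌊x⌋₊ : ℝ) + 2) ^ 2 ≤ 16 * ⌊x⌋₊ := by
    exact_mod_cast (hpow _).trans (Nat.mul_le_mul_left 16 hlog)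
  refine le_of_sq_le_sq (hsq.trans ?_) (by positivity)
  rw [mul_pow, Real.sq_sqrt (by linarith)]
  linarith [Nat.floor_le (show 0 ≤ x by linarith)]

lemma natLog_two_floor_add_two_le_log (hm : 1 ≤ Real.log m) {x : ℝ} {k : ℕ}
    (hx : x ≤ (m : ℝ) ^ k) : (Nat.log 2 ⌊x⌋₊ : ℝ) + 2 ≤ (2 * k + 2) * Real.log m := by
  have hm0 : (1 : ℝ) ≤ m := by
    by_contra! hlt
    exact (Real.log_nonpos m.cast_nonneg hlt.le).not_gt (by linarith)
  have hpow : (2 : ℝ) ^ Nat.log 2 ⌊x⌋₊ ≤ (m : ℝ) ^ k := by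
    rcases eq_or_ne ⌊x⌋₊ 0 with h0 | h0
    · simpa [h0] using one_le_pow₀ hm0
    · have hself : ((2 ^ Nat.log 2 ⌊x⌋₊ : ℕ) : ℝ) ≤ ⌊x⌋₊ := Nat.cast_le.2 (Nat.pow_log_le_self 2 h0)
      have hfloor : (⌊x⌋₊ : ℝ) ≤ x := Nat.floor_le (Nat.pos_of_floor_pos h0.bot_lt).le
      exact_mod_cast hself.trans (hfloor.trans hx)
  have hlog := Real.log_le_log (by positivity) hpow
  rw [Real.log_pow, Real.log_pow] at hlog
  have hhalf : (Nat.log 2 ⌊x⌋₊ : ℝ) * (1 / 2) ≤ Nat.log 2 ⌊x⌋₊ * Real.log 2 := by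
    gcongr
    linarith [Real.log_two_gt_d9]
  linarith

lemma exists_levelCount {R : ℝ} (hm : 400 ≤ m) (hR : 1 ≤ R) (hRm : R ^ 2 ≤ m) :
    ∃ a : ℕ, 0 < a ∧ 49 * a ^ 2 ≤ m ∧ R / 20 ≤ a ∧ (a : ℝ) ≤ 2 * R := by
  have hm' : (400 : ℝ) ≤ m := by exact_mod_cast hm
  have hceil : (⌈R / 20⌉₊ : ℝ) < R / 20 + 1 := Nat.ceil_lt_add_one (by linarith)
  refine ⟨⌈R / 20⌉₊, Nat.ceil_pos.2 (by linarith), ?_, Nat.le_ceil _, by linarith⟩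
  have hsq : 49 * (⌈R / 20⌉₊ : ℝ) ^ 2 ≤ 49 * (R / 20 + 1) ^ 2 := by gcongr
  have : 49 * (⌈R / 20⌉₊ : ℝ) ^ 2 ≤ m := by nlinarith [sq_nonneg (R - 20)]
  exact_mod_cast this

lemma LevelInequality.mul_sqrt_le (h : LevelInequality m n δ) (hm : 400 ≤ m) (hδ : m ≤ δ ^ 2) :
    (n : ℝ) * √m ≤ (800000 * δ) ^ 2 := by
  set r := √(m : ℝ)
  have hrm : r ^ 2 = m := Real.sq_sqrt m.cast_nonneg
  have hr : 1 ≤ r := Real.one_le_sqrt.2 (by exact_mod_cast show 1 ≤ m by omega)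
  have hrδ : r ≤ δ := Real.sqrt_le_iff.2 ⟨by positivity, by exact_mod_cast hδ⟩
  obtain ⟨a, ha, ham, hra, har⟩ := exists_levelCount hm hr hrm.le
  set T : ℝ := m * δ / a with hT
  have hTa : (18 * (m * δ / a ^ 3) : ℝ) = 18 * (T / a ^ 2) := by
    rw [hT]
    field_simp
  have hone : 1 ≤ 18 * (T / a ^ 2) := by
    rw [← hTa, ← mul_div_assoc, one_le_div (by positivity)]
    calc (a : ℝ) ^ 3 ≤ (2 * r) ^ 3 := by gcongr
      _ ≤ 18 * (r ^ 2 * r) := by nlinarith [pow_pos (show 0 < r by linarith) 3]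
      _ ≤ 18 * (m * δ) := by rw [hrm]; gcongr
  have hΛ : (Nat.log 2 ⌊18 * (m * δ / a ^ 3 : ℝ)⌋₊ : ℝ) + 2 ≤ 20 * (√T / a) := by
    rw [hTa]
    linarith [natLog_two_floor_add_two_le hone,
      sqrt_eighteen_mul_div_sq_le (show 0 ≤ T by positivity) a.cast_nonneg]
  have hcube : T ^ 2 / a ≤ 8000 * (r * δ ^ 2) := by
    rw [hT, ← hrm, div_pow, div_div, div_le_iff₀ (by positivity)]
    calc (r ^ 2 * δ) ^ 2 = r ^ 3 * (r * δ ^ 2) := by ring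
      _ ≤ (20 * a) ^ 3 * (r * δ ^ 2) := by gcongr; linarith
      _ = 8000 * (r * δ ^ 2) * (a ^ 2 * a) := by ring
  have hlast : T * √T * (20 * (√T / a)) = 20 * (T ^ 2 / a) := by
    rw [show T * √T * (20 * (√T / a)) = 20 * (T * √T ^ 2 / a) by ring,
      Real.sq_sqrt (by positivity), sq]
  have hmain := h.mul_le ha ham hΛ
  rw [hlast, ← hrm] at hmain
  have hfirst : r ^ 2 * δ ≤ r * δ ^ 2 := by
    linarith [mul_le_mul_of_nonneg_left hrδ (by positivity : 0 ≤ r * (δ : ℝ))]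
  have hmiddle : (a * δ ^ 2 : ℝ) ≤ 2 * r * δ ^ 2 := by gcongr
  refine le_of_mul_le_mul_left ?_ (show 0 < r by linarith)
  linarith [show 0 ≤ r * (δ : ℝ) ^ 2 by positivity]

lemma eighteen_mul_div_cube_le_pow {a : ℕ} (hm : 18 ≤ m) (ha : 0 < a) (hδ : (δ : ℝ) ≤ m ^ 9) :
    (18 * (m * δ / a ^ 3) : ℝ) ≤ m ^ 11 := by
  have ha' : (1 : ℝ) ≤ a ^ 3 := one_le_pow₀ (Nat.one_le_cast.2 ha)
  have hm' : (18 : ℝ) ≤ m := by exact_mod_cast hm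
  calc (18 * (m * δ / a ^ 3) : ℝ) ≤ 18 * (m * δ) := by gcongr; exact div_le_self (by positivity) ha'
    _ ≤ m * (m * m ^ 9) := by gcongr
    _ = m ^ 11 := by ring

section NinthRoots

variable {X Y Z : ℝ}

lemma sq_mul_pow_five_div_sq_le (hX : 0 ≤ X) (hY : 0 < Y) (hZ : 0 < Z) (h : X ≤ Y ^ 2 * Z) :
    X ^ 2 * Y ^ 5 / Z ^ 2 ≤ Y ^ 9 := by
  rw [div_le_iff₀ (by positivity)]
  calc X ^ 2 * Y ^ 5 ≤ (Y ^ 2 * Z) ^ 2 * Y ^ 5 := by gcongr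
    _ = Y ^ 9 * Z ^ 2 := by ring

lemma pow_nine_le_pow_nine {x : ℝ} (hx : 0 ≤ x) (hlog : 0 ≤ Real.log x) (hY : 0 ≤ Y)
    (hXx : X ^ 9 = x) (hZx : Z ^ 9 = Real.log x) (h : Y ≤ X ^ 5 * Z ^ 4) : Y ^ 9 ≤ x ^ 9 :=
  calc Y ^ 9 ≤ (X ^ 5 * Z ^ 4) ^ 9 := by gcongr
    _ = x ^ 5 * Real.log x ^ 4 := by rw [← hZx, ← hXx]; ring
    _ ≤ x ^ 5 * x ^ 4 := by gcongr; exact Real.log_le_self hx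
    _ = x ^ 9 := by ring

lemma mul_sqrt_mul_pow_nine_le {T : ℝ} (hX : 0 < X) (hY : 0 < Y) (hZ : 0 < Z)
    (hT : T ≤ (1 / 200 * (X ^ 3 * Y ^ 3 / Z ^ 3)) ^ 2) :
    T * √T * Z ^ 9 ≤ (1 / 200) ^ 3 * (X ^ 9 * Y ^ 9) := by
  set K := X ^ 3 * Y ^ 3 / Z ^ 3 with hK
  have hsqrt : √T ≤ 1 / 200 * K := Real.sqrt_le_iff.2 ⟨by positivity, hT⟩
  calc T * √T * Z ^ 9 ≤ (1 / 200 * K) ^ 2 * (1 / 200 * K) * Z ^ 9 := by gcongr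
    _ = (1 / 200) ^ 3 * (X ^ 9 * Y ^ 9) := by
      rw [hK]
      field_simp

theorem LevelInequality.sq_mul_pow_five_div_sq_le (h : LevelInequality m n δ) (hm : 400 ≤ m)
    (hlog : 1 ≤ Real.log m) (hX : 0 < X) (hY : 0 < Y) (hZ : 0 < Z)
    (hXm : X ^ 9 = m) (hYn : Y ^ 9 = n) (hZm : Z ^ 9 = Real.log m)
    (h₁ : X ≤ Y ^ 2 * Z) (h₂ : Y ≤ X ^ 5 * Z ^ 4) (h₃ : X * Z ^ 8 ≤ Y ^ 2) :
    1 / 800000 * (X ^ 2 * Y ^ 5 / Z ^ 2) ≤ δ := by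
  set N := X ^ 2 * Y ^ 5 / Z ^ 2 with hN
  by_contra! hlt
  have : 0 < N := by positivity
  have hδn : (δ : ℝ) ≤ 1 / 800000 * n := hlt.le.trans
    (by rw [← hYn]; gcongr; exact _root_.sq_mul_pow_five_div_sq_le hX.le hY hZ h₁)
  have hδm : (δ : ℝ) ≤ m ^ 9 := by
    linarith [n.cast_nonneg (α := ℝ),
      hYn ▸ pow_nine_le_pow_nine m.cast_nonneg (by linarith) hY.le hXm hZm h₂]
  set R := X ^ 5 * Z ^ 4 / Y with hR
  have hRm : R ^ 2 ≤ m := by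
    rw [hR, div_pow, div_le_iff₀ (by positivity), ← hXm]
    calc (X ^ 5 * Z ^ 4) ^ 2 = X ^ 9 * (X * Z ^ 8) := by ring
      _ ≤ X ^ 9 * Y ^ 2 := by gcongr
  obtain ⟨a, ha, ham, hRa, haR⟩ := exists_levelCount hm ((one_le_div hY).2 h₂) hRm
  have hT : (m * δ / a : ℝ) ≤ (1 / 200 * (X ^ 3 * Y ^ 3 / Z ^ 3)) ^ 2 := by
    rw [div_le_iff₀ (by positivity)]
    calc (m * δ : ℝ) ≤ m * (1 / 800000 * N) := by gcongr
      _ = (1 / 200 * (X ^ 3 * Y ^ 3 / Z ^ 3)) ^ 2 * (R / 20) := by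
        rw [← hXm, hN, hR]
        field_simp
        norm_num
      _ ≤ (1 / 200 * (X ^ 3 * Y ^ 3 / Z ^ 3)) ^ 2 * a := by gcongr
  have hlast := mul_sqrt_mul_pow_nine_le hX hY hZ hT
  have hmiddle : (a * δ ^ 2 : ℝ) ≤ 2 / 800000 ^ 2 * (m * n) :=
    calc (a * δ ^ 2 : ℝ) ≤ 2 * R * (1 / 800000 * N) ^ 2 := by gcongr
      _ = 2 / 800000 ^ 2 * (m * n) := by
        rw [← hXm, ← hYn, hN, hR]
        field_simp
  have hfirst : (m * δ : ℝ) ≤ 1 / 800000 * (m * n) := by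
    linarith [mul_le_mul_of_nonneg_left hδn m.cast_nonneg]
  have hmain := h.mul_le ha ham (natLog_two_floor_add_two_le_log hlog
    (eighteen_mul_div_cube_le_pow (by omega) ha hδm))
  have hmn : (0 : ℝ) < m * n := by rw [← hXm, ← hYn]; positivity
  rw [hXm, hYn, hZm] at hlast
  push_cast at hmain
  linarith

theorem le_of_levelInequality (h : m ≤ δ ^ 2 → LevelInequality m n δ)
    (hfew : δ ^ 2 < m → n ≤ δ) (hm : 400 ≤ m)
    (hlog : 1 ≤ Real.log m) (hX : 0 < X) (hY : 0 < Y) (hZ : 0 < Z)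
    (hXm : X ^ 9 = m) (hYn : Y ^ 9 = n) (hZm : Z ^ 9 = Real.log m)
    (h₁ : X ≤ Y ^ 2 * Z) (h₂ : Y ≤ X ^ 5 * Z ^ 4) :
    1 / 800000 * (X ^ 2 * Y ^ 5 / Z ^ 2) ≤ δ := by
  rcases lt_or_ge (δ ^ 2) m with hδ | hδ
  · have hn : X ^ 2 * Y ^ 5 / Z ^ 2 ≤ n := hYn ▸ sq_mul_pow_five_div_sq_le hX.le hY hZ h₁
    have hnδ : (n : ℝ) ≤ δ := Nat.cast_le.2 (hfew hδ)
    linarith [n.cast_nonneg (α := ℝ)]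
  rcases le_total (X * Z ^ 8) (Y ^ 2) with h₃ | h₃
  · exact (h hδ).sq_mul_pow_five_div_sq_le hm hlog hX hY hZ hXm hYn hZm h₁ h₂ h₃
  have hsq : (X ^ 2 * Y ^ 5 / Z ^ 2) ^ 2 ≤ n * √m := by
    rw [← hXm, ← hYn, ← Real.sqrt_sq (show 0 ≤ Y ^ 9 by positivity),
      ← Real.sqrt_mul (by positivity)]
    refine Real.le_sqrt_of_sq_le ?_
    rw [← pow_mul, div_pow, div_le_iff₀ (by positivity)]
    calc (X ^ 2 * Y ^ 5) ^ (2 * 2) = X ^ 8 * Y ^ 18 * Y ^ 2 := by ring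
      _ ≤ X ^ 8 * Y ^ 18 * (X * Z ^ 8) := by gcongr
      _ = (Y ^ 9) ^ 2 * X ^ 9 * (Z ^ 2) ^ (2 * 2) := by ring
  linarith [le_of_sq_le_sq (hsq.trans ((h hδ).mul_sqrt_le hm hδ)) (by positivity)]

end NinthRoots

lemma rpow_one_div_nine_pow {x : ℝ} (hx : 0 ≤ x) (k : ℕ) :
    (x ^ (1 / 9 : ℝ)) ^ k = x ^ (k / 9 : ℝ) := by
  rw [← Real.rpow_natCast, ← Real.rpow_mul hx, one_div_mul_eq_div]

theorem rpow_mul_rpow_mul_log_rpow_le_of_levelInequality (hm : 400 ≤ m)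
    (hlo : (m : ℝ) ^ (1 / 2 : ℝ) / Real.log m ^ (1 / 2 : ℝ) ≤ n)
    (hhi : (n : ℝ) ≤ m ^ 5 * Real.log m ^ 4)
    (h : m ≤ δ ^ 2 → LevelInequality m n δ) (hfew : δ ^ 2 < m → n ≤ δ) :
    1 / 800000 * ((m : ℝ) ^ (2 / 9 : ℝ) * (n : ℝ) ^ (5 / 9 : ℝ) * Real.log m ^ (-2 / 9 : ℝ)) ≤
      δ := by
  have hm' : (400 : ℝ) ≤ m := by exact_mod_cast hm
  have hm0 : (0 : ℝ) < m := by linarith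
  have hlog : 1 ≤ Real.log m := (Real.le_log_iff_exp_le hm0).2 (by linarith [Real.exp_one_lt_d9])
  have hlog0 : 0 < Real.log m := by linarith
  have hn0 : (0 : ℝ) < n := lt_of_lt_of_le (by positivity) hlo
  have hm_le : (m : ℝ) ≤ n ^ 2 * Real.log m := by
    have := pow_le_pow_left₀ (by positivity) ((div_le_iff₀ (by positivity)).1 hlo) 2
    rwa [mul_pow, ← Real.sqrt_eq_rpow, ← Real.sqrt_eq_rpow, Real.sq_sqrt hm0.le,
      Real.sq_sqrt hlog0.le] at this
  have hroot {x : ℝ} (hx : 0 ≤ x) : (x ^ (1 / 9 : ℝ)) ^ 9 = x := by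
    rw [rpow_one_div_nine_pow hx]
    norm_num
  have hmain := le_of_levelInequality h hfew hm hlog (Real.rpow_pos_of_pos hm0 (1 / 9))
    (Real.rpow_pos_of_pos hn0 (1 / 9)) (Real.rpow_pos_of_pos hlog0 (1 / 9))
    (hroot hm0.le) (hroot hn0.le) (hroot hlog0.le)
    (le_of_pow_le_pow_left₀ (n := 9) (by norm_num) (by positivity) ?_)
    (le_of_pow_le_pow_left₀ (n := 9) (by norm_num) (by positivity) ?_)
  · rw [rpow_one_div_nine_pow hm0.le, rpow_one_div_nine_pow hn0.le,
      rpow_one_div_nine_pow hlog0.le] at hmain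
    rwa [neg_div, Real.rpow_neg hlog0.le]
  · rwa [mul_pow, pow_right_comm, hroot hm0.le, hroot hn0.le, hroot hlog0.le]
  · rwa [mul_pow, pow_right_comm, pow_right_comm _ 4, hroot hm0.le, hroot hn0.le, hroot hlog0.le]

end Optimization

end

theorem distinct_point_line_distances_lens_bound :
    ∃ c : ℝ, 0 < c ∧ ∃ m₀ : ℕ,
      ∀ (m n : ℕ), m₀ ≤ m →
        (m : ℝ) ^ ((1 : ℝ) / 2) / (Real.log m) ^ ((1 : ℝ) / 2) ≤ (n : ℝ) →
        (n : ℝ) ≤ (m : ℝ) ^ 5 * (Real.log m) ^ 4 →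
        ∀ (P : Finset Pt2) (L : Finset (Set Pt2)),
          P.card = m → L.card = n → (∀ l ∈ L, IsLine2 l) →
          c * (m : ℝ) ^ ((2 : ℝ) / 9) * (n : ℝ) ^ ((5 : ℝ) / 9) *
              (Real.log m) ^ (-(2 : ℝ) / 9) ≤
            (({d : ℝ | ∃ p ∈ P, ∃ l ∈ L, d = Metric.infDist p l}).ncard : ℝ) := by
  refine ⟨1 / 1600000, by norm_num, 400, ?_⟩
  rintro _ _ hm hlo hhi P L rfl rfl hL
  obtain ⟨P', L', hP', hL', hIoc, hdist⟩ := exists_params P L hL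
  set δ := (signedLineDists P' L').card with hδ
  have hmany : P.card ≤ δ ^ 2 → LevelInequality P.card L.card δ := by
    rw [hδ, ← hP', ← hL']
    exact levelInequality_of_card_le
  have hfew : δ ^ 2 < P.card → L.card ≤ δ := by
    rw [hδ, ← hP', ← hL']
    exact card_le_of_sq_card_signedLineDists_lt hIoc
  have hbound := rpow_mul_rpow_mul_log_rpow_le_of_levelInequality hm hlo hhi hmany hfew
  have hdist' : (δ : ℝ) ≤ 2 * {d | ∃ p ∈ P, ∃ l ∈ L, d = Metric.infDist p l}.ncard :=
    mod_cast hdist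
  linarith
end
end

section
/- Given three distinct circles in ℝ² that are not mutually tangent at a common point (i.e., there is no single point p at which all three are pairwise tangent), there are at most eight circles, other than the three given ones, that are tangent to all three. -/
noncomputable section

/-- A circle in the plane: a metric sphere with positive radius. -/
def IsCircle2 (s : Set Pt2) : Prop :=
  ∃ c : Pt2, ∃ r : ℝ, 0 < r ∧ s = Metric.sphere c r

/-- Two subsets of the plane are tangent if they intersect in exactly one point. -/
def Tangent2 (a b : Set Pt2) : Prop := ∃ p : Pt2, a ∩ b = {p}

/-!
Regard a sphere with centre `c` and radius `r` as either of the points `(c, ±r)` of Minkowski space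
`E × ℝ` with the form `‖x‖² - t²`. If two spheres are tangent, suitable lifts of them are null
separated, and `x` lies on a sphere exactly when `(x, 0)` is null separated from a lift of it. Up to
reversing all orientations there are four ways to lift three circles, so it suffices that three
distinct points of a three-dimensional Minkowski space have at most two common null neighbours,
unless they are pairwise null separated.

If every point of `S` is null separated from every point of `T`, then `S - S` and `T - T` are
orthogonal, so in dimension three one of `S`, `T` is collinear. A line with three points null
separated from a common point is null. By the equality case of Cauchy–Schwarz, any point null
separated from two distinct points of a null line lies on that line. Hence if `S` and `T` both have
three points, then both lie on one null line. If `T` consists of lifts of the three given circles,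
the point where this line meets `E × {0}` is a point at which they are mutually tangent.
-/

open Module
open QuadraticMap (polar)

section QuadraticForm

variable {R M : Type*} [CommRing R] [AddCommGroup M] [Module R M]

/-- Null (lightlike) separation of two points with respect to a quadratic form. -/
def NullSep (Q : QuadraticForm R M) (v w : M) : Prop := Q (v - w) = 0

variable {Q : QuadraticForm R M} {v w a b : M}

theorem NullSep.refl (v : M) : NullSep Q v v := by
  simp [NullSep]

theorem NullSep.symm (h : NullSep Q v w) : NullSep Q w v := by
  rwa [NullSep, Q.map_sub]

theorem quadraticForm_sub_smul (Q : QuadraticForm R M) (k : R) (v w : M) :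
    Q (v - k • w) = Q v + k * k * Q w - k * polar Q v w := by
  rw [sub_eq_add_neg, ← neg_smul, QuadraticMap.map_add Q, Q.map_smul,
    QuadraticMap.polar_smul_right]
  simp only [smul_eq_mul]
  ring

theorem NullSep.polar_sub_sub (ha : NullSep Q v a) (hb : NullSep Q v b) :
    polar Q (v - a) (b - a) = Q (b - a) := by
  have h := quadraticForm_sub_smul Q 1 (v - a) (b - a)
  rw [one_smul, sub_sub_sub_cancel_right, show Q (v - b) = 0 from hb,
    show Q (v - a) = 0 from ha] at h
  linear_combination h

theorem NullSep.polar_sub_sub_eq_zero (hva : NullSep Q v a) (hvb : NullSep Q v b)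
    (hwa : NullSep Q w a) (hwb : NullSep Q w b) : polar Q (v - w) (b - a) = 0 := by
  rw [← sub_sub_sub_cancel_right v w a, QuadraticMap.polar_sub_left, hva.polar_sub_sub hvb,
    hwa.polar_sub_sub hwb, sub_self]

end QuadraticForm

section Collinear

variable {K V : Type*} [Field K] [AddCommGroup V] [Module K V] {Q : QuadraticForm K V}
  {S T : Set V}

theorem nullSep_of_collinear_of_two_lt_encard {p : V} (hS : Collinear K S) (hcard : 2 < S.encard)
    (hp : ∀ v ∈ S, NullSep Q p v) : ∀ v ∈ S, ∀ w ∈ S, NullSep Q v w := by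
  intro a ha b hb
  rcases eq_or_ne a b with rfl | hab
  · exact .refl a
  obtain ⟨c, hc, hcab⟩ : ∃ c ∈ S, c ∉ ({a, b} : Set V) :=
    Set.not_subset.1 fun h => (hcard.trans_le (Set.encard_le_encard h)).ne' (Set.encard_pair hab)
  obtain ⟨d, hd⟩ := (collinear_iff_of_mem ha).1 hS
  obtain ⟨β, rfl⟩ := hd b hb
  obtain ⟨γ, rfl⟩ := hd c hc
  simp only [vadd_eq_add, Set.mem_insert_iff, add_eq_right, not_or] at hcab hab
  have polar_eq (k : K) (hk : k • d ≠ 0) (h : k • d + a ∈ S) : polar Q (p - a) d = k * Q d := by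
    have := (hp a ha).polar_sub_sub (hp _ h)
    simp only [add_sub_cancel_right, QuadraticMap.polar_smul_right, Q.map_smul, smul_eq_mul,
      mul_assoc] at this
    exact mul_left_cancel₀ (left_ne_zero_of_smul hk) this
  have hβγ : β ≠ γ := by rintro rfl; exact hcab.2 rfl
  have hQd : Q d = 0 := by
    have : (β - γ) * Q d = 0 := by
      rw [sub_mul, ← polar_eq β (by simpa using hab.symm) hb, ← polar_eq γ hcab.1 hc, sub_self]
    exact (mul_eq_zero.1 this).resolve_left (sub_ne_zero.2 hβγ)
  refine NullSep.symm ?_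
  simp [NullSep, Q.map_smul, hQd]

theorem collinear_or_collinear_of_nullSep [FiniteDimensional K V] (hV : finrank K V ≤ 3)
    (hQ : LinearMap.BilinForm.Nondegenerate Q.polarBilin) (h : ∀ v ∈ S, ∀ w ∈ T, NullSep Q v w) :
    Collinear K S ∨ Collinear K T := by
  have hle : vectorSpan K S ≤ LinearMap.BilinForm.orthogonal Q.polarBilin (vectorSpan K T) := by
    rw [vectorSpan_def, Submodule.span_le]
    rintro _ ⟨v, hv, v', hv', rfl⟩ w hw
    change polar Q w (v - v') = 0
    induction hw using Submodule.span_induction with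
    | mem _ hw =>
      obtain ⟨w, hw, w', hw', rfl⟩ := hw
      rw [QuadraticMap.polar_comm]
      exact (h v hv w' hw').polar_sub_sub_eq_zero (h v hv w hw) (h v' hv' w' hw') (h v' hv' w hw)
    | zero => exact QuadraticMap.polar_zero_left Q _
    | add x y _ _ hx hy => rw [QuadraticMap.polar_add_left, hx, hy, add_zero]
    | smul k x _ hx => rw [QuadraticMap.polar_smul_left, hx, smul_zero]
  have hfin := (Submodule.finrank_mono hle).trans_eq (LinearMap.BilinForm.finrank_orthogonal hQ _)
  rw [collinear_iff_finrank_le_one, collinear_iff_finrank_le_one]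
  omega

end Collinear

section Minkowski

variable (E : Type*) [NormedAddCommGroup E] [InnerProductSpace ℝ E]

/-- The Minkowski quadratic form `‖x‖² - t²` on `E × ℝ`, where `(x, t)` stands for the sphere with
centre `x` and radius `|t|`, oriented by the sign of `t`. -/
def minkowskiForm : QuadraticForm ℝ (E × ℝ) :=
  (LinearMap.BilinMap.toQuadraticMap (innerₗ E)).prod (-QuadraticMap.sq)

variable {E}

@[simp]
theorem minkowskiForm_apply (v : E × ℝ) : minkowskiForm E v = ‖v.1‖ ^ 2 - v.2 ^ 2 := by
  simp [minkowskiForm, pow_two, sub_eq_add_neg]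

theorem nullSep_minkowskiForm_iff {v w : E × ℝ} :
    NullSep (minkowskiForm E) v w ↔ dist v.1 w.1 ^ 2 = (v.2 - w.2) ^ 2 := by
  simp [NullSep, dist_eq_norm, sub_eq_zero]

theorem eq_zero_of_minkowskiForm_eq_zero {v : E × ℝ} (hv : minkowskiForm E v = 0) (h : v.2 = 0) :
    v = 0 := by
  ext1
  · simpa [h] using hv
  · exact h

theorem minkowskiForm_polarBilin_nondegenerate :
    LinearMap.BilinForm.Nondegenerate (minkowskiForm E).polarBilin := by
  rw [LinearMap.BilinForm.Nondegenerate, QuadraticMap.nondegenerate_polar_iff,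
    QuadraticMap.nondegenerate_iff_radical_eq_bot, Submodule.eq_bot_iff]
  intro v hv
  obtain ⟨hv₀, hv⟩ := QuadraticMap.mem_radical_iff'.1 hv
  have h := hv (-v.1, 0)
  simp only [minkowskiForm_apply, Prod.fst_add, Prod.snd_add, add_neg_cancel, norm_zero, add_zero,
    norm_neg] at h
  exact eq_zero_of_minkowskiForm_eq_zero hv₀ <|
    pow_eq_zero_iff two_ne_zero |>.1 (by linarith [sq_nonneg ‖v.1‖, sq_nonneg v.2])

theorem exists_eq_smul_of_polar_eq_zero {v d : E × ℝ} (hd₀ : d ≠ 0) (hd : minkowskiForm E d = 0)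
    (hv : minkowskiForm E v = 0) (hvd : polar (minkowskiForm E) v d = 0) : ∃ k : ℝ, v = k • d := by
  have hd₂ : d.2 ≠ 0 := fun h => hd₀ (eq_zero_of_minkowskiForm_eq_zero hd h)
  refine ⟨v.2 / d.2, sub_eq_zero.1 (eq_zero_of_minkowskiForm_eq_zero ?_ ?_)⟩
  · rw [quadraticForm_sub_smul, hv, hd, hvd]
    ring
  · simp [hd₂]

variable {a b v w : E × ℝ}

theorem NullSep.of_common_neighbors (hab : a ≠ b) (h : NullSep (minkowskiForm E) a b)
    (hva : NullSep (minkowskiForm E) v a) (hvb : NullSep (minkowskiForm E) v b)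
    (hwa : NullSep (minkowskiForm E) w a) (hwb : NullSep (minkowskiForm E) w b) :
    NullSep (minkowskiForm E) v w := by
  have on_line {u : E × ℝ} (hua : NullSep (minkowskiForm E) u a)
      (hub : NullSep (minkowskiForm E) u b) : ∃ k : ℝ, u - a = k • (b - a) :=
    exists_eq_smul_of_polar_eq_zero (sub_ne_zero.2 hab.symm) h.symm hua
      ((hua.polar_sub_sub hub).trans h.symm)
  obtain ⟨k, hk⟩ := on_line hva hvb
  obtain ⟨l, hl⟩ := on_line hwa hwb
  rw [NullSep, ← sub_sub_sub_cancel_right v w a, hk, hl, ← sub_smul, QuadraticMap.map_smul,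
    show minkowskiForm E (b - a) = 0 from h.symm, smul_zero]

theorem pairwise_nullSep_of_two_lt_encard [FiniteDimensional ℝ E] (hE : finrank ℝ E ≤ 2)
    {S T : Set (E × ℝ)} (hS : 2 < S.encard) (hT : 2 < T.encard)
    (h : ∀ v ∈ S, ∀ w ∈ T, NullSep (minkowskiForm E) v w) :
    ∀ v ∈ T, ∀ w ∈ T, NullSep (minkowskiForm E) v w := by
  obtain ⟨p, q, hp, hq, hpq⟩ := Set.one_lt_encard_iff.1 (lt_trans (by norm_num) hS)
  have hdim : finrank ℝ (E × ℝ) ≤ 3 := by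
    rw [finrank_prod, finrank_self]
    omega
  rcases collinear_or_collinear_of_nullSep hdim minkowskiForm_polarBilin_nondegenerate h with
    hcol | hcol
  · obtain ⟨t, ht⟩ := Set.nonempty_of_encard_ne_zero (pos_of_gt hT).ne'
    have hnull := nullSep_of_collinear_of_two_lt_encard hcol hS fun v hv => (h v hv t ht).symm
    exact fun a ha b hb => (hnull p hp q hq).of_common_neighbors hpq
      (h p hp a ha).symm (h q hq a ha).symm (h p hp b hb).symm (h q hq b hb).symm
  · exact nullSep_of_collinear_of_two_lt_encard hcol hT (h p hp)

end Minkowski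

section Spheres

variable {E : Type*} [NormedAddCommGroup E]

/-- The sphere that a point of `E × ℝ` stands for once its orientation is forgotten. -/
def underlyingSphere (v : E × ℝ) : Set E := Metric.sphere v.1 |v.2|

/-- The same sphere with the opposite orientation. -/
def flipOrientation (v : E × ℝ) : E × ℝ := (v.1, -v.2)

@[simp]
theorem underlyingSphere_flipOrientation (v : E × ℝ) :
    underlyingSphere (flipOrientation v) = underlyingSphere v := by
  simp [underlyingSphere, flipOrientation]

variable [InnerProductSpace ℝ E] {a b c v w : E × ℝ}

theorem nullSep_flipOrientation_comm :
    NullSep (minkowskiForm E) (flipOrientation v) w ↔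
      NullSep (minkowskiForm E) v (flipOrientation w) := by
  simp only [nullSep_minkowskiForm_iff, flipOrientation]
  rw [← neg_sq]
  ring_nf

theorem mem_underlyingSphere {x : E} :
    x ∈ underlyingSphere v ↔ NullSep (minkowskiForm E) (x, 0) v := by
  rw [underlyingSphere, Metric.mem_sphere, nullSep_minkowskiForm_iff, zero_sub, neg_sq,
    sq_eq_sq_iff_abs_eq_abs, abs_of_nonneg dist_nonneg]

theorem NullSep.underlyingSphere_inter_eq_singleton {x : E} (hvw : v ≠ w)
    (h : NullSep (minkowskiForm E) v w) (hv : x ∈ underlyingSphere v)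
    (hw : x ∈ underlyingSphere w) : underlyingSphere v ∩ underlyingSphere w = {x} := by
  refine Set.eq_singleton_iff_unique_mem.2 ⟨⟨hv, hw⟩, fun y ⟨hyv, hyw⟩ => ?_⟩
  rw [mem_underlyingSphere] at hv hw hyv hyw
  simpa [nullSep_minkowskiForm_iff] using h.of_common_neighbors hvw hyv hyw hv hw

theorem exists_mem_underlyingSphere_of_pairwise_nullSep {T : Set (E × ℝ)} (hT : T.Nontrivial)
    (h : ∀ v ∈ T, ∀ w ∈ T, NullSep (minkowskiForm E) v w) :
    ∃ x, ∀ v ∈ T, x ∈ underlyingSphere v := by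
  obtain ⟨a, ha, b, hb, hab⟩ := hT
  have hnull : minkowskiForm E (a - b) = 0 := h a ha b hb
  have hr : a.2 - b.2 ≠ 0 := fun h => hab (sub_eq_zero.1 (eq_zero_of_minkowskiForm_eq_zero hnull h))
  set k := a.2 / (a.2 - b.2) with hk
  set x := a - k • (a - b) with hx
  have hx₂ : x = (x.1, 0) := by
    ext1
    · rfl
    · simp [hx, hk, hr]
  have hxa : NullSep (minkowskiForm E) x a := by
    rw [NullSep, hx, sub_sub_cancel_left, QuadraticMap.map_neg, QuadraticMap.map_smul, hnull,
      smul_zero]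
  have hxb : NullSep (minkowskiForm E) x b := by
    rw [NullSep, hx, show a - k • (a - b) - b = (1 - k) • (a - b) by module,
      QuadraticMap.map_smul, hnull, smul_zero]
  refine ⟨x.1, fun c hc => ?_⟩
  rw [mem_underlyingSphere, ← hx₂]
  exact (h a ha b hb).of_common_neighbors hab hxa hxb (h c hc a ha) (h c hc b hb)

theorem mem_line_of_sphere_inter_eq_singleton {P : Type*} [MetricSpace P]
    [NormedAddTorsor E P] {c c' p : P} {r r' : ℝ}
    (h : Metric.sphere c r ∩ Metric.sphere c' r' = {p}) : p ∈ line[ℝ, c, c'] := by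
  obtain ⟨hp, hp'⟩ : p ∈ Metric.sphere c r ∩ Metric.sphere c' r' := h ▸ rfl
  rw [← EuclideanGeometry.reflection_eq_self_iff, ← Set.mem_singleton_iff, ← h]
  rw [Metric.mem_sphere'] at hp hp'
  constructor
  · rwa [Metric.mem_sphere', EuclideanGeometry.dist_reflection_eq_of_mem _
      (left_mem_affineSpan_pair ℝ c c')]
  · rwa [Metric.mem_sphere', EuclideanGeometry.dist_reflection_eq_of_mem _
      (right_mem_affineSpan_pair ℝ c c')]

theorem nullSep_or_nullSep_flipOrientation {p : E}
    (h : underlyingSphere v ∩ underlyingSphere w = {p}) :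
    NullSep (minkowskiForm E) v w ∨ NullSep (minkowskiForm E) v (flipOrientation w) := by
  obtain ⟨hpv, hpw⟩ : p ∈ underlyingSphere v ∩ underlyingSphere w := h ▸ rfl
  obtain ⟨t, rfl⟩ := mem_affineSpan_pair_iff_exists_lineMap_eq.1
    (mem_line_of_sphere_inter_eq_singleton h)
  rw [underlyingSphere, Metric.mem_sphere, dist_lineMap_left, Real.norm_eq_abs, ← abs_dist,
    ← abs_mul] at hpv
  rw [underlyingSphere, Metric.mem_sphere, dist_lineMap_right, Real.norm_eq_abs, ← abs_dist,
    ← abs_mul] at hpw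
  have hsum : dist v.1 w.1 = t * dist v.1 w.1 + (1 - t) * dist v.1 w.1 := by ring
  simp only [nullSep_minkowskiForm_iff, flipOrientation]
  rcases abs_eq_abs.1 hpv with hv | hv <;> rcases abs_eq_abs.1 hpw with hw | hw <;>
    rw [hv, hw] at hsum <;> rw [hsum]
  · right; ring
  · left; ring
  · left; ring
  · right; ring

/-- The spheres with a lift null separated from the oriented spheres `a`, `b` and `c`. Every sphere
tangent to three given ones is of this kind for a suitable choice of orientations, and the
orientation of `a` may be prescribed. -/
def nullTangentSpheres (a b c : E × ℝ) : Set (Set E) :=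
  underlyingSphere '' {v | ∀ w ∈ ({a, b, c} : Set (E × ℝ)), NullSep (minkowskiForm E) v w}

theorem encard_nullTangentSpheres_le_two [FiniteDimensional ℝ E] (hE : finrank ℝ E ≤ 2)
    (hab : underlyingSphere a ≠ underlyingSphere b) (hac : underlyingSphere a ≠ underlyingSphere c)
    (hbc : underlyingSphere b ≠ underlyingSphere c)
    (hnc : ¬ ∃ p, underlyingSphere a ∩ underlyingSphere b = {p} ∧
      underlyingSphere a ∩ underlyingSphere c = {p} ∧
      underlyingSphere b ∩ underlyingSphere c = {p}) :
    (nullTangentSpheres a b c).encard ≤ 2 := by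
  replace hab := ne_of_apply_ne _ hab
  replace hac := ne_of_apply_ne _ hac
  replace hbc := ne_of_apply_ne _ hbc
  have hT : ({a, b, c} : Set (E × ℝ)).encard = 3 :=
    Set.encard_eq_three.2 ⟨a, b, c, hab, hac, hbc, rfl⟩
  refine (Set.encard_image_le _ _).trans (not_lt.1 fun hS => hnc ?_)
  have hnull := pairwise_nullSep_of_two_lt_encard hE hS (hT ▸ by norm_num) fun v hv => hv
  obtain ⟨x, hx⟩ := exists_mem_underlyingSphere_of_pairwise_nullSep
    ⟨a, by simp, b, by simp, hab⟩ hnull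
  have hinter : ({a, b, c} : Set (E × ℝ)).Pairwise fun v w =>
      underlyingSphere v ∩ underlyingSphere w = {x} := fun v hv w hw hvw =>
    (hnull v hv w hw).underlyingSphere_inter_eq_singleton hvw (hx v hv) (hx w hw)
  exact ⟨x, hinter (by simp) (by simp) hab, hinter (by simp) (by simp) hac,
    hinter (by simp) (by simp) hbc⟩

theorem mem_nullTangentSpheres_of_inter_eq_singleton {s : Set E}
    (hs : s ∈ Set.range underlyingSphere)
    (ha : ∃ p, s ∩ underlyingSphere a = {p}) (hb : ∃ p, s ∩ underlyingSphere b = {p})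
    (hc : ∃ p, s ∩ underlyingSphere c = {p}) :
    ∃ b' ∈ ({b, flipOrientation b} : Set (E × ℝ)), ∃ c' ∈ ({c, flipOrientation c} : Set (E × ℝ)),
      s ∈ nullTangentSpheres a b' c' := by
  obtain ⟨v, rfl, hva⟩ : ∃ v, underlyingSphere v = s ∧ NullSep (minkowskiForm E) v a := by
    obtain ⟨v, rfl⟩ := hs
    obtain ⟨p, hp⟩ := ha
    rcases nullSep_or_nullSep_flipOrientation hp with h | h
    · exact ⟨v, rfl, h⟩
    · exact ⟨flipOrientation v, underlyingSphere_flipOrientation v,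
        nullSep_flipOrientation_comm.2 h⟩
  obtain ⟨b', hb', hvb⟩ : ∃ b' ∈ ({b, flipOrientation b} : Set (E × ℝ)),
      NullSep (minkowskiForm E) v b' := by
    simpa using nullSep_or_nullSep_flipOrientation hb.choose_spec
  obtain ⟨c', hc', hvc⟩ : ∃ c' ∈ ({c, flipOrientation c} : Set (E × ℝ)),
      NullSep (minkowskiForm E) v c' := by
    simpa using nullSep_or_nullSep_flipOrientation hc.choose_spec
  exact ⟨b', hb', c', hc', v, by simp [hva, hvb, hvc], rfl⟩

theorem apollonius_tangent_circles_general [FiniteDimensional ℝ E] (hE : finrank ℝ E ≤ 2)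
    (hab : underlyingSphere a ≠ underlyingSphere b) (hac : underlyingSphere a ≠ underlyingSphere c)
    (hbc : underlyingSphere b ≠ underlyingSphere c)
    (hnc : ¬ ∃ p, underlyingSphere a ∩ underlyingSphere b = {p} ∧
      underlyingSphere a ∩ underlyingSphere c = {p} ∧
      underlyingSphere b ∩ underlyingSphere c = {p}) :
    {s | s ∈ Set.range underlyingSphere ∧ (∃ p, s ∩ underlyingSphere a = {p}) ∧
      (∃ p, s ∩ underlyingSphere b = {p}) ∧ ∃ p, s ∩ underlyingSphere c = {p}}.encard ≤ 8 := by
  let N := nullTangentSpheres a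
  have hN (b' c') (hb : underlyingSphere b' = underlyingSphere b)
      (hc : underlyingSphere c' = underlyingSphere c) : (N b' c').encard ≤ 2 :=
    encard_nullTangentSpheres_le_two hE (hb ▸ hab) (hc ▸ hac) (hb ▸ hc ▸ hbc) (hb ▸ hc ▸ hnc)
  calc
    _ ≤ ((N b c ∪ N b (flipOrientation c)) ∪
        (N (flipOrientation b) c ∪ N (flipOrientation b) (flipOrientation c))).encard := by
      refine Set.encard_le_encard fun s ⟨hs, ha, hb, hc⟩ => ?_
      obtain ⟨b', rfl | rfl, c', rfl | rfl, h⟩ :=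
        mem_nullTangentSpheres_of_inter_eq_singleton hs ha hb hc
      all_goals simp [N, h]
    _ ≤ (2 + 2) + (2 + 2) := by
      refine (Set.encard_union_le _ _).trans (add_le_add ?_ ?_) <;>
        refine (Set.encard_union_le _ _).trans (add_le_add ?_ ?_) <;>
        apply hN <;> simp
    _ = 8 := by norm_num

end Spheres

theorem IsCircle2.mem_range_underlyingSphere {s : Set Pt2} (hs : IsCircle2 s) :
    s ∈ Set.range underlyingSphere := by
  obtain ⟨c, r, hr, rfl⟩ := hs
  exact ⟨(c, r), by rw [underlyingSphere, abs_of_pos hr]⟩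

theorem apollonius_tangent_circles (c1 c2 c3 : Set Pt2)
    (h1 : IsCircle2 c1) (h2 : IsCircle2 c2) (h3 : IsCircle2 c3)
    (h12 : c1 ≠ c2) (h13 : c1 ≠ c3) (h23 : c2 ≠ c3)
    (hnc : ¬ ∃ p : Pt2, c1 ∩ c2 = {p} ∧ c1 ∩ c3 = {p} ∧ c2 ∩ c3 = {p}) :
    ({s : Set Pt2 | IsCircle2 s ∧ s ≠ c1 ∧ s ≠ c2 ∧ s ≠ c3 ∧
        Tangent2 s c1 ∧ Tangent2 s c2 ∧ Tangent2 s c3}).encard ≤ 8 := by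
  obtain ⟨a, rfl⟩ := h1.mem_range_underlyingSphere
  obtain ⟨b, rfl⟩ := h2.mem_range_underlyingSphere
  obtain ⟨c, rfl⟩ := h3.mem_range_underlyingSphere
  refine le_trans (Set.encard_le_encard ?_)
    (apollonius_tangent_circles_general finrank_euclideanSpace_fin.le h12 h13 h23 hnc)
  exact fun s ⟨hs, _, _, _, ha, hb, hc⟩ => ⟨hs.mem_range_underlyingSphere, ha, hb, hc⟩
end
end
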